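/- arXiv:2506.17070 — 2 statements merged into one kernel-verified Lean document; each statement's English description precedes it below -/
import Mathlib

section
/- Let A = (a_{ij}) be a symmetrizable generalized Cartan matrix with Weyl group W. Suppose w ∈ W and i ∈ I with w s_i > w in Bruhat order. If w α_i = α_j for some j ∈ I, then for the braid operators one has T_w((1-q_i²)f_i) = (1-q_j²)f_j in U_q^-(𝔤); in particular T_w(f_i) = f_j when (α_i,α_i) = (α_j,α_j). -/
noncomputable section

open scoped TensorProduct

/-- The field `ℚ(q)` of rational functions. -/
abbrev KK : Type := RatFunc ℚ

/-- The indeterminate `q ∈ ℚ(q)`. -/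
def qq : KK := RatFunc.X

/-- `q^m` for `m ∈ ℤ`. -/
def qpow (m : ℤ) : KK := qq ^ m

/-- The quantum integer `[n]_i = (q_i^n - q_i^{-n})/(q_i - q_i^{-1})` where `q_i = q^d`. -/
def qint (d n : ℤ) : KK := (qpow (d * n) - qpow (-(d * n))) / (qpow d - qpow (-d))

/-- The quantum factorial `[n]_i!`. -/
def qfact (d : ℤ) : ℕ → KK
  | 0 => 1
  | n + 1 => qfact d n * qint d (n + 1)

/-- A symmetrizable generalized Cartan matrix `a` with symmetrizers `d i`, so that
`(α_i, α_j) = d i * a i j`. -/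
structure CartanData (I : Type) : Type where
  a : I → I → ℤ
  d : I → ℤ
  d_pos : ∀ i, 0 < d i
  a_diag : ∀ i, a i i = 2
  a_offdiag : ∀ i j, i ≠ j → a i j ≤ 0
  symm : ∀ i j, d i * a i j = d j * a j i

/-- Generators of the quantum group `U_q(𝔤)` (adjoint form: `t i = q^{(α_i,α_i)/2 · h_i}`). -/
inductive QGen (I : Type) : Type
  | e : I → QGen I
  | f : I → QGen I
  | t : I → QGen I
  | tinv : I → QGen I

variable {I : Type}

/-- The free algebra on the generators of `U_q(𝔤)`. -/
abbrev FA (I : Type) : Type := FreeAlgebra KK (QGen I)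

def ge (i : I) : FA I := FreeAlgebra.ι KK (QGen.e i)
def gf (i : I) : FA I := FreeAlgebra.ι KK (QGen.f i)
def gT (i : I) : FA I := FreeAlgebra.ι KK (QGen.t i)
def gTinv (i : I) : FA I := FreeAlgebra.ι KK (QGen.tinv i)

/-- Divided power `e_i^{(s)}` in the free algebra. -/
def edp (C : CartanData I) (i : I) (s : ℕ) : FA I := (qfact (C.d i) s)⁻¹ • ge i ^ s

/-- Divided power `f_i^{(s)}` in the free algebra. -/
def fdp (C : CartanData I) (i : I) (s : ℕ) : FA I := (qfact (C.d i) s)⁻¹ • gf i ^ s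

/-- The quantum Serre element `Σ_{s} (-1)^s e_i^{(s)} e_j e_i^{(1-a_{ij}-s)}`. -/
def serreE (C : CartanData I) (i j : I) : FA I :=
  ∑ s ∈ Finset.range ((1 - C.a i j).toNat + 1),
    ((-1 : KK) ^ s) • (edp C i s * ge j * edp C i ((1 - C.a i j).toNat - s))

/-- The quantum Serre element `Σ_{s} (-1)^s f_i^{(s)} f_j f_i^{(1-a_{ij}-s)}`. -/
def serreF (C : CartanData I) (i j : I) : FA I :=
  ∑ s ∈ Finset.range ((1 - C.a i j).toNat + 1),
    ((-1 : KK) ^ s) • (fdp C i s * gf j * fdp C i ((1 - C.a i j).toNat - s))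

/-- The defining relations of the quantum group `U_q(𝔤)`. -/
inductive QRel [DecidableEq I] (C : CartanData I) : FA I → FA I → Prop
  | t_tinv (i : I) : QRel C (gT i * gTinv i) 1
  | tinv_t (i : I) : QRel C (gTinv i * gT i) 1
  | t_t (i j : I) : QRel C (gT i * gT j) (gT j * gT i)
  | t_tinv_comm (i j : I) : QRel C (gT i * gTinv j) (gTinv j * gT i)
  | t_e (i j : I) : QRel C (gT i * ge j) (qpow (C.d i * C.a i j) • (ge j * gT i))
  | t_f (i j : I) : QRel C (gT i * gf j) (qpow (-(C.d i * C.a i j)) • (gf j * gT i))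
  | e_f (i j : I) :
      QRel C (ge i * gf j - gf j * ge i)
        (if i = j then (qpow (C.d i) - qpow (-C.d i))⁻¹ • (gT i - gTinv i) else 0)
  | serre_e (i j : I) : i ≠ j → QRel C (serreE C i j) 0
  | serre_f (i j : I) : i ≠ j → QRel C (serreF C i j) 0

/-- The quantum group `U_q(𝔤)`, presented by generators and relations. -/
abbrev Uq [DecidableEq I] (C : CartanData I) : Type := RingQuot (QRel C)

variable [DecidableEq I]

/-- The canonical map from the free algebra onto `U_q(𝔤)`. -/
def uMk (C : CartanData I) : FA I →ₐ[KK] Uq C := RingQuot.mkAlgHom KK (QRel C)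

def uE (C : CartanData I) (i : I) : Uq C := uMk C (ge i)
def uF (C : CartanData I) (i : I) : Uq C := uMk C (gf i)
def uT (C : CartanData I) (i : I) : Uq C := uMk C (gT i)
def uTinv (C : CartanData I) (i : I) : Uq C := uMk C (gTinv i)

/-- Divided power `e_i^{(s)} ∈ U_q(𝔤)`. -/
def uEdp (C : CartanData I) (i : I) (s : ℕ) : Uq C := (qfact (C.d i) s)⁻¹ • uE C i ^ s

/-- Divided power `f_i^{(s)} ∈ U_q(𝔤)`. -/
def uFdp (C : CartanData I) (i : I) (s : ℕ) : Uq C := (qfact (C.d i) s)⁻¹ • uF C i ^ s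

/-- The negative half `U_q^-(𝔤)`, the subalgebra generated by the `f_i`. -/
def Uneg (C : CartanData I) : Subalgebra KK (Uq C) :=
  Algebra.adjoin KK (Set.range (uF C))

/-- The weight `-β` component of `U_q^-(𝔤)` (spanned by monomials in the `f_i` of
content `β ∈ Q_+`). -/
def negWt (C : CartanData I) (β : I →₀ ℕ) : Submodule KK (Uq C) :=
  Submodule.span KK
    {u | ∃ w : List I, (∀ j, w.count j = β j) ∧ u = (w.map (uF C)).prod}

/-- The pairing `(α_i, β) = Σ_j β_j (α_i, α_j)` for `β ∈ Q_+`. -/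
def pairB (C : CartanData I) (i : I) (β : I →₀ ℕ) : ℤ :=
  β.sum fun j m => C.d i * C.a i j * (m : ℤ)

/-- `f_j` as an element of the subalgebra `U_q^-(𝔤)`. -/
def uFneg (C : CartanData I) (j : I) : ↥(Uneg C) :=
  ⟨uF C j, Algebra.subset_adjoin ⟨j, rfl⟩⟩

/-- `t_i^m` for `m ∈ ℤ`. -/
def tpow (C : CartanData I) (i : I) (m : ℤ) : Uq C :=
  if 0 ≤ m then uT C i ^ m.toNat else uTinv C i ^ (-m).toNat


/-- The entry of the Coxeter matrix of a GCM: `a_{ij} a_{ji} = 0, 1, 2, 3, ≥4`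
corresponds to `m_{ij} = 2, 3, 4, 6, ∞` (with `∞` encoded as `0`). -/
def coxeterEntry (p : ℤ) : ℕ :=
  if p = 0 then 2 else if p = 1 then 3 else if p = 2 then 4 else if p = 3 then 6 else 0

theorem coxeterEntry_ne_one (p : ℤ) : coxeterEntry p ≠ 1 := by
  unfold coxeterEntry; split_ifs <;> norm_num

/-- The Coxeter matrix of the Weyl group of a symmetrizable GCM. -/
def coxMat [DecidableEq I] (C : CartanData I) : CoxeterMatrix I where
  M := Matrix.of fun i j => if i = j then 1 else coxeterEntry (C.a i j * C.a j i)
  isSymm := by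
    unfold Matrix.IsSymm
    ext i j
    simp only [Matrix.transpose_apply, Matrix.of_apply]
    by_cases h : i = j
    · subst h; rfl
    · rw [if_neg (fun hh => h hh.symm), if_neg h, mul_comm]
  diagonal := fun i => if_pos rfl
  off_diagonal := by
    intro i i' h
    simpa only [Matrix.of_apply, if_neg h] using coxeterEntry_ne_one (C.a i i' * C.a i' i)

/-!
Induct on `ℓ(w)`. For a right descent `k` of `w`, write `w = v u` with `u` an alternating word in
`s_i`, `s_k` and `v` of minimal length in its coset. Then `v` maps `α_i` and `α_k` to positive
roots, so that `w α_i` can only be simple if `u α_i` is itself `α_i` or `α_k`; this happens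
exactly when `u` is one letter short of the longest element, and there `T_u` takes `f_i` to the
corresponding generator by a computation in rank two.

That `T_w` does not depend on the reduced word follows from Matsumoto's theorem and the braid
relations. On a generator `f_j` with `j ≠ i, k`, these come from the representation theory of
quantum `sl₂`: `T` reverses the string generated by a primitive vector, and a vector whose image
under `T` has the shape of such a reversed string is itself primitive.

The scalars agree because `d_i = d_j`: the form on the root lattice is invariant under `W`.
-/

/-! ### Quantum integers -/

section QuantumInteger

variable {K : Type*} [Field K]

/-- The balanced quantum integer `[n]_v`; it is `0` when `v = v⁻¹`. -/
def qNum (v : K) (n : ℤ) : K := (v ^ n - v ^ (-n)) / (v - v⁻¹)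

/-- The quantum factorial `[n]_v!`. -/
def qFactorial (v : K) : ℕ → K
  | 0 => 1
  | n + 1 => qFactorial v n * qNum v (n + 1)

/-- A quantum parameter: a nonzero scalar which is not a root of unity. -/
structure IsGeneric (v : K) : Prop where
  ne_zero : v ≠ 0
  not_isOfFinOrder : ¬ IsOfFinOrder v

variable {v : K}

@[simp]
theorem qNum_zero : qNum v 0 = 0 := by simp [qNum]

theorem qNum_inv (n : ℤ) : qNum v⁻¹ n = qNum v n := by
  rw [qNum, qNum, inv_zpow', inv_zpow', neg_neg, inv_inv, ← neg_sub, ← neg_sub v, neg_div_neg_eq]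

theorem qFactorial_inv (n : ℕ) : qFactorial v⁻¹ n = qFactorial v n := by
  induction n with
  | zero => rfl
  | succ n ih => rw [qFactorial, qFactorial, ih, qNum_inv]

namespace IsGeneric

theorem pow_ne_one (hv : IsGeneric v) {n : ℕ} (hn : 0 < n) : v ^ n ≠ 1 :=
  fun h => hv.not_isOfFinOrder (isOfFinOrder_iff_pow_eq_one.mpr ⟨n, hn, h⟩)

theorem inv (hv : IsGeneric v) : IsGeneric v⁻¹ where
  ne_zero := inv_ne_zero hv.ne_zero
  not_isOfFinOrder h := by
    obtain ⟨n, hn, hpow⟩ := isOfFinOrder_iff_pow_eq_one.mp h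
    exact hv.pow_ne_one hn (by rwa [inv_pow, inv_eq_one] at hpow)

theorem pow (hv : IsGeneric v) {n : ℕ} (hn : 0 < n) : IsGeneric (v ^ n) where
  ne_zero := pow_ne_zero n hv.ne_zero
  not_isOfFinOrder h := hv.not_isOfFinOrder (h.of_pow hn.ne')

theorem zpow_ne_one (hv : IsGeneric v) {n : ℤ} (hn : n ≠ 0) : v ^ n ≠ 1 := by
  have hpow := hv.pow_ne_one (Int.natAbs_pos.mpr hn)
  rcases Int.natAbs_eq n with h | h <;> rw [h]
  · exact_mod_cast hpow
  · rw [zpow_neg, ne_eq, inv_eq_one]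
    exact_mod_cast hpow

theorem sq_sub_one_ne_zero (hv : IsGeneric v) : v ^ 2 - 1 ≠ 0 :=
  sub_ne_zero.mpr (hv.pow_ne_one two_pos)

theorem qNum_eq (hv : IsGeneric v) (n : ℤ) :
    qNum v n = v * ((v ^ n) ^ 2 - 1) / ((v ^ 2 - 1) * v ^ n) := by
  have hv₀ := hv.ne_zero
  have hsq := hv.sq_sub_one_ne_zero
  have hsub : v - v⁻¹ = (v ^ 2 - 1) / v := by field_simp
  rw [qNum, zpow_neg, hsub]
  field_simp

theorem qNum_ne_zero (hv : IsGeneric v) {n : ℤ} (hn : n ≠ 0) : qNum v n ≠ 0 := by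
  have hv₀ := hv.ne_zero
  have hpow : (v ^ n) ^ 2 - 1 ≠ 0 := by
    rw [sub_ne_zero, ← zpow_natCast, ← zpow_mul]
    exact hv.zpow_ne_one (by simpa using hn)
  rw [hv.qNum_eq]
  exact div_ne_zero (mul_ne_zero hv₀ hpow)
    (mul_ne_zero hv.sq_sub_one_ne_zero (zpow_ne_zero n hv₀))

theorem qNum_succ_ne_zero (hv : IsGeneric v) (n : ℕ) : qNum v (n + 1) ≠ 0 :=
  hv.qNum_ne_zero (by positivity)

theorem qNum_one (hv : IsGeneric v) : qNum v 1 = 1 := by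
  have hv₀ := hv.ne_zero
  have hsq := hv.sq_sub_one_ne_zero
  rw [hv.qNum_eq, zpow_one]
  field_simp

theorem qNum_add (hv : IsGeneric v) (m n : ℤ) :
    qNum v (m + n) = v ^ n * qNum v m + v ^ (-m) * qNum v n := by
  have hv₀ := hv.ne_zero
  have hsq := hv.sq_sub_one_ne_zero
  simp only [hv.qNum_eq, zpow_neg, zpow_add₀ hv₀]
  field_simp
  ring

theorem mul_qNum_add (hv : IsGeneric v) (w : ℤ) :
    v * qNum v w + v ^ (-w) = v⁻¹ * qNum v w + v ^ w := by
  have h₁ := hv.qNum_add w 1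
  have h₂ := hv.qNum_add 1 w
  rw [hv.qNum_one, zpow_one, mul_one] at h₁
  rw [add_comm, h₁, hv.qNum_one, zpow_neg_one, mul_one] at h₂
  rw [h₂, add_comm]

theorem qNum_pascal (hv : IsGeneric v) (w r : ℤ) :
    qNum v (w - 2 * r) + qNum v r * qNum v (w - r + 1) = qNum v (r + 1) * qNum v (w - r) := by
  have hv₀ := hv.ne_zero
  have hsq := hv.sq_sub_one_ne_zero
  simp only [hv.qNum_eq, zpow_add₀ hv₀, zpow_sub₀ hv₀, zpow_one, two_mul]
  field_simp
  ring

end IsGeneric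

end QuantumInteger

/-! ### Strings of quantum commutators -/

section QuantumCommutator

variable {K : Type*} [Field K] {R : Type*} [Ring R] [Algebra K R]

/-- The quantum commutator `x ↦ f x - c x f`. -/
def qAd (c : K) (f : R) : R →ₗ[K] R := LinearMap.mulLeft K f - c • LinearMap.mulRight K f

/-- The divided power `ad(f)^{(r)}` of the adjoint action of `f`, on vectors of weight `w`.
Its `k`-th factor acts on weight `w - 2k`. -/
def adPow (v : K) (f : R) (w : ℤ) : ℕ → R →ₗ[K] R
  | 0 => LinearMap.id
  | r + 1 => (qNum v (r + 1))⁻¹ • qAd (v ^ (w - 2 * r)) f ∘ₗ adPow v f w r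

/-- The divided power `f^{(k)} = f^k / [k]!`. -/
def dividedPow (v : K) (f : R) (k : ℕ) : R := (qFactorial v k)⁻¹ • f ^ k

variable {v : K} {f : R}

theorem qAd_apply (c : K) (f x : R) : qAd c f x = f * x - c • (x * f) := rfl

theorem qAd_mul (c d : K) (f x y : R) :
    qAd (c * d) f (x * y) = qAd c f x * y + c • (x * qAd d f y) := by
  simp only [qAd_apply, sub_mul, mul_sub, mul_assoc, smul_mul_assoc, mul_smul_comm]
  module

theorem map_qAd {S F : Type*} [Ring S] [Algebra K S] [FunLike F R S] [AlgHomClass F K R S]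
    (φ : F) (c : K) (f x : R) : φ (qAd c f x) = qAd c (φ f) (φ x) := by
  simp only [qAd_apply, map_sub, map_mul, map_smul]

theorem qAd_comm {f f' : R} (h : Commute f f') (c c' : K) (x : R) :
    qAd c f (qAd c' f' x) = qAd c' f' (qAd c f x) := by
  simp only [qAd_apply, mul_sub, sub_mul, mul_smul_comm, smul_mul_assoc, mul_assoc, h.eq,
    h.left_comm]
  module

theorem qAd_swap {c : K} (hc : c ≠ 0) (f x : R) : qAd c x f = (-c) • qAd c⁻¹ f x := by
  rw [qAd_apply, qAd_apply, smul_sub, smul_smul, neg_mul, mul_inv_cancel₀ hc]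
  module

@[simp]
theorem adPow_zero (v : K) (f : R) (w : ℤ) (x : R) : adPow v f w 0 x = x := rfl

theorem adPow_succ (v : K) (f : R) (w : ℤ) (r : ℕ) (x : R) :
    adPow v f w (r + 1) x = (qNum v (r + 1))⁻¹ • qAd (v ^ (w - 2 * r)) f (adPow v f w r x) := rfl

theorem map_adPow {S F : Type*} [Ring S] [Algebra K S] [FunLike F R S] [AlgHomClass F K R S]
    (φ : F) (v : K) (f : R) (w : ℤ) (r : ℕ) (x : R) :
    φ (adPow v f w r x) = adPow v (φ f) w r (φ x) := by
  induction r with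
  | zero => rfl
  | succ r ih => rw [adPow_succ, adPow_succ, map_smul, map_qAd, ih]

theorem qAd_adPow_comm {f f' : R} (h : Commute f f') (c v : K) (w : ℤ) (r : ℕ) (x : R) :
    qAd c f (adPow v f' w r x) = adPow v f' w r (qAd c f x) := by
  induction r with
  | zero => rfl
  | succ r ih => rw [adPow_succ, adPow_succ, map_smul, qAd_comm h, ih]

theorem adPow_comm {f f' : R} (h : Commute f f') (v v' : K) (w w' : ℤ) (r r' : ℕ) (x : R) :
    adPow v f w r (adPow v' f' w' r' x) = adPow v' f' w' r' (adPow v f w r x) := by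
  induction r with
  | zero => rfl
  | succ r ih => rw [adPow_succ, adPow_succ, map_smul, ih, qAd_adPow_comm h]

theorem adPow_eq_zero_of_le {w : ℤ} {x : R} {r s : ℕ} (hrs : r ≤ s) (hr : adPow v f w r x = 0) :
    adPow v f w s x = 0 := by
  induction s, hrs using Nat.le_induction with
  | base => exact hr
  | succ s _ ih => rw [adPow_succ, ih, map_zero, smul_zero]

namespace IsGeneric

theorem qAd_adPow (hv : IsGeneric v) (f : R) (w : ℤ) (r : ℕ) (x : R) :
    qAd (v ^ (w - 2 * r)) f (adPow v f w r x) = qNum v (r + 1) • adPow v f w (r + 1) x := by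
  rw [adPow_succ, smul_inv_smul₀ (hv.qNum_succ_ne_zero r)]

theorem adPow_succ_eq_iff (hv : IsGeneric v) {w : ℤ} {r : ℕ} {x z : R} :
    adPow v f w (r + 1) x = z ↔ qAd (v ^ (w - 2 * r)) f (adPow v f w r x) = qNum v (r + 1) • z := by
  rw [adPow_succ, inv_smul_eq_iff₀ (hv.qNum_succ_ne_zero r)]

theorem adPow_one (hv : IsGeneric v) (f : R) (w : ℤ) (x : R) :
    adPow v f w 1 x = qAd (v ^ w) f x := by
  simp [adPow_succ, hv.qNum_one]

theorem adPow_adPow_one (hv : IsGeneric v) (f : R) (w : ℤ) (r : ℕ) (x : R) :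
    adPow v f (w - 2) r (adPow v f w 1 x) = qNum v (r + 1) • adPow v f w (r + 1) x := by
  induction r with
  | zero => simp [hv.qNum_one]
  | succ r ih =>
    rw [hv.adPow_succ_eq_iff, ih, map_smul,
      show w - 2 - 2 * (r : ℤ) = w - 2 * ((r + 1 : ℕ) : ℤ) by push_cast; ring, hv.qAd_adPow,
      smul_comm]

/-! Leibniz rules for a right or left factor `y` generating a two-dimensional string. -/

theorem adPow_mul_qAd (hv : IsGeneric v) {y' : R} (hy : qAd v⁻¹ f y' = 0) (w : ℤ) (r : ℕ)
    (x : R) : adPow v f (w - 1) r (x * y') = adPow v f w r x * y' := by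
  have hexp (n : ℤ) : v ^ (w - 1 - n) = v ^ (w - n) * v⁻¹ := by
    rw [← zpow_sub_one₀ hv.ne_zero]; ring_nf
  induction r with
  | zero => rfl
  | succ r ih =>
    rw [hv.adPow_succ_eq_iff, ih, hexp, qAd_mul, hy, hv.qAd_adPow]
    simp only [mul_zero, smul_zero, add_zero, smul_mul_assoc]

theorem adPow_qAd_mul (hv : IsGeneric v) {y' : R} (hy : qAd v⁻¹ f y' = 0) (w : ℤ) (r : ℕ)
    (x : R) : adPow v f (w - 1) r (y' * x) = v⁻¹ ^ r • (y' * adPow v f w r x) := by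
  have hexp (n : ℤ) : v ^ (w - 1 - n) = v⁻¹ * v ^ (w - n) := by
    rw [mul_comm, ← zpow_sub_one₀ hv.ne_zero]; ring_nf
  induction r with
  | zero => simp
  | succ r ih =>
    rw [hv.adPow_succ_eq_iff, ih, map_smul, hexp, qAd_mul, hy, hv.qAd_adPow, zero_mul, zero_add,
      mul_smul_comm, pow_succ]
    module

theorem adPow_succ_mul (hv : IsGeneric v) {y : R} (hy : qAd v⁻¹ f (qAd v f y) = 0) (w : ℤ) (r : ℕ)
    (x : R) : adPow v f (w + 1) (r + 1) (x * y) =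
      adPow v f w (r + 1) x * y + v ^ (w - r) • (adPow v f w r x * qAd v f y) := by
  have hv₀ := hv.ne_zero
  induction r with
  | zero =>
    simp only [zero_add, hv.adPow_one, adPow_zero, zpow_add_one₀ hv₀, qAd_mul, Nat.cast_zero,
      sub_zero]
  | succ r ih =>
    have hexp₁ : v ^ (w + 1 - 2 * ((r + 1 : ℕ) : ℤ)) = v ^ (w - 2 * ((r + 1 : ℕ) : ℤ)) * v := by
      rw [← zpow_add_one₀ hv₀]; ring_nf
    have hexp₂ : v ^ (w + 1 - 2 * ((r + 1 : ℕ) : ℤ)) = v ^ (w - 2 * (r : ℤ)) * v⁻¹ := by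
      rw [← zpow_sub_one₀ hv₀]; push_cast; ring_nf
    have hx : qAd (v ^ (w + 1 - 2 * ((r + 1 : ℕ) : ℤ))) f (adPow v f w (r + 1) x * y) =
        qNum v (r + 2) • (adPow v f w (r + 2) x * y) +
          v ^ (w - 2 * (r + 1)) • (adPow v f w (r + 1) x * qAd v f y) := by
      rw [hexp₁, qAd_mul, hv.qAd_adPow, smul_mul_assoc]
      push_cast
      ring_nf
    have hy' : qAd (v ^ (w + 1 - 2 * ((r + 1 : ℕ) : ℤ))) f (adPow v f w r x * qAd v f y) =
        qNum v (r + 1) • (adPow v f w (r + 1) x * qAd v f y) := by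
      rw [hexp₂, qAd_mul, hv.qAd_adPow, hy, smul_mul_assoc, mul_zero, smul_zero, add_zero]
    have hcoeff : v ^ (w - 2 * (r + 1)) + v ^ (w - r) * qNum v (r + 1) =
        qNum v (r + 2) * v ^ (w - (r + 1)) := by
      rw [show (r : ℤ) + 2 = r + 1 + 1 by ring, hv.qNum_add (r + 1) 1, hv.qNum_one, zpow_one,
        mul_one, add_mul, ← zpow_add₀ hv₀, mul_right_comm, ← zpow_one_add₀ hv₀, add_comm]
      ring_nf
    rw [hv.adPow_succ_eq_iff, ih, map_add, map_smul, hx, hy', add_assoc, smul_smul, ← add_smul,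
      hcoeff]
    push_cast
    rw [smul_add, smul_smul]
    ring_nf

theorem adPow_mul_succ (hv : IsGeneric v) {y : R} (hy : qAd v⁻¹ f (qAd v f y) = 0) (w : ℤ) (r : ℕ)
    (x : R) : adPow v f (w + 1) (r + 1) (y * x) =
      v ^ (r + 1) • (y * adPow v f w (r + 1) x) + qAd v f y * adPow v f w r x := by
  have hv₀ := hv.ne_zero
  induction r with
  | zero =>
    simp only [zero_add, hv.adPow_one, adPow_zero, zpow_add_one₀ hv₀, mul_comm _ v, qAd_mul,
      pow_one, add_comm]
  | succ r ih =>
    have hexp₁ : v ^ (w + 1 - 2 * ((r + 1 : ℕ) : ℤ)) = v * v ^ (w - 2 * ((r + 1 : ℕ) : ℤ)) := by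
      rw [← zpow_one_add₀ hv₀]; ring_nf
    have hexp₂ : v ^ (w + 1 - 2 * ((r + 1 : ℕ) : ℤ)) = v⁻¹ * v ^ (w - 2 * (r : ℤ)) := by
      rw [mul_comm v⁻¹, ← zpow_sub_one₀ hv₀]; push_cast; ring_nf
    have hx : qAd (v ^ (w + 1 - 2 * ((r + 1 : ℕ) : ℤ))) f (y * adPow v f w (r + 1) x) =
        qAd v f y * adPow v f w (r + 1) x +
          (v * qNum v (r + 2)) • (y * adPow v f w (r + 2) x) := by
      rw [hexp₁, qAd_mul, hv.qAd_adPow, mul_smul_comm, smul_smul]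
      push_cast
      ring_nf
    have hy' : qAd (v ^ (w + 1 - 2 * ((r + 1 : ℕ) : ℤ))) f (qAd v f y * adPow v f w r x) =
        (v⁻¹ * qNum v (r + 1)) • (qAd v f y * adPow v f w (r + 1) x) := by
      rw [hexp₂, qAd_mul, hv.qAd_adPow, hy, zero_mul, zero_add, mul_smul_comm, smul_smul]
    have hcoeff : qNum v (r + 2) = v ^ (r + 1) + v⁻¹ * qNum v (r + 1) := by
      rw [show (r : ℤ) + 2 = 1 + (r + 1) by ring, hv.qNum_add, hv.qNum_one, zpow_neg_one, mul_one]
      norm_cast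
    rw [hv.adPow_succ_eq_iff, ih, map_add, map_smul, hx, hy']
    push_cast
    rw [show (r : ℤ) + 1 + 1 = r + 2 by ring]
    match_scalars
    · linear_combination -hcoeff
    · ring

theorem mul_dividedPow (hv : IsGeneric v) (f : R) (k : ℕ) :
    f * dividedPow v f k = qNum v (k + 1) • dividedPow v f (k + 1) := by
  rw [dividedPow, dividedPow, mul_smul_comm, ← pow_succ', smul_smul, qFactorial, mul_inv, mul_comm,
    inv_mul_cancel_right₀ (hv.qNum_succ_ne_zero k)]

theorem dividedPow_mul (hv : IsGeneric v) (f : R) (k : ℕ) :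
    dividedPow v f k * f = qNum v (k + 1) • dividedPow v f (k + 1) := by
  rw [← hv.mul_dividedPow, dividedPow, smul_mul_assoc, mul_smul_comm, ← pow_succ, ← pow_succ']

theorem adPow_coeff_succ (hv : IsGeneric v) (w : ℤ) (r s : ℕ) :
    qNum v (r + 1) * ((-1) ^ (s + 1) * v ^ ((s + 1) * (w - r))) =
      (-1) ^ (s + 1) * v ^ ((s + 1) * (w - r + 1)) * qNum v (r - s) -
        v ^ (w - 2 * r) * ((-1) ^ s * v ^ (s * (w - r + 1))) * qNum v (s + 1) := by
  have hv₀ := hv.ne_zero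
  have h₁ : v ^ ((s + 1) * (w - r + 1)) = v ^ ((s + 1) * (w - r)) * v ^ (s + 1 : ℤ) := by
    rw [← zpow_add₀ hv₀]; ring_nf
  have h₂ : v ^ (w - 2 * r) * v ^ (s * (w - r + 1)) =
      v ^ ((s + 1) * (w - r)) * v ^ (-(r - s) : ℤ) := by
    rw [← zpow_add₀ hv₀, ← zpow_add₀ hv₀]; ring_nf
  have hadd := hv.qNum_add (r - s) (s + 1)
  rw [show (r - s + (s + 1) : ℤ) = r + 1 by ring] at hadd
  rw [h₁, hadd]
  linear_combination ((-1) ^ s * qNum v (s + 1)) * h₂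

theorem adPow_eq_sum (hv : IsGeneric v) (f : R) (w : ℤ) (r : ℕ) (x : R) :
    adPow v f w r x = ∑ s ∈ Finset.range (r + 1), ((-1) ^ s * v ^ (s * (w - r + 1))) •
      (dividedPow v f (r - s) * x * dividedPow v f s) := by
  induction r with
  | zero => simp [dividedPow, qFactorial]
  | succ r ih =>
    have hleft : ∀ s ∈ Finset.range (r + 1), f * (dividedPow v f (r - s) * x * dividedPow v f s) =
        qNum v (r + 1 - s) • (dividedPow v f (r + 1 - s) * x * dividedPow v f s) := by
      intro s hs
      have hle : s ≤ r := Finset.mem_range_succ_iff.mp hs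
      rw [← mul_assoc, ← mul_assoc, hv.mul_dividedPow, smul_mul_assoc, smul_mul_assoc,
        Nat.sub_add_comm hle, Nat.cast_sub hle, sub_add_eq_add_sub]
    have hright (s : ℕ) : dividedPow v f (r - s) * x * dividedPow v f s * f =
        qNum v (s + 1) • (dividedPow v f (r - s) * x * dividedPow v f (s + 1)) := by
      rw [mul_assoc, hv.dividedPow_mul, mul_smul_comm]
    rw [hv.adPow_succ_eq_iff, ih, qAd_apply, Finset.mul_sum, Finset.sum_mul, Finset.smul_sum,
      Finset.smul_sum]
    simp only [mul_smul_comm, smul_mul_assoc, hright]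
    have hextend : ∑ s ∈ Finset.range (r + 1), ((-1) ^ s * v ^ (s * (w - r + 1))) •
          (f * (dividedPow v f (r - s) * x * dividedPow v f s)) =
        ∑ s ∈ Finset.range (r + 2), ((-1) ^ s * v ^ (s * (w - r + 1)) * qNum v (r + 1 - s)) •
          (dividedPow v f (r + 1 - s) * x * dividedPow v f s) := by
      rw [Finset.sum_range_succ _ (r + 1)]
      simp only [Nat.cast_succ, sub_self, qNum_zero, mul_zero, zero_smul, add_zero]
      exact Finset.sum_congr rfl fun s hs => by rw [hleft s hs, smul_smul]
    rw [hextend, Finset.sum_range_succ', Finset.sum_range_succ' _ (r + 1), add_sub_right_comm,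
      ← Finset.sum_sub_distrib]
    congr 1
    · refine Finset.sum_congr rfl fun s _ => ?_
      rw [smul_smul, smul_smul, smul_smul, Nat.add_sub_add_right, ← sub_smul]
      congr 1
      have hcoeff := hv.adPow_coeff_succ w r s
      push_cast
      rw [add_sub_add_right_eq_sub, ← sub_sub, sub_add_cancel, hcoeff, mul_assoc]
    · simp

end IsGeneric

end QuantumCommutator

/-! ### Integrable strings for a quantum `sl₂` -/

section ClebschGordan

variable {K : Type*} [Field K] {R : Type*} [Ring R] [Algebra K R] {v : K} {f y : R}

/-- The highest weight vector of weight `w - 1` in the product of the string of `x`, of weight `w`,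
and the two-dimensional string of `y`, with `y` on the right. -/
def cgRight (v : K) (f : R) (w : ℤ) (x y : R) : R :=
  adPow v f w 1 x * y - (v⁻¹ * qNum v w) • (x * qAd v f y)

/-- The analogue of `cgRight` with `y` on the left. -/
def cgLeft (v : K) (f : R) (w : ℤ) (x y : R) : R :=
  qNum v w • (qAd v f y * x) - v ^ (-w) • (y * adPow v f w 1 x)

namespace IsGeneric

theorem adPow_cgRight (hv : IsGeneric v) (hy : qAd v⁻¹ f (qAd v f y) = 0) (w : ℤ) (r : ℕ) (x : R) :
    adPow v f (w - 1) r (cgRight v f w x y) = qNum v (r + 1) • (adPow v f w (r + 1) x * y) -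
      (v ^ (-(r + 1) : ℤ) * qNum v (w - r)) • (adPow v f w r x * qAd v f y) := by
  have hv₀ := hv.ne_zero
  rcases r with _ | r
  · simp [cgRight, hv.qNum_one]
  have hleib := hv.adPow_succ_mul hy (w - 2) r (adPow v f w 1 x)
  rw [hv.adPow_adPow_one, hv.adPow_adPow_one, show w - 2 + 1 = w - 1 by ring] at hleib
  have hadd := hv.qNum_add (r + 1) (w - (r + 1))
  rw [add_sub_cancel] at hadd
  have hexp₁ : v⁻¹ * v ^ (w - (r + 1)) = v ^ (w - 2 - r) := by
    rw [mul_comm, ← zpow_sub_one₀ hv₀]; ring_nf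
  have hexp₂ : v⁻¹ * v ^ (-(r + 1) : ℤ) = v ^ (-(r + 1 + 1) : ℤ) := by
    rw [mul_comm, ← zpow_sub_one₀ hv₀]; ring_nf
  rw [cgRight, map_sub, map_smul, hleib, hv.adPow_mul_qAd hy, hadd]
  push_cast
  rw [← hexp₁, ← hexp₂, smul_mul_assoc, smul_mul_assoc]
  module

theorem adPow_cgLeft (hv : IsGeneric v) (hy : qAd v⁻¹ f (qAd v f y) = 0) (w : ℤ) (r : ℕ) (x : R) :
    adPow v f (w - 1) r (cgLeft v f w x y) = qNum v (w - r) • (qAd v f y * adPow v f w r x) -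
      (v ^ (r - w) * qNum v (r + 1)) • (y * adPow v f w (r + 1) x) := by
  have hv₀ := hv.ne_zero
  rcases r with _ | r
  · simp [cgLeft, hv.qNum_one]
  have hleib := hv.adPow_mul_succ hy (w - 2) r (adPow v f w 1 x)
  rw [hv.adPow_adPow_one, hv.adPow_adPow_one, show w - 2 + 1 = w - 1 by ring] at hleib
  have hadd := hv.qNum_add (w - (r + 1)) (r + 1)
  rw [sub_add_cancel] at hadd
  have hpow : v⁻¹ ^ (r + 1) * v ^ (r + 1 : ℤ) = 1 := by
    rw [inv_pow]; exact_mod_cast inv_mul_cancel₀ (pow_ne_zero (r + 1) hv₀)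
  have hexp₁ : v⁻¹ ^ (r + 1) * v ^ (-(w - (r + 1))) = v ^ (-w) := by
    rw [inv_pow, ← zpow_natCast, ← zpow_neg, ← zpow_add₀ hv₀]; push_cast; ring_nf
  have hexp₂ : v ^ (-w) * v ^ (r + 1) = v ^ (r + 1 - w) := by
    rw [← zpow_natCast v, ← zpow_add₀ hv₀]; push_cast; ring_nf
  have hcoeff : v⁻¹ ^ (r + 1) * qNum v w = qNum v (w - (r + 1)) + v ^ (-w) * qNum v (r + 1) := by
    linear_combination v⁻¹ ^ (r + 1) * hadd + qNum v (w - (r + 1)) * hpow +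
      qNum v (r + 1) * hexp₁
  rw [cgLeft, map_sub, map_smul, map_smul, hleib, hv.adPow_qAd_mul hy, smul_smul,
    mul_comm (qNum v w), hcoeff]
  push_cast
  rw [← hexp₂, mul_smul_comm, mul_smul_comm]
  module

theorem cgRight_eq (hv : IsGeneric v) (w : ℤ) (x : R) :
    cgRight v f w x y =
      qAd (v ^ (-w)) f x * y - (v * qNum v w) • (x * qAd v⁻¹ f y) := by
  have hv₀ := hv.ne_zero
  simp only [cgRight, hv.adPow_one, qAd_apply, sub_mul, mul_sub, smul_mul_assoc, mul_smul_comm,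
    mul_assoc]
  match_scalars
  · rfl
  · linear_combination hv.mul_qNum_add w
  · field_simp

theorem cgLeft_eq (hv : IsGeneric v) (w : ℤ) (x : R) :
    cgLeft v f w x y =
      qNum v w • (qAd v⁻¹ f y * x) - v ^ w • (y * qAd (v ^ (-w)) f x) := by
  simp only [cgLeft, hv.adPow_one, qAd_apply, sub_mul, mul_sub, smul_mul_assoc, mul_smul_comm,
    mul_assoc]
  match_scalars
  · rfl
  · linear_combination -hv.mul_qNum_add w
  · ring

end IsGeneric

end ClebschGordan

/-- A copy of `U_v(sl₂)`, with `t = v^h`, in an algebra `R`, together with an automorphism `T` of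
`R` acting on this copy as the braid operator. -/
structure QuantumSL2 (K R : Type*) [Field K] [Ring R] [Algebra K R] where
  v : K
  e : R
  f : R
  t : R
  tinv : R
  T : R ≃ₐ[K] R
  generic : IsGeneric v
  t_mul_tinv : t * tinv = 1
  tinv_mul_t : tinv * t = 1
  t_mul_e : t * e = v ^ 2 • (e * t)
  t_mul_f : t * f = v⁻¹ ^ 2 • (f * t)
  e_mul_f : e * f = f * e + (v - v⁻¹)⁻¹ • (t - tinv)
  T_e : T e = -(tinv * f)
  T_f : T f = -(e * t)
  T_t : T t = tinv

namespace QuantumSL2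

variable {K R : Type*} [Field K] [Ring R] [Algebra K R] (S : QuantumSL2 K R)

theorem tinv_mul_of_t_mul {c : K} (hc : c ≠ 0) {x y : R} (h : S.t * x = c • (y * S.t)) :
    S.tinv * y = c⁻¹ • (x * S.tinv) := by
  rw [eq_inv_smul_iff₀ hc, ← mul_smul_comm, ← mul_one y, ← S.t_mul_tinv, ← mul_assoc,
    ← smul_mul_assoc, ← h, mul_assoc S.t, ← mul_assoc S.tinv, S.tinv_mul_t, one_mul]

theorem T_tinv : S.T S.tinv = S.t := by
  calc S.T S.tinv = S.t * (S.T S.t * S.T S.tinv) := by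
        rw [S.T_t, ← mul_assoc, S.t_mul_tinv, one_mul]
    _ = S.t := by rw [← map_mul, S.t_mul_tinv, map_one, mul_one]

/-- The copy of `U_v(sl₂)` in the opposite algebra with the roles of `e` and `f` exchanged. -/
def op : QuantumSL2 K Rᵐᵒᵖ where
  v := S.v⁻¹
  e := MulOpposite.op S.f
  f := MulOpposite.op S.e
  t := MulOpposite.op S.tinv
  tinv := MulOpposite.op S.t
  T := AlgEquiv.op S.T
  generic := S.generic.inv
  t_mul_tinv := congrArg MulOpposite.op S.t_mul_tinv
  tinv_mul_t := congrArg MulOpposite.op S.tinv_mul_t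
  t_mul_e := by
    have hv₀ := S.generic.ne_zero
    have h := S.tinv_mul_of_t_mul (by positivity) S.t_mul_f
    rw [← MulOpposite.op_mul, ← MulOpposite.op_mul, ← MulOpposite.op_smul, h, smul_inv_smul₀]
    positivity
  t_mul_f := by
    have hv₀ := S.generic.ne_zero
    have h := S.tinv_mul_of_t_mul (by positivity) S.t_mul_e
    rw [← MulOpposite.op_mul, ← MulOpposite.op_mul, ← MulOpposite.op_smul, h, inv_inv,
      smul_inv_smul₀]
    positivity
  e_mul_f := by
    rw [← MulOpposite.op_mul, ← MulOpposite.op_mul, ← MulOpposite.op_sub, ← MulOpposite.op_smul,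
      ← MulOpposite.op_add, S.e_mul_f, inv_inv, ← neg_sub S.v, inv_neg, neg_smul, ← smul_neg,
      neg_sub]
  T_e := by simp [S.T_f]
  T_f := by simp [S.T_e]
  T_t := by simp [S.T_tinv]

/-- The vectors of weight `w` under conjugation by `t`. -/
def weightSpace (w : ℤ) : Submodule K R := LinearMap.ker (qAd (S.v ^ w) S.t)

/-- The action of `e` on `R` dual to the one of `f` by quantum commutators. -/
def eAd : R →ₗ[K] R := LinearMap.mulRight K S.t ∘ₗ qAd 1 S.e

theorem eAd_apply (x : R) : S.eAd x = (S.e * x - x * S.e) * S.t := by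
  simp [eAd, qAd_apply]

variable {S} {w w' : ℤ} {x y : R}

theorem mem_weightSpace : x ∈ S.weightSpace w ↔ S.t * x = S.v ^ w • (x * S.t) := by
  rw [weightSpace, LinearMap.mem_ker, qAd_apply, sub_eq_zero]

theorem mul_mem_weightSpace (hx : x ∈ S.weightSpace w) (hy : y ∈ S.weightSpace w') :
    x * y ∈ S.weightSpace (w + w') := by
  rw [mem_weightSpace] at *
  rw [← mul_assoc, hx, smul_mul_assoc, mul_assoc, hy, mul_smul_comm, smul_smul, mul_assoc,
    ← zpow_add₀ S.generic.ne_zero]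

theorem f_mem_weightSpace : S.f ∈ S.weightSpace (-2) := by
  rw [mem_weightSpace, S.t_mul_f, inv_pow, zpow_neg]
  norm_cast

theorem qAd_mem_weightSpace (c : K) (hx : x ∈ S.weightSpace w) :
    qAd c S.f x ∈ S.weightSpace (w - 2) := by
  have h₁ := mul_mem_weightSpace f_mem_weightSpace hx
  have h₂ := mul_mem_weightSpace hx f_mem_weightSpace
  rw [neg_add_eq_sub] at h₁
  exact sub_mem h₁ (Submodule.smul_mem _ c h₂)

theorem adPow_mem_weightSpace (v : K) (w' : ℤ) (r : ℕ) (hx : x ∈ S.weightSpace w) :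
    adPow v S.f w' r x ∈ S.weightSpace (w - 2 * r) := by
  induction r with
  | zero => simpa using hx
  | succ r ih =>
    have h := qAd_mem_weightSpace (v ^ (w' - 2 * r)) ih
    rw [show w - 2 * (r : ℤ) - 2 = w - 2 * ((r + 1 : ℕ) : ℤ) by push_cast; ring] at h
    exact Submodule.smul_mem _ _ h

theorem tinv_mul_of_mem_weightSpace (hx : x ∈ S.weightSpace w) :
    S.tinv * x = S.v ^ (-w) • (x * S.tinv) := by
  rw [zpow_neg]
  exact S.tinv_mul_of_t_mul (zpow_ne_zero w S.generic.ne_zero) (mem_weightSpace.mp hx)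

theorem map_mem_weightSpace_iff : S.T x ∈ S.weightSpace (-w) ↔ x ∈ S.weightSpace w := by
  have hc : S.v ^ w ≠ 0 := zpow_ne_zero w S.generic.ne_zero
  rw [mem_weightSpace, ← S.T_tinv, ← map_mul, ← map_mul, ← map_smul, S.T.injective.eq_iff]
  refine ⟨fun h => ?_, tinv_mul_of_mem_weightSpace⟩
  rw [mem_weightSpace, ← inv_smul_eq_iff₀ hc]
  symm
  calc x * S.t = S.t * (S.tinv * x) * S.t := by rw [← mul_assoc S.t, S.t_mul_tinv, one_mul]
    _ = (S.v ^ w)⁻¹ • (S.t * x) := by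
      rw [h, zpow_neg, mul_smul_comm, smul_mul_assoc, mul_assoc, mul_assoc x, S.tinv_mul_t, mul_one]

theorem map_mem_weightSpace (hx : x ∈ S.weightSpace w) : S.T x ∈ S.weightSpace (-w) :=
  map_mem_weightSpace_iff.mpr hx

theorem eAd_mul (x : R) (hy : y ∈ S.weightSpace w) :
    S.eAd (x * y) = S.v ^ (-w) • (S.eAd x * y) + x * S.eAd y := by
  have hyt : y * S.t = S.v ^ (-w) • (S.t * y) := by
    rw [mem_weightSpace.mp hy, smul_smul, zpow_neg_mul_zpow_self w S.generic.ne_zero, one_smul]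
  simp only [eAd_apply, sub_mul, mul_sub, mul_assoc, hyt, mul_smul_comm, smul_sub]
  abel

theorem eAd_qAd (hx : x ∈ S.weightSpace w) :
    S.eAd (qAd (S.v ^ w) S.f x) = qAd (S.v ^ (w + 2)) S.f (S.eAd x) + qNum S.v w • x := by
  have hv₀ := S.generic.ne_zero
  have hft : S.v ^ (w + 2) • (S.t * S.f) = S.v ^ w • (S.f * S.t) := by
    rw [S.t_mul_f, smul_smul, zpow_add₀ hv₀, inv_pow]
    congr 1
    field_simp
  have hcartan : ((S.t - S.tinv) * x - S.v ^ w • (x * (S.t - S.tinv))) * S.t =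
      (S.v ^ w - S.v ^ (-w)) • x := by
    simp only [sub_mul, mul_sub, smul_sub, mem_weightSpace.mp hx, tinv_mul_of_mem_weightSpace hx,
      smul_mul_assoc, mul_assoc, S.tinv_mul_t, mul_one]
    module
  have hcomm : S.e * qAd (S.v ^ w) S.f x - qAd (S.v ^ w) S.f x * S.e =
      qAd (S.v ^ w) S.f (S.e * x - x * S.e) +
        (S.v - S.v⁻¹)⁻¹ • ((S.t - S.tinv) * x - S.v ^ w • (x * (S.t - S.tinv))) := by
    have hef : S.e * S.f - S.f * S.e = (S.v - S.v⁻¹)⁻¹ • (S.t - S.tinv) := by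
      rw [S.e_mul_f, add_sub_cancel_left]
    rw [smul_sub, smul_comm _ (S.v ^ w), ← smul_mul_assoc, ← mul_smul_comm, ← hef]
    simp only [qAd_apply, mul_sub, sub_mul, mul_smul_comm, smul_mul_assoc, smul_sub, mul_assoc]
    abel
  have hright : S.v ^ (w + 2) • ((S.e * x - x * S.e) * S.t * S.f) =
      S.v ^ w • ((S.e * x - x * S.e) * S.f * S.t) := by
    rw [mul_assoc, ← mul_smul_comm, hft, mul_smul_comm, mul_assoc]
  rw [eAd_apply, hcomm, add_mul, smul_mul_assoc, hcartan, smul_smul, inv_mul_eq_div, ← qNum,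
    eAd_apply, qAd_apply, qAd_apply, hright, sub_mul _ _ S.t, smul_mul_assoc, mul_assoc S.f]

theorem eAd_adPow_succ (hx : x ∈ S.weightSpace w) (he : S.eAd x = 0) (r : ℕ) :
    S.eAd (adPow S.v S.f w (r + 1) x) = qNum S.v (w - r) • adPow S.v S.f w r x := by
  have hv := S.generic
  induction r with
  | zero => simp [hv.adPow_one, eAd_qAd hx, he]
  | succ r ih =>
    have hstring := adPow_mem_weightSpace S.v w (r + 1) hx
    have hexp : w - 2 * ((r + 1 : ℕ) : ℤ) + 2 = w - 2 * r := by push_cast; ring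
    have hpascal := hv.qNum_pascal w (r + 1)
    rw [adPow_succ, map_smul, inv_smul_eq_iff₀ (hv.qNum_succ_ne_zero _), eAd_qAd hstring, ih,
      map_smul, hexp, hv.qAd_adPow]
    push_cast
    rw [smul_smul, smul_smul, ← add_smul, ← hpascal]
    congr 1
    ring_nf

theorem eAd_pow_adPow_eq_zero (hx : x ∈ S.weightSpace w) (he : S.eAd x = 0) {n r : ℕ} (hr : r < n) :
    (S.eAd ^ n) (adPow S.v S.f w r x) = 0 := by
  induction n generalizing r with
  | zero => omega
  | succ n ih =>
    rw [pow_succ, Module.End.mul_apply]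
    rcases r with _ | r
    · rw [adPow_zero, he, map_zero]
    · rw [eAd_adPow_succ hx he, map_smul, ih (by omega), smul_zero]

theorem eAd_pow_adPow_self (hx : x ∈ S.weightSpace w) (he : S.eAd x = 0) (r : ℕ) :
    (S.eAd ^ r) (adPow S.v S.f w r x) = (∏ k ∈ Finset.range r, qNum S.v (w - k)) • x := by
  induction r with
  | zero => simp
  | succ r ih =>
    rw [pow_succ, Module.End.mul_apply, eAd_adPow_succ hx he, map_smul, ih, Finset.prod_range_succ,
      smul_smul, mul_comm]

/-! The operator `T` exchanges the adjoint actions of `e` and `f`. -/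

theorem map_qAd_f (hx : x ∈ S.weightSpace w) :
    S.T (qAd (S.v ^ (-w)) S.f x) = (-S.v ^ (-w)) • S.eAd (S.T x) := by
  have hxt : S.T x * S.t = S.v ^ w • (S.t * S.T x) := by
    rw [mem_weightSpace.mp (map_mem_weightSpace hx), smul_smul, zpow_neg,
      mul_inv_cancel₀ (zpow_ne_zero w S.generic.ne_zero), one_smul]
  rw [map_qAd, S.T_f, qAd_apply, eAd_apply, sub_mul, mul_assoc S.e, hxt]
  simp only [neg_mul, mul_neg, smul_neg, mul_assoc, mul_smul_comm, smul_sub, smul_smul, neg_smul,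
    zpow_neg_mul_zpow_self w S.generic.ne_zero, one_smul]

theorem map_qAd_swap (hx : x ∈ S.weightSpace (-w)) :
    S.T (qAd (S.v ^ (-w)) x S.f) = S.eAd (S.T x) := by
  have hv₀ := S.generic.ne_zero
  rw [qAd_swap (zpow_ne_zero _ hv₀), map_smul, ← zpow_neg, neg_neg]
  have h := map_qAd_f hx
  rw [neg_neg] at h
  rw [h, smul_smul, neg_mul_neg, zpow_neg_mul_zpow_self w hv₀, one_smul]

theorem map_adPow_inv_eq_zero_iff (hx : x ∈ S.weightSpace w) (r : ℕ) :
    S.T (adPow S.v⁻¹ S.f w r x) = 0 ↔ (S.eAd ^ r) (S.T x) = 0 := by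
  have hv := S.generic
  suffices ∃ c : K, c ≠ 0 ∧ S.T (adPow S.v⁻¹ S.f w r x) = c • (S.eAd ^ r) (S.T x) by
    obtain ⟨c, hc, h⟩ := this
    rw [h, smul_eq_zero_iff_right hc]
  induction r with
  | zero => exact ⟨1, one_ne_zero, by simp⟩
  | succ r ih =>
    obtain ⟨c, hc, ih⟩ := ih
    have h := map_qAd_f (adPow_mem_weightSpace S.v⁻¹ w r hx)
    refine ⟨(qNum S.v⁻¹ (r + 1))⁻¹ * (-S.v ^ (-(w - 2 * r)) * c), ?_, ?_⟩
    · exact mul_ne_zero (inv_ne_zero (hv.inv.qNum_succ_ne_zero r))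
        (mul_ne_zero (neg_ne_zero.mpr (zpow_ne_zero _ hv.ne_zero)) hc)
    · rw [adPow_succ, inv_zpow', map_smul, h, ih, map_smul, smul_smul, smul_smul, pow_succ',
        Module.End.mul_apply, mul_assoc]

theorem adPow_inv_eq_zero_iff (hx : x ∈ S.weightSpace w) (r : ℕ) :
    adPow S.v⁻¹ S.f w r x = 0 ↔ (S.eAd ^ r) (S.T x) = 0 := by
  rw [← map_adPow_inv_eq_zero_iff hx, map_eq_zero_iff S.T S.T.injective]

end QuantumSL2

namespace QuantumSL2

variable {K R : Type*} [Field K] [Ring R] [Algebra K R] {S : QuantumSL2 K R}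
variable {N : ℕ} {w c d : ℤ} {x y : R}

/-- A vector `x` of weight `N` killed by `e` and by the divided power `f^{(N+1)}`, whose string is
reversed by `T`. -/
structure IsPrimitive (S : QuantumSL2 K R) (N : ℕ) (x : R) : Prop where
  mem_weightSpace : x ∈ S.weightSpace N
  eAd_eq_zero : S.eAd x = 0
  adPow_succ_eq_zero : adPow S.v S.f N (N + 1) x = 0
  map_eq : S.T x = adPow S.v S.f N N x

/-- The submodule of primitive vectors of weight `N`. -/
def primitive (S : QuantumSL2 K R) (N : ℕ) : Submodule K R where
  carrier := {x | S.IsPrimitive N x}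
  add_mem' hx hy :=
    ⟨add_mem hx.1 hy.1, by rw [map_add, hx.2, hy.2, add_zero],
      by rw [map_add, hx.3, hy.3, add_zero], by rw [map_add, map_add, hx.4, hy.4]⟩
  zero_mem' := ⟨zero_mem _, map_zero _, map_zero _, by rw [map_zero, map_zero]⟩
  smul_mem' a _ hx :=
    ⟨Submodule.smul_mem _ a hx.1, by rw [map_smul, hx.2, smul_zero],
      by rw [map_smul, hx.3, smul_zero], by rw [map_smul, map_smul, hx.4]⟩

namespace IsPrimitive

theorem adPow_inv_succ_eq_zero (hx : S.IsPrimitive N x) : adPow S.v⁻¹ S.f N (N + 1) x = 0 := by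
  rw [adPow_inv_eq_zero_iff hx.mem_weightSpace, hx.map_eq]
  exact eAd_pow_adPow_eq_zero hx.mem_weightSpace hx.eAd_eq_zero N.lt_succ_self

theorem map_qAd_inv (hx : S.IsPrimitive (N + 1) x) :
    S.T (qAd (S.v ^ (-(N + 1) : ℤ)) S.f x) =
      (-S.v ^ (-(N + 1) : ℤ)) • adPow S.v S.f (N + 1) N x := by
  have hw := hx.mem_weightSpace
  have hmap := hx.map_eq
  push_cast at hw hmap
  rw [map_qAd_f hw, hmap, eAd_adPow_succ hw hx.eAd_eq_zero, add_sub_cancel_left,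
    S.generic.qNum_one, one_smul]

theorem map_eq_qAd (hy : S.IsPrimitive 1 y) : S.T y = qAd S.v S.f y := by
  rw [hy.map_eq, Nat.cast_one, S.generic.adPow_one, zpow_one]

theorem qAd_inv_qAd (hy : S.IsPrimitive 1 y) : qAd S.v⁻¹ S.f (qAd S.v S.f y) = 0 := by
  have hv := S.generic
  have h := hy.adPow_succ_eq_zero
  rw [hv.adPow_succ_eq_iff, Nat.cast_one, hv.adPow_one, smul_zero, zpow_one] at h
  rw [← zpow_neg_one]
  exact h

theorem map_qAd_inv_one (hy : S.IsPrimitive 1 y) : S.T (qAd S.v⁻¹ S.f y) = (-S.v⁻¹) • y := by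
  have h := map_qAd_inv (N := 0) hy
  simpa using h

theorem qAd_mem_weightSpace (hy : S.IsPrimitive 1 y) : qAd S.v S.f y ∈ S.weightSpace (-1) := by
  rw [← hy.map_eq_qAd]
  exact map_mem_weightSpace hy.mem_weightSpace

theorem eAd_qAd (hy : S.IsPrimitive 1 y) : S.eAd (qAd S.v S.f y) = y := by
  have h := eAd_adPow_succ hy.mem_weightSpace hy.eAd_eq_zero 0
  simpa [S.generic.adPow_one, S.generic.qNum_one] using h

theorem mul (hx : S.IsPrimitive N x) (hy : S.IsPrimitive 1 y) : S.IsPrimitive (N + 1) (x * y) where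
  mem_weightSpace := by exact_mod_cast mul_mem_weightSpace hx.mem_weightSpace hy.mem_weightSpace
  eAd_eq_zero := by
    rw [eAd_mul x hy.mem_weightSpace, hx.eAd_eq_zero, hy.eAd_eq_zero]; simp
  adPow_succ_eq_zero := by
    push_cast
    rw [S.generic.adPow_succ_mul hy.qAd_inv_qAd, hx.adPow_succ_eq_zero,
      adPow_eq_zero_of_le (Nat.le_succ _) hx.adPow_succ_eq_zero]
    simp
  map_eq := by
    push_cast
    rw [S.generic.adPow_succ_mul hy.qAd_inv_qAd, hx.adPow_succ_eq_zero, map_mul, hx.map_eq,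
      hy.map_eq_qAd]
    simp

theorem mul_left (hx : S.IsPrimitive N x) (hy : S.IsPrimitive 1 y) :
    S.IsPrimitive (N + 1) (y * x) where
  mem_weightSpace := by
    rw [Nat.cast_succ, add_comm]
    exact mul_mem_weightSpace hy.mem_weightSpace hx.mem_weightSpace
  eAd_eq_zero := by
    rw [eAd_mul y hx.mem_weightSpace, hx.eAd_eq_zero, hy.eAd_eq_zero]; simp
  adPow_succ_eq_zero := by
    push_cast
    rw [S.generic.adPow_mul_succ hy.qAd_inv_qAd, hx.adPow_succ_eq_zero,
      adPow_eq_zero_of_le (Nat.le_succ _) hx.adPow_succ_eq_zero]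
    simp
  map_eq := by
    push_cast
    rw [S.generic.adPow_mul_succ hy.qAd_inv_qAd, hx.adPow_succ_eq_zero, map_mul, hx.map_eq,
      hy.map_eq_qAd]
    simp

theorem eAd_adPow_one (hx : S.IsPrimitive (N + 1) x) :
    S.eAd (adPow S.v S.f (N + 1) 1 x) = qNum S.v (N + 1) • x := by
  have h := eAd_adPow_succ hx.mem_weightSpace hx.eAd_eq_zero 0
  simpa using h

theorem adPow_one_mem_weightSpace (hx : S.IsPrimitive (N + 1) x) :
    adPow S.v S.f (N + 1) 1 x ∈ S.weightSpace (N - 1) := by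
  have h := adPow_mem_weightSpace S.v (N + 1) 1 hx.mem_weightSpace
  rwa [show ((N + 1 : ℕ) - 2 * (1 : ℕ) : ℤ) = N - 1 by push_cast; ring] at h

theorem map_cgRight (hx : S.IsPrimitive (N + 1) x) (hy : S.IsPrimitive 1 y) :
    S.T (cgRight S.v S.f (N + 1) x y) = adPow S.v S.f N N (cgRight S.v S.f (N + 1) x y) := by
  have hv := S.generic
  have hcg := hv.adPow_cgRight hy.qAd_inv_qAd (N + 1) N x
  have hmap := hx.map_eq
  push_cast at hmap
  rw [add_sub_cancel_right, add_sub_cancel_left, hv.qNum_one] at hcg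
  rw [hcg, hv.cgRight_eq, map_sub, map_smul, map_mul, map_mul, hx.map_qAd_inv, hy.map_qAd_inv_one,
    hy.map_eq_qAd, hmap, smul_mul_assoc, mul_smul_comm]
  have hv₀ := hv.ne_zero
  match_scalars
  · ring
  · field_simp

theorem map_cgLeft (hx : S.IsPrimitive (N + 1) x) (hy : S.IsPrimitive 1 y) :
    S.T (cgLeft S.v S.f (N + 1) x y) = adPow S.v S.f N N (cgLeft S.v S.f (N + 1) x y) := by
  have hv := S.generic
  have hcg := hv.adPow_cgLeft hy.qAd_inv_qAd (N + 1) N x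
  have hmap := hx.map_eq
  push_cast at hmap
  rw [add_sub_cancel_right, add_sub_cancel_left, sub_add_cancel_left, zpow_neg_one,
    hv.qNum_one] at hcg
  rw [hcg, hv.cgLeft_eq, map_sub, map_smul, map_smul, map_mul, map_mul, hx.map_qAd_inv,
    hy.map_qAd_inv_one, hy.map_eq_qAd, hmap, mul_smul_comm, smul_mul_assoc]
  have hpow := zpow_ne_zero (N + 1 : ℤ) hv.ne_zero
  match_scalars
  · ring
  · rw [zpow_neg]
    field_simp

theorem cgRight (hx : S.IsPrimitive (N + 1) x) (hy : S.IsPrimitive 1 y) :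
    S.IsPrimitive N (cgRight S.v S.f (N + 1) x y) where
  mem_weightSpace := by
    have h₁ := mul_mem_weightSpace hx.adPow_one_mem_weightSpace hy.mem_weightSpace
    have h₂ := mul_mem_weightSpace hx.mem_weightSpace hy.qAd_mem_weightSpace
    rw [Nat.cast_one, sub_add_cancel] at h₁
    rw [Nat.cast_succ, add_neg_cancel_right] at h₂
    exact sub_mem h₁ (Submodule.smul_mem _ _ h₂)
  eAd_eq_zero := by
    rw [_root_.cgRight, map_sub, map_smul, eAd_mul _ hy.mem_weightSpace,
      eAd_mul _ hy.qAd_mem_weightSpace, hy.eAd_eq_zero, hx.eAd_eq_zero, hx.eAd_adPow_one,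
      hy.eAd_qAd, smul_mul_assoc, smul_smul]
    simp
  adPow_succ_eq_zero := by
    have hcg := S.generic.adPow_cgRight hy.qAd_inv_qAd (N + 1) (N + 1) x
    have hkill := hx.adPow_succ_eq_zero
    push_cast at hkill
    rw [add_sub_cancel_right] at hcg
    simp [hcg, hkill]
  map_eq := hx.map_cgRight hy

theorem cgLeft (hx : S.IsPrimitive (N + 1) x) (hy : S.IsPrimitive 1 y) :
    S.IsPrimitive N (cgLeft S.v S.f (N + 1) x y) where
  mem_weightSpace := by
    have h₁ := mul_mem_weightSpace hy.mem_weightSpace hx.adPow_one_mem_weightSpace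
    have h₂ := mul_mem_weightSpace hy.qAd_mem_weightSpace hx.mem_weightSpace
    rw [Nat.cast_one, add_sub_cancel] at h₁
    rw [Nat.cast_succ, add_comm, add_neg_cancel_right] at h₂
    exact sub_mem (Submodule.smul_mem _ _ h₂) (Submodule.smul_mem _ _ h₁)
  eAd_eq_zero := by
    rw [_root_.cgLeft, map_sub, map_smul, map_smul, eAd_mul _ hx.mem_weightSpace,
      eAd_mul _ hx.adPow_one_mem_weightSpace, hy.eAd_eq_zero, hx.eAd_eq_zero, hx.eAd_adPow_one,
      hy.eAd_qAd, mul_smul_comm, Nat.cast_succ]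
    simp only [zero_mul, smul_zero, mul_zero, add_zero, zero_add]
    module
  adPow_succ_eq_zero := by
    have hcg := S.generic.adPow_cgLeft hy.qAd_inv_qAd (N + 1) (N + 1) x
    have hkill := hx.adPow_succ_eq_zero
    push_cast at hkill
    rw [add_sub_cancel_right] at hcg
    simp [hcg, hkill]
  map_eq := hx.map_cgLeft hy

end IsPrimitive

/-- The span of the vectors of weight `w` in the strings of the primitive vectors. -/
def strings (S : QuantumSL2 K R) (w : ℤ) : Submodule K R :=
  Submodule.span K {u | ∃ (n r : ℕ) (z : R), S.IsPrimitive n z ∧ (n : ℤ) - 2 * r = w ∧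
    adPow S.v S.f n r z = u}

theorem IsPrimitive.adPow_mem_strings (hx : S.IsPrimitive N x) {r : ℕ} (hw : (N : ℤ) - 2 * r = w) :
    adPow S.v S.f N r x ∈ S.strings w :=
  Submodule.subset_span ⟨N, r, x, hx, hw, rfl⟩

theorem IsPrimitive.mem_strings (hx : S.IsPrimitive N x) : x ∈ S.strings N :=
  hx.adPow_mem_strings (r := 0) (by simp)

theorem strings_le_weightSpace (w : ℤ) : S.strings w ≤ S.weightSpace w := by
  refine Submodule.span_le.mpr ?_
  rintro _ ⟨n, r, z, hz, rfl, rfl⟩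
  exact adPow_mem_weightSpace S.v n r hz.mem_weightSpace

theorem qAd_mem_strings (hx : x ∈ S.strings w) : qAd (S.v ^ w) S.f x ∈ S.strings (w - 2) := by
  suffices S.strings w ≤ (S.strings (w - 2)).comap (qAd (S.v ^ w) S.f) from this hx
  refine Submodule.span_le.mpr ?_
  rintro _ ⟨n, r, z, hz, rfl, rfl⟩
  rw [SetLike.mem_coe, Submodule.mem_comap, S.generic.qAd_adPow]
  exact Submodule.smul_mem _ _ (hz.adPow_mem_strings (by push_cast; ring))

/-! Since `[N + 2] ≠ 0`, the Leibniz rule and the Clebsch–Gordan vector together determine the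
product of a string with `y`. -/

theorem IsPrimitive.adPow_mul_mem_strings (hx : S.IsPrimitive N x) (hy : S.IsPrimitive 1 y)
    (r : ℕ) :
    adPow S.v S.f N r x * y ∈ S.strings (N - 2 * r + 1) := by
  have hv := S.generic
  rcases r with _ | r
  · simpa using (hx.mul hy).mem_strings
  rcases N with _ | N
  · rw [adPow_eq_zero_of_le (Nat.succ_le_succ r.zero_le) hx.adPow_succ_eq_zero, zero_mul]
    exact zero_mem _
  have hwt : ((N + 1 : ℕ) : ℤ) - 2 * (r + 1 : ℕ) + 1 = N - 2 * r := by push_cast; ring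
  have hprod := (hx.mul hy).adPow_mem_strings (r := r + 1) (w := N - 2 * r) (by push_cast; ring)
  have hcg := (hx.cgRight hy).adPow_mem_strings (r := r) rfl
  have hadd := hv.qNum_add (r + 1) (N + 1 - r)
  rw [show (r + 1 + (N + 1 - r) : ℤ) = (N + 1 : ℕ) + 1 by push_cast; ring] at hadd
  have hsolve : qNum S.v ((N + 1 : ℕ) + 1) • (adPow S.v S.f (N + 1) (r + 1) x * y) =
      (S.v ^ (-(r + 1) : ℤ) * qNum S.v (N + 1 - r)) •
          adPow S.v S.f (N + 1 + 1) (r + 1) (x * y) +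
        S.v ^ (N + 1 - r : ℤ) • adPow S.v S.f N r (_root_.cgRight S.v S.f (N + 1) x y) := by
    have h := hv.adPow_cgRight hy.qAd_inv_qAd (N + 1) r x
    rw [add_sub_cancel_right] at h
    rw [h, hv.adPow_succ_mul hy.qAd_inv_qAd, hadd]
    module
  rw [hwt]
  rw [← Submodule.smul_mem_iff _ (hv.qNum_succ_ne_zero (N + 1))]
  push_cast at hprod hsolve ⊢
  rw [hsolve]
  exact add_mem (Submodule.smul_mem _ _ hprod) (Submodule.smul_mem _ _ hcg)

theorem IsPrimitive.mul_adPow_mem_strings (hx : S.IsPrimitive N x) (hy : S.IsPrimitive 1 y)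
    (r : ℕ) :
    y * adPow S.v S.f N r x ∈ S.strings (N - 2 * r + 1) := by
  have hv := S.generic
  rcases r with _ | r
  · simpa using (hx.mul_left hy).mem_strings
  rcases N with _ | N
  · rw [adPow_eq_zero_of_le (Nat.succ_le_succ r.zero_le) hx.adPow_succ_eq_zero, mul_zero]
    exact zero_mem _
  have hwt : ((N + 1 : ℕ) : ℤ) - 2 * (r + 1 : ℕ) + 1 = N - 2 * r := by push_cast; ring
  have hprod := (hx.mul_left hy).adPow_mem_strings (r := r + 1) (w := N - 2 * r)
    (by push_cast; ring)
  have hcg := (hx.cgLeft hy).adPow_mem_strings (r := r) rfl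
  have hadd := hv.qNum_add (N + 1 - r) (r + 1)
  rw [show (N + 1 - r + (r + 1) : ℤ) = (N + 1 : ℕ) + 1 by push_cast; ring, neg_sub] at hadd
  have hsolve : qNum S.v ((N + 1 : ℕ) + 1) • (y * adPow S.v S.f (N + 1) (r + 1) x) =
      qNum S.v (N + 1 - r) • adPow S.v S.f (N + 1 + 1) (r + 1) (y * x) -
        adPow S.v S.f N r (_root_.cgLeft S.v S.f (N + 1) x y) := by
    have h := hv.adPow_cgLeft hy.qAd_inv_qAd (N + 1) r x
    rw [add_sub_cancel_right] at h
    rw [h, hv.adPow_mul_succ hy.qAd_inv_qAd, hadd, ← zpow_natCast]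
    push_cast
    module
  rw [hwt, ← Submodule.smul_mem_iff _ (hv.qNum_succ_ne_zero (N + 1))]
  push_cast at hprod hsolve ⊢
  rw [hsolve]
  exact sub_mem (Submodule.smul_mem _ _ hprod) hcg

theorem mul_mem_strings (hx : x ∈ S.strings w) (hy : S.IsPrimitive 1 y) :
    x * y ∈ S.strings (w + 1) := by
  suffices S.strings w ≤ (S.strings (w + 1)).comap (LinearMap.mulRight K y) from this hx
  refine Submodule.span_le.mpr ?_
  rintro _ ⟨n, r, z, hz, rfl, rfl⟩
  exact hz.adPow_mul_mem_strings hy r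

theorem mul_mem_strings_left (hx : x ∈ S.strings w) (hy : S.IsPrimitive 1 y) :
    y * x ∈ S.strings (w + 1) := by
  suffices S.strings w ≤ (S.strings (w + 1)).comap (LinearMap.mulLeft K y) from this hx
  refine Submodule.span_le.mpr ?_
  rintro _ ⟨n, r, z, hz, rfl, rfl⟩
  exact hz.mul_adPow_mem_strings hy r

/-- The elements of `R` which raise the weight of a string vector by `c` when they multiply it on
either side. -/
def multipliers (S : QuantumSL2 K R) (c : ℤ) : Submodule K R where
  carrier := {u | ∀ w, ∀ x ∈ S.strings w, u * x ∈ S.strings (w + c) ∧ x * u ∈ S.strings (w + c)}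
  add_mem' hu hu' w x hx := by
    rw [add_mul, mul_add]
    exact ⟨add_mem (hu w x hx).1 (hu' w x hx).1, add_mem (hu w x hx).2 (hu' w x hx).2⟩
  zero_mem' w x _ := by simp
  smul_mem' a u hu w x hx := by
    rw [smul_mul_assoc, mul_smul_comm]
    exact ⟨Submodule.smul_mem _ a (hu w x hx).1, Submodule.smul_mem _ a (hu w x hx).2⟩

variable {u u' : R}

theorem mul_mem_multipliers (hu : u ∈ S.multipliers c) (hu' : u' ∈ S.multipliers d) :
    u * u' ∈ S.multipliers (c + d) := by
  intro w x hx
  have h₁ := (hu _ _ (hu' w x hx).1).1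
  have h₂ := (hu' _ _ (hu w x hx).2).2
  rw [add_assoc, add_comm d, ← mul_assoc] at h₁
  rw [add_assoc, mul_assoc] at h₂
  exact ⟨h₁, h₂⟩

theorem qAd_mem_multipliers (a : K) (hu : u ∈ S.multipliers c) (hu' : u' ∈ S.multipliers d) :
    qAd a u u' ∈ S.multipliers (c + d) := by
  have h := mul_mem_multipliers hu' hu
  rw [add_comm] at h
  exact sub_mem (mul_mem_multipliers hu hu') (Submodule.smul_mem _ a h)

theorem qAd_mem_strings_of_mem_multipliers (a : K) (hu : u ∈ S.multipliers c)
    (hx : x ∈ S.strings w) : qAd a u x ∈ S.strings (w + c) :=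
  sub_mem (hu w x hx).1 (Submodule.smul_mem _ a (hu w x hx).2)

theorem adPow_mem_strings_of_mem_multipliers (v : K) (w' : ℤ) (r : ℕ) (hu : u ∈ S.multipliers c)
    (hx : x ∈ S.strings w) : adPow v u w' r x ∈ S.strings (w + r * c) := by
  induction r with
  | zero => simpa using hx
  | succ r ih =>
    have h := qAd_mem_strings_of_mem_multipliers (v ^ (w' - 2 * r)) hu ih
    rw [show w + r * c + c = w + (r + 1 : ℕ) * c by push_cast; ring] at h
    exact Submodule.smul_mem _ _ h

theorem IsPrimitive.mem_multipliers (hy : S.IsPrimitive 1 y) : y ∈ S.multipliers 1 :=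
  fun _ _ hx => ⟨mul_mem_strings_left hx hy, mul_mem_strings hx hy⟩

theorem IsPrimitive.map_mem_multipliers (hy : S.IsPrimitive 1 y) : S.T y ∈ S.multipliers (-1) := by
  have hv₀ := S.generic.ne_zero
  intro w x hx
  have hyx := qAd_mem_strings (mul_mem_strings_left hx hy)
  have hxy := qAd_mem_strings (mul_mem_strings hx hy)
  have hyx' := mul_mem_strings_left (qAd_mem_strings hx) hy
  have hxy' := mul_mem_strings (qAd_mem_strings hx) hy
  rw [show w + 1 - 2 = w + -1 by ring] at hyx hxy
  rw [show w - 2 + 1 = w + -1 by ring] at hyx' hxy'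
  have hleft : S.T y * x =
      qAd (S.v ^ (w + 1)) S.f (y * x) - S.v • (y * qAd (S.v ^ w) S.f x) := by
    rw [hy.map_eq_qAd, add_comm, zpow_one_add₀ hv₀, qAd_mul, add_sub_cancel_right]
  have hright : x * S.T y = (S.v ^ w)⁻¹ •
      (qAd (S.v ^ (w + 1)) S.f (x * y) - qAd (S.v ^ w) S.f x * y) := by
    rw [hy.map_eq_qAd, zpow_add_one₀ hv₀, qAd_mul, add_sub_cancel_left,
      inv_smul_smul₀ (zpow_ne_zero w hv₀)]
  rw [hleft, hright]
  exact ⟨sub_mem hyx (Submodule.smul_mem _ _ hyx'), Submodule.smul_mem _ _ (sub_mem hxy hxy')⟩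

end QuantumSL2

theorem mem_of_pow_apply_eq_zero {K M : Type*} [Field K] [AddCommGroup M] [Module K M]
    {D : Module.End K M} {V : ℕ → Submodule K M} {m : ℕ}
    (hker : ∀ k n, m + k < n → ∀ x ∈ V k, (D ^ n) x = 0)
    (hinj : ∀ k, ∀ x ∈ V k, (D ^ (m + k)) x = 0 → x = 0) {x : M} (hx : x ∈ ⨆ k, V k)
    (hD : (D ^ (m + 1)) x = 0) : x ∈ V 0 := by
  obtain ⟨g, hg, rfl⟩ := (Submodule.mem_iSup_iff_exists_finsupp V x).mp hx
  suffices hsupp : g.support ⊆ {0} by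
    rw [Finsupp.sum_of_support_subset g hsupp _ (by simp), Finset.sum_singleton]
    exact hg 0
  by_contra hsupp
  obtain ⟨k₀, hk₀, hk₀'⟩ := Finset.not_subset.mp hsupp
  obtain ⟨k, hk, hmax⟩ := g.support.exists_max_image id ⟨k₀, hk₀⟩
  have hkpos : 0 < k := (Nat.pos_of_ne_zero (by simpa using hk₀')).trans_le (hmax k₀ hk₀)
  refine Finsupp.mem_support_iff.mp hk (hinj k _ (hg k) ?_)
  have hDk : (D ^ (m + k)) (g.sum fun _ x => x) = 0 := by
    rw [show m + k = (k - 1) + (m + 1) by omega, pow_add, Module.End.mul_apply, hD, map_zero]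
  rw [← hDk, Finsupp.sum, map_sum]
  symm
  refine Finset.sum_eq_single_of_mem k hk fun l hl hne => hker l _ ?_ _ (hg l)
  have := lt_of_le_of_ne (hmax l hl) hne
  simp only [id] at this
  omega

namespace QuantumSL2

variable {K R : Type*} [Field K] [Ring R] [Algebra K R] {S : QuantumSL2 K R} {m : ℕ} {x : R}

theorem strings_neg_le (m : ℕ) : S.strings (-m) ≤
    ⨆ k : ℕ, (S.primitive (m + 2 * k)).map (adPow S.v S.f (m + 2 * k : ℕ) (m + k)) := by
  refine Submodule.span_le.mpr ?_
  rintro _ ⟨n, r, z, hz, hw, rfl⟩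
  rcases lt_or_ge n r with hr | hr
  · rw [adPow_eq_zero_of_le hr hz.adPow_succ_eq_zero]
    exact zero_mem _
  · obtain ⟨k, rfl⟩ := Nat.exists_eq_add_of_le (show m ≤ r by omega)
    obtain rfl : n = m + 2 * k := by omega
    exact Submodule.mem_iSup_of_mem k (Submodule.mem_map_of_mem hz)

theorem exists_isPrimitive_of_eAd_pow_eq_zero (hx : x ∈ S.strings (-m))
    (he : (S.eAd ^ (m + 1)) x = 0) : ∃ z, S.IsPrimitive m z ∧ adPow S.v S.f m m z = x := by
  refine mem_of_pow_apply_eq_zero ?_ ?_ (strings_neg_le m hx) he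
  · rintro k n hn _ ⟨z, hz, rfl⟩
    exact eAd_pow_adPow_eq_zero hz.mem_weightSpace hz.eAd_eq_zero hn
  · rintro k _ ⟨z, hz, rfl⟩ h
    have hprod : ∏ l ∈ Finset.range (m + k), qNum S.v ((m + 2 * k : ℕ) - l) ≠ 0 := by
      refine Finset.prod_ne_zero_iff.mpr fun l hl => S.generic.qNum_ne_zero ?_
      have := Finset.mem_range.mp hl
      omega
    rw [eAd_pow_adPow_self hz.mem_weightSpace hz.eAd_eq_zero] at h
    rw [(smul_eq_zero_iff_right hprod).mp h, map_zero]

theorem isPrimitive_of_map_mem_strings (hx : S.T x ∈ S.strings (-m))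
    (h : adPow S.v⁻¹ S.f m (m + 1) x = 0) : S.IsPrimitive m x := by
  have hw : x ∈ S.weightSpace m := map_mem_weightSpace_iff.mp (strings_le_weightSpace _ hx)
  obtain ⟨z, hz, hzx⟩ :=
    exists_isPrimitive_of_eAd_pow_eq_zero hx ((adPow_inv_eq_zero_iff hw (m + 1)).mp h)
  obtain rfl : z = x := S.T.injective (hz.map_eq.trans hzx)
  exact hz

end QuantumSL2

/-! ### Rank two -/

/-- The alternating product `⋯ a b a b` with `m` factors. -/
def altProd {M : Type*} [Monoid M] (a b : M) : ℕ → M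
  | 0 => 1
  | m + 1 => altProd b a m * b

theorem altProd_op {K R : Type*} [Field K] [Ring R] [Algebra K R] (X Y : R ≃ₐ[K] R) (m : ℕ) :
    altProd (AlgEquiv.op X) (AlgEquiv.op Y) m = AlgEquiv.op (altProd X Y m) := by
  induction m generalizing X Y with
  | zero => rfl
  | succ m ih => rw [altProd, ih]; rfl

theorem altProd_succ' {M : Type*} [Monoid M] (a b : M) (m : ℕ) :
    altProd a b (m + 1) = (if Even m then b else a) * altProd a b m := by
  induction m generalizing a b with
  | zero => simp [altProd]
  | succ m ih =>
    rw [altProd, ih, altProd, mul_assoc]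
    simp only [Nat.even_add_one, ite_not]

theorem coxeterEntry_eq_zero_iff {n : ℕ} : coxeterEntry n = 0 ↔ 4 ≤ n := by
  unfold coxeterEntry
  split_ifs <;> simp <;> omega

theorem eq_of_coxeterEntry_eq_succ {x y m : ℕ} (h₀ : x = 0 ↔ y = 0)
    (h : coxeterEntry (x * y : ℕ) = m + 1) :
    (x = 0 ∧ y = 0 ∧ m = 1) ∨ (x = 1 ∧ y = 1 ∧ m = 2) ∨ (x = 1 ∧ y = 2 ∧ m = 3) ∨
      (x = 2 ∧ y = 1 ∧ m = 3) ∨ (x = 1 ∧ y = 3 ∧ m = 5) ∨ (x = 3 ∧ y = 1 ∧ m = 5) := by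
  have hxy : x * y < 4 := by
    rw [← not_le, ← coxeterEntry_eq_zero_iff, h]
    exact m.succ_ne_zero
  obtain rfl | hx := Nat.eq_zero_or_pos x
  · obtain rfl := h₀.1 rfl
    simpa [coxeterEntry, eq_comm] using h
  have hy : 0 < y := Nat.pos_of_ne_zero fun hy => hx.ne' (h₀.2 hy)
  have hx₃ : x < 4 := (Nat.le_mul_of_pos_right x hy).trans_lt hxy
  have hy₃ : y < 4 := (Nat.le_mul_of_pos_left y hx).trans_lt hxy
  interval_cases x <;> interval_cases y <;> simp_all [coxeterEntry, eq_comm]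

namespace QuantumSL2

variable {K R : Type*} [Field K] [Ring R] [Algebra K R] {S S' : QuantumSL2 K R}
variable {m n N x y : ℕ} {u z : R}

theorem IsPrimitive.map_qAd_of_map_eq (hz : S.IsPrimitive N z) {r : ℕ}
    (hu : S.T u = adPow S.v S.f N (r + 1) z) :
    S.T (qAd (S.v ^ (2 * (r + 1) - N : ℤ)) u S.f) =
      qNum S.v (N - r) • adPow S.v S.f N r z := by
  have hw := adPow_mem_weightSpace S.v N (r + 1) hz.mem_weightSpace
  have hwu : u ∈ S.weightSpace (-(N - 2 * (r + 1) : ℤ)) := by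
    rw [← map_mem_weightSpace_iff, hu, neg_neg]
    exact_mod_cast hw
  rw [← neg_sub (N : ℤ), map_qAd_swap hwu, hu, eAd_adPow_succ hz.mem_weightSpace hz.eAd_eq_zero]

theorem IsPrimitive.map_mem_strings (hz : S.IsPrimitive n z) : S.T z ∈ S.strings (-n) := by
  rw [hz.map_eq]
  exact hz.adPow_mem_strings (by ring)

theorem IsPrimitive.map_map_mem_strings (hz : S.IsPrimitive n z) (X : R ≃ₐ[K] R) {c w : ℤ}
    (hX : X S.f ∈ S'.multipliers c) (hXz : X z ∈ S'.strings w) :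
    X (S.T z) ∈ S'.strings (w + n * c) := by
  rw [hz.map_eq, map_adPow]
  exact adPow_mem_strings_of_mem_multipliers _ _ _ hX hXz

theorem IsPrimitive.map_map_eq (hz : S.IsPrimitive n z) (hv : S.v = S'.v) (X : R ≃ₐ[K] R)
    (hX : X S.f = S'.f) (hXz : S'.T (X z) ∈ S'.strings (-n)) : S'.T (X z) = X (S.T z) := by
  have h := congrArg X hz.adPow_inv_succ_eq_zero
  rw [map_adPow, map_zero, hX, hv] at h
  rw [(isPrimitive_of_map_mem_strings hXz h).map_eq, hz.map_eq, map_adPow, hX, hv]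

/-- `S` and `S'` behave like the subalgebras attached to simple roots `αᵢ` and `αⱼ` with
`x = -aᵢⱼ` and `y = -aⱼᵢ`. -/
structure IsLinked (x y : ℕ) (S S' : QuantumSL2 K R) : Prop where
  v_pow : S.v ^ x = S'.v ^ y
  left : S.IsPrimitive x S'.f
  right : S'.IsPrimitive y S.f

/-- The braid relation with `m + 1` factors between `S.T` and `S'.T`, on primitive vectors and in
the form of its effect on `S.f` and `S'.f`. -/
structure IsBraided (m : ℕ) (S S' : QuantumSL2 K R) : Prop where
  altProd_f : altProd S.T S'.T m S.f = (if Even m then S' else S).f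
  altProd_f' : altProd S'.T S.T m S'.f = (if Even m then S else S').f
  altProd_eq : ∀ ⦃z : R⦄ ⦃n n' : ℕ⦄, S.IsPrimitive n z → S'.IsPrimitive n' z →
    altProd S.T S'.T (m + 1) z = altProd S'.T S.T (m + 1) z

theorem IsLinked.symm (h : IsLinked x y S S') : IsLinked y x S' S :=
  ⟨h.v_pow.symm, h.right, h.left⟩

theorem IsBraided.symm (h : IsBraided m S S') : IsBraided m S' S :=
  ⟨h.altProd_f', h.altProd_f, fun _ _ _ hz hz' => (h.altProd_eq hz' hz).symm⟩

namespace IsLinked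

theorem isBraided_one (h : IsLinked 0 0 S S') : IsBraided 1 S S' where
  altProd_f := h.right.map_eq
  altProd_f' := h.left.map_eq
  altProd_eq z n n' hz hz' := by
    have hcomm : Commute S.f S'.f := by
      have h₀ := h.left.adPow_succ_eq_zero
      rw [zero_add, S.generic.adPow_one, Nat.cast_zero, zpow_zero, qAd_apply, one_smul] at h₀
      exact sub_eq_zero.mp h₀
    have h₁ : S'.T S.f = S.f := h.right.map_eq
    have h₂ : S.T S'.f = S'.f := h.left.map_eq
    change S.T (S'.T z) = S'.T (S.T z)
    rw [hz'.map_eq, hz.map_eq, map_adPow, map_adPow, h₁, h₂, hz.map_eq, hz'.map_eq,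
      adPow_comm hcomm.symm]

section

variable {a : ℕ} (h : IsLinked (a + 1) 1 S S')
include h

theorem v_eq : S.v ^ (a + 1 : ℤ) = S'.v := by
  rw [← pow_one S'.v, ← h.v_pow]
  norm_cast

theorem map_adPow_one : S'.T (adPow S.v S.f (a + 1 : ℕ) 1 S'.f) = S.f := by
  have hv₀ := S'.generic.ne_zero
  rw [S.generic.adPow_one, Nat.cast_succ, h.v_eq, qAd_swap hv₀, map_smul, h.right.map_qAd_inv_one,
    smul_smul, neg_mul_neg, mul_inv_cancel₀ hv₀, one_smul]

theorem map_map_f : S.T (S'.T S.f) = adPow S.v S.f (a + 1 : ℕ) a S'.f := by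
  have hv₀ := S'.generic.ne_zero
  have hmap := h.left.map_qAd_inv
  rw [zpow_neg, h.v_eq] at hmap
  rw [h.right.map_eq_qAd, qAd_swap hv₀, map_smul, hmap, smul_smul, neg_mul_neg,
    mul_inv_cancel₀ hv₀, one_smul, Nat.cast_succ]

end

theorem isBraided_two (h : IsLinked 1 1 S S') : IsBraided 2 S S' := by
  have hj : S'.T (S.T S'.f) = S.f := by rw [h.left.map_eq, h.map_adPow_one]
  refine ⟨h.map_map_f, hj, fun z n n' hz hz' => ?_⟩
  have h₁ : S'.T (S.T z) ∈ S'.strings (-n' + n * (-1)) :=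
    hz.map_map_mem_strings S'.T h.right.map_mem_multipliers hz'.map_mem_strings
  have h₂ : S'.T (S.T (S'.T z)) ∈ S'.strings (-n' + n * (-1) + n' * 1) :=
    hz'.map_map_mem_strings (S'.T * S.T) (hj ▸ h.right.mem_multipliers) h₁
  rw [show (-n' + n * (-1) + n' * 1 : ℤ) = -n by ring] at h₂
  exact hz.map_map_eq (by simpa using h.v_pow) (S.T * S'.T) h.map_map_f h₂

theorem map_map_f_two (h : IsLinked 2 1 S S') :
    S'.T (S.T S'.f) = (qNum S.v 2)⁻¹ • qAd (1 : K) (S'.T S.f) S.f := by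
  rw [h.left.map_eq, adPow_succ, map_smul, map_qAd, h.map_adPow_one]
  norm_num

theorem map_map_map_f_two (h : IsLinked 2 1 S S') : S.T (S'.T (S.T S'.f)) = S'.f := by
  have hmap := h.left.map_qAd_of_map_eq (r := 0) h.map_map_f
  norm_num at hmap
  rw [h.map_map_f_two, map_smul, hmap, inv_smul_smul₀ (S.generic.qNum_ne_zero two_ne_zero)]

theorem isBraided_three (h : IsLinked 2 1 S S') : IsBraided 3 S S' := by
  have hi : S'.T (S.T (S'.T S.f)) = S.f := by rw [h.map_map_f, h.map_adPow_one]
  have hmul := h.right.mem_multipliers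
  have hmul' := h.right.map_mem_multipliers
  have hmul₀ : S'.T (S.T S'.f) ∈ S'.multipliers 0 := by
    rw [h.map_map_f_two]
    exact Submodule.smul_mem _ _ (neg_add_cancel (1 : ℤ) ▸ qAd_mem_multipliers 1 hmul' hmul)
  refine ⟨hi, h.map_map_map_f_two, fun z n n' hz hz' => ?_⟩
  have h₁ : S'.T (S.T z) ∈ S'.strings (-n' + n * (-1)) :=
    hz.map_map_mem_strings S'.T hmul' hz'.map_mem_strings
  have h₂ : S'.T (S.T (S'.T z)) ∈ S'.strings (-n' + n * (-1) + n' * 0) :=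
    hz'.map_map_mem_strings (S'.T * S.T) hmul₀ h₁
  have h₃ : S'.T (S.T (S'.T (S.T z))) ∈ S'.strings (-n' + n * (-1) + n' * 0 + n * 1) :=
    hz.map_map_mem_strings (S'.T * S.T * S'.T) (hi.symm ▸ hmul) h₂
  rw [show (-n' + n * (-1) + n' * 0 + n * 1 : ℤ) = -n' by ring] at h₃
  exact (hz'.map_map_eq rfl (S.T * S'.T * S.T) h.map_map_map_f_two h₃).symm

theorem map_map_map_f_three (h : IsLinked 3 1 S S') :
    S'.T (S.T (S'.T S.f)) = (qNum S.v 2)⁻¹ • qAd S.v (S'.T S.f) S.f := by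
  rw [h.map_map_f, adPow_succ, map_smul, map_qAd, h.map_adPow_one]
  norm_num

theorem map_map_map_map_f_three (h : IsLinked 3 1 S S') :
    S.T (S'.T (S.T (S'.T S.f))) = adPow S.v S.f (3 : ℕ) 1 S'.f := by
  have hmap := h.left.map_qAd_of_map_eq (r := 1) h.map_map_f
  norm_num at hmap
  rw [h.map_map_map_f_three, map_smul, hmap, inv_smul_smul₀ (S.generic.qNum_ne_zero two_ne_zero)]
  rfl

theorem map_map_f_three (h : IsLinked 3 1 S S') : S'.T (S.T S'.f) =
    (qNum S.v 3)⁻¹ • qAd S.v⁻¹ (S'.T S.f) (S'.T (S.T (S'.T S.f))) := by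
  rw [h.left.map_eq, adPow_succ, map_smul, map_qAd, ← h.map_map_f]
  norm_num

theorem altProd_five_f (h : IsLinked 3 1 S S') : S'.T (S.T (S'.T (S.T (S'.T S.f)))) = S.f := by
  rw [h.map_map_map_map_f_three, h.map_adPow_one]

theorem altProd_four_f' (h : IsLinked 3 1 S S') : S'.T (S.T (S'.T (S.T S'.f))) =
    (qNum S.v 3)⁻¹ • qAd S.v⁻¹ (S'.T (S.T (S'.T S.f))) S.f := by
  rw [h.map_map_f_three, map_smul, map_smul, map_qAd, map_qAd, h.altProd_five_f]

theorem altProd_five_f' (h : IsLinked 3 1 S S') :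
    S.T (S'.T (S.T (S'.T (S.T S'.f)))) = S'.f := by
  have hmap := h.left.map_qAd_of_map_eq (r := 0) h.map_map_map_map_f_three
  norm_num [zpow_neg_one] at hmap
  rw [h.altProd_four_f', map_smul, hmap, inv_smul_smul₀ (S.generic.qNum_ne_zero three_ne_zero)]

theorem isBraided_five (h : IsLinked 3 1 S S') : IsBraided 5 S S' := by
  have hmul := h.right.mem_multipliers
  have hmul₁ := h.right.map_mem_multipliers
  have hmul₃ : S'.T (S.T (S'.T S.f)) ∈ S'.multipliers 0 := by
    rw [h.map_map_map_f_three]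
    exact Submodule.smul_mem _ _ (neg_add_cancel (1 : ℤ) ▸ qAd_mem_multipliers S.v hmul₁ hmul)
  have hmul₂ : S'.T (S.T S'.f) ∈ S'.multipliers (-1) := by
    rw [h.map_map_f_three]
    exact Submodule.smul_mem _ _ (add_zero (-1 : ℤ) ▸ qAd_mem_multipliers S.v⁻¹ hmul₁ hmul₃)
  have hmul₄ : S'.T (S.T (S'.T (S.T S'.f))) ∈ S'.multipliers 1 := by
    rw [h.altProd_four_f']
    exact Submodule.smul_mem _ _ (zero_add (1 : ℤ) ▸ qAd_mem_multipliers S.v⁻¹ hmul₃ hmul)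
  refine ⟨h.altProd_five_f, h.altProd_five_f', fun z n n' hz hz' => ?_⟩
  have h₁ : S'.T (S.T z) ∈ S'.strings (-n' + n * (-1)) :=
    hz.map_map_mem_strings S'.T hmul₁ hz'.map_mem_strings
  have h₂ : S'.T (S.T (S'.T z)) ∈ S'.strings (-n' + n * (-1) + n' * (-1)) :=
    hz'.map_map_mem_strings (S'.T * S.T) hmul₂ h₁
  have h₃ : S'.T (S.T (S'.T (S.T z))) ∈ S'.strings (-n' + n * (-1) + n' * (-1) + n * 0) :=
    hz.map_map_mem_strings (S'.T * S.T * S'.T) hmul₃ h₂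
  have h₄ : S'.T (S.T (S'.T (S.T (S'.T z)))) ∈
      S'.strings (-n' + n * (-1) + n' * (-1) + n * 0 + n' * 1) :=
    hz'.map_map_mem_strings (S'.T * S.T * S'.T * S.T) hmul₄ h₃
  have h₅ : S'.T (S.T (S'.T (S.T (S'.T (S.T z))))) ∈
      S'.strings (-n' + n * (-1) + n' * (-1) + n * 0 + n' * 1 + n * 1) :=
    hz.map_map_mem_strings (S'.T * S.T * S'.T * S.T * S'.T) (h.altProd_five_f.symm ▸ hmul) h₄
  rw [show (-n' + n * (-1) + n' * (-1) + n * 0 + n' * 1 + n * 1 : ℤ) = -n' by ring] at h₅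
  exact (hz'.map_map_eq rfl (S.T * S'.T * S.T * S'.T * S.T) h.altProd_five_f' h₅).symm

theorem eq_zero_iff (h : IsLinked x y S S') : x = 0 ↔ y = 0 := by
  have eq_zero_of_eq_zero {a b : ℕ} {T T' : QuantumSL2 K R} (h : IsLinked a b T T')
      (ha : a = 0) : b = 0 := by
    by_contra hb
    exact T'.generic.pow_ne_one (Nat.pos_of_ne_zero hb) (by rw [← h.v_pow, ha, pow_zero])
  exact ⟨eq_zero_of_eq_zero h, eq_zero_of_eq_zero h.symm⟩

theorem isBraided (h : IsLinked x y S S') (hm : coxeterEntry (x * y : ℕ) = m + 1) :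
    IsBraided m S S' := by
  rcases eq_of_coxeterEntry_eq_succ h.eq_zero_iff hm with
    ⟨rfl, rfl, rfl⟩ | ⟨rfl, rfl, rfl⟩ | ⟨rfl, rfl, rfl⟩ | ⟨rfl, rfl, rfl⟩ | ⟨rfl, rfl, rfl⟩ |
      ⟨rfl, rfl, rfl⟩
  exacts [h.isBraided_one, h.isBraided_two, h.symm.isBraided_three.symm, h.isBraided_three,
    h.symm.isBraided_five.symm, h.isBraided_five]

end IsLinked

end QuantumSL2

namespace QuantumSL2

variable {K R : Type*} [Field K] [Ring R] [Algebra K R] {S : QuantumSL2 K R} {N : ℕ} {x : R}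

/-- At `r = N + 1` the powers of `v` in `IsGeneric.adPow_eq_sum` cancel, which leaves the quantum
Serre relation; at `r = N` one gets the formula for the braid operator. -/
theorem isPrimitive_of_serre (hx : x ∈ S.weightSpace N) (hex : S.e * x = x * S.e)
    (hserre : ∑ s ∈ Finset.range (N + 1 + 1), (-1 : K) ^ s •
      (dividedPow S.v S.f (N + 1 - s) * x * dividedPow S.v S.f s) = 0)
    (hT : S.T x = ∑ s ∈ Finset.range (N + 1), ((-1) ^ s * S.v ^ s) •
      (dividedPow S.v S.f (N - s) * x * dividedPow S.v S.f s)) :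
    S.IsPrimitive N x where
  mem_weightSpace := hx
  eAd_eq_zero := by rw [eAd_apply, hex, sub_self, zero_mul]
  adPow_succ_eq_zero := by
    rw [S.generic.adPow_eq_sum, ← hserre]
    simp
  map_eq := by
    rw [S.generic.adPow_eq_sum, hT]
    simp

theorem isPrimitive_op_of_serre (hx : x ∈ S.weightSpace (-N)) (hfx : S.f * x = x * S.f)
    (hserre : ∑ s ∈ Finset.range (N + 1 + 1), (-1 : K) ^ s •
      (dividedPow S.v S.e s * x * dividedPow S.v S.e (N + 1 - s)) = 0)
    (hT : S.T x = ∑ s ∈ Finset.range (N + 1), ((-1) ^ s * S.v⁻¹ ^ s) •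
      (dividedPow S.v S.e s * x * dividedPow S.v S.e (N - s))) :
    S.op.IsPrimitive N (MulOpposite.op x) := by
  have hdiv (k : ℕ) :
      dividedPow S.op.v S.op.f k = MulOpposite.op (dividedPow S.v S.e k) := by
    simp [dividedPow, op, qFactorial_inv]
  refine isPrimitive_of_serre ?_ ?_ ?_ ?_
  · have h := congrArg MulOpposite.op (tinv_mul_of_mem_weightSpace hx)
    simp only [neg_neg, MulOpposite.op_mul, MulOpposite.op_smul] at h
    rw [mem_weightSpace]
    change MulOpposite.op S.tinv * MulOpposite.op x =
      S.v⁻¹ ^ (N : ℤ) • (MulOpposite.op x * MulOpposite.op S.tinv)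
    rw [h, inv_zpow, inv_smul_smul₀ (zpow_ne_zero _ S.generic.ne_zero)]
  · exact congrArg MulOpposite.op hfx.symm
  · simp only [hdiv, ← MulOpposite.op_mul, ← MulOpposite.op_smul, ← Finset.op_sum, ← mul_assoc,
      hserre, MulOpposite.op_zero]
  · simp only [hdiv, ← MulOpposite.op_mul, ← MulOpposite.op_smul, ← Finset.op_sum, ← mul_assoc]
    exact congrArg MulOpposite.op hT

end QuantumSL2

/-! ### The quantum group -/

section QuantumGroup

theorem isGeneric_qq : IsGeneric qq where
  ne_zero := RatFunc.X_ne_zero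
  not_isOfFinOrder h := by
    obtain ⟨n, hn, hpow⟩ := isOfFinOrder_iff_pow_eq_one.mp h
    have hX : (Polynomial.X : Polynomial ℚ) ^ n = 1 :=
      RatFunc.algebraMap_injective ℚ (by simpa [qq] using hpow)
    exact hn.ne' (by simpa using congrArg Polynomial.natDegree hX)

theorem isGeneric_qpow {d : ℤ} (hd : 0 < d) : IsGeneric (qpow d) := by
  lift d to ℕ using hd.le
  simpa [qpow] using isGeneric_qq.pow (mod_cast hd)

theorem qpow_mul (d n : ℤ) : qpow (d * n) = qpow d ^ n := zpow_mul qq d n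

theorem qpow_neg (d : ℤ) : qpow (-d) = (qpow d)⁻¹ := zpow_neg qq d

theorem qfact_eq_qFactorial (d : ℤ) (n : ℕ) : qfact d n = qFactorial (qpow d) n := by
  induction n with
  | zero => rfl
  | succ n ih => rw [qfact, qFactorial, ih, qint, qNum, qpow_neg d, ← mul_neg, qpow_mul, qpow_mul]

variable (C : CartanData I)

theorem uFdp_eq_dividedPow (i : I) (s : ℕ) : uFdp C i s = dividedPow (qpow (C.d i)) (uF C i) s := by
  rw [uFdp, dividedPow, qfact_eq_qFactorial]

theorem uEdp_eq_dividedPow (i : I) (s : ℕ) : uEdp C i s = dividedPow (qpow (C.d i)) (uE C i) s := by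
  rw [uEdp, dividedPow, qfact_eq_qFactorial]

variable {C} in
theorem uMk_eq_of_rel {x y : FA I} (h : QRel C x y) : uMk C x = uMk C y :=
  RingQuot.mkAlgHom_rel KK h

theorem uT_mul_uTinv (i : I) : uT C i * uTinv C i = 1 := by
  simpa [uT, uTinv] using uMk_eq_of_rel (QRel.t_tinv (C := C) i)

theorem uTinv_mul_uT (i : I) : uTinv C i * uT C i = 1 := by
  simpa [uT, uTinv] using uMk_eq_of_rel (QRel.tinv_t (C := C) i)

theorem uT_mul_uT (i j : I) : uT C i * uT C j = uT C j * uT C i := by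
  simpa [uT] using uMk_eq_of_rel (QRel.t_t (C := C) i j)

theorem uT_mul_uE (i j : I) : uT C i * uE C j = qpow (C.d i) ^ C.a i j • (uE C j * uT C i) := by
  simpa [uT, uE, ← qpow_mul] using uMk_eq_of_rel (QRel.t_e (C := C) i j)

theorem uT_mul_uF (i j : I) : uT C i * uF C j = qpow (C.d i) ^ (-C.a i j) • (uF C j * uT C i) := by
  simpa [uT, uF, ← qpow_mul, -zpow_neg] using uMk_eq_of_rel (QRel.t_f (C := C) i j)

theorem uE_mul_uF_self (i : I) : uE C i * uF C i =
    uF C i * uE C i + (qpow (C.d i) - (qpow (C.d i))⁻¹)⁻¹ • (uT C i - uTinv C i) := by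
  rw [← sub_eq_iff_eq_add']
  simpa [uE, uF, uT, uTinv, qpow_neg] using uMk_eq_of_rel (QRel.e_f (C := C) i i)

variable {C} {i j k : I}

theorem uE_mul_uF_of_ne (h : i ≠ j) : uE C i * uF C j = uF C j * uE C i := by
  rw [← sub_eq_zero]
  simpa [uE, uF, h] using uMk_eq_of_rel (QRel.e_f (C := C) i j)

omit [DecidableEq I] in
theorem one_sub_toNat_a (h : i ≠ j) : (1 - C.a i j).toNat = (-C.a i j).toNat + 1 := by
  have := C.a_offdiag i j h
  omega

theorem sum_uEdp_eq_zero (h : i ≠ j) : ∑ s ∈ Finset.range ((-C.a i j).toNat + 1 + 1),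
    (-1 : KK) ^ s • (uEdp C i s * uE C j * uEdp C i ((-C.a i j).toNat + 1 - s)) = 0 := by
  simpa [serreE, edp, uE, uEdp, one_sub_toNat_a h] using uMk_eq_of_rel (QRel.serre_e (C := C) i j h)

theorem sum_uFdp_eq_zero (h : i ≠ j) : ∑ s ∈ Finset.range ((-C.a i j).toNat + 1 + 1),
    (-1 : KK) ^ s • (uFdp C i ((-C.a i j).toNat + 1 - s) * uF C j * uFdp C i s) = 0 := by
  have hserre : ∑ s ∈ Finset.range ((-C.a i j).toNat + 1 + 1),
      (-1 : KK) ^ s • (uFdp C i s * uF C j * uFdp C i ((-C.a i j).toNat + 1 - s)) = 0 := by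
    simpa [serreF, fdp, uF, uFdp, one_sub_toNat_a h]
      using uMk_eq_of_rel (QRel.serre_f (C := C) i j h)
  rw [← Finset.sum_range_reflect,
    ← smul_zero ((-1 : KK) ^ ((-C.a i j).toNat + 1)), ← hserre, Finset.smul_sum]
  refine Finset.sum_congr rfl fun s hs => ?_
  have hs : s ≤ (-C.a i j).toNat + 1 := Finset.mem_range_succ_iff.mp hs
  rw [add_tsub_cancel_right, Nat.sub_sub_self hs, smul_smul, ← pow_add,
    neg_one_pow_congr (m := (-C.a i j).toNat + 1 - s) (n := (-C.a i j).toNat + 1 + s)]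
  simp [Nat.even_sub hs, Nat.even_add]

end QuantumGroup

/-! ### The braid operators -/

/-- The family `T` acts on the generators of `U_q(𝔤)` as Lusztig's braid operators. -/
structure IsBraidAction (C : CartanData I) (T : I → Uq C ≃ₐ[KK] Uq C) : Prop where
  map_uT : ∀ k j, T k (uT C j) = uT C j * tpow C k (-(C.a k j))
  map_uE_self : ∀ k, T k (uE C k) = -(uTinv C k * uF C k)
  map_uF_self : ∀ k, T k (uF C k) = -(uE C k * uT C k)
  map_uE : ∀ k j, j ≠ k → T k (uE C j) =
    ∑ r ∈ Finset.range ((-C.a k j).toNat + 1), ((-1 : KK) ^ r * qpow (-(C.d k * (r : ℤ)))) •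
      (uEdp C k r * uE C j * uEdp C k ((-C.a k j).toNat - r))
  map_uF : ∀ k j, j ≠ k → T k (uF C j) =
    ∑ r ∈ Finset.range ((-C.a k j).toNat + 1), ((-1 : KK) ^ r * qpow (C.d k * (r : ℤ))) •
      (uFdp C k ((-C.a k j).toNat - r) * uF C j * uFdp C k r)

namespace IsBraidAction

variable {C : CartanData I} {T : I → Uq C ≃ₐ[KK] Uq C} {i j k : I}

theorem map_uT_self (hT : IsBraidAction C T) (k : I) : T k (uT C k) = uTinv C k := by
  rw [hT.map_uT, C.a_diag, tpow, if_neg (by norm_num)]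
  simp [pow_two, ← mul_assoc, uT_mul_uTinv]

/-- The copy of `U_{q_k}(sl₂)` attached to the simple root `α_k`. -/
def sl2 (hT : IsBraidAction C T) (k : I) : QuantumSL2 KK (Uq C) where
  v := qpow (C.d k)
  e := uE C k
  f := uF C k
  t := uT C k
  tinv := uTinv C k
  T := T k
  generic := isGeneric_qpow (C.d_pos k)
  t_mul_tinv := uT_mul_uTinv C k
  tinv_mul_t := uTinv_mul_uT C k
  t_mul_e := by rw [uT_mul_uE, C.a_diag]; norm_cast
  t_mul_f := by rw [uT_mul_uF, C.a_diag, zpow_neg, inv_pow]; norm_cast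
  e_mul_f := uE_mul_uF_self C k
  T_e := hT.map_uE_self k
  T_f := hT.map_uF_self k
  T_t := hT.map_uT_self k

theorem isPrimitive_uF (hT : IsBraidAction C T) (h : k ≠ j) :
    (hT.sl2 k).IsPrimitive (-C.a k j).toNat (uF C j) := by
  refine QuantumSL2.isPrimitive_of_serre ?_ (uE_mul_uF_of_ne h) ?_ ?_
  · rw [QuantumSL2.mem_weightSpace, Int.toNat_of_nonneg (neg_nonneg.mpr (C.a_offdiag k j h))]
    exact uT_mul_uF C k j
  · simpa only [sl2, uFdp_eq_dividedPow] using sum_uFdp_eq_zero h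
  · simpa only [sl2, uFdp_eq_dividedPow, qpow_mul, zpow_natCast] using hT.map_uF k j h.symm

theorem isPrimitive_op_uE (hT : IsBraidAction C T) (h : k ≠ j) :
    (hT.sl2 k).op.IsPrimitive (-C.a k j).toNat (MulOpposite.op (uE C j)) := by
  refine QuantumSL2.isPrimitive_op_of_serre ?_ (uE_mul_uF_of_ne h.symm).symm ?_ ?_
  · rw [QuantumSL2.mem_weightSpace, Int.toNat_of_nonneg (neg_nonneg.mpr (C.a_offdiag k j h)),
      neg_neg]
    exact uT_mul_uE C k j
  · simpa only [sl2, uEdp_eq_dividedPow] using sum_uEdp_eq_zero h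
  · simpa only [sl2, uEdp_eq_dividedPow, qpow_neg, qpow_mul, inv_pow, zpow_natCast]
      using hT.map_uE k j h.symm

theorem isLinked (hT : IsBraidAction C T) (h : i ≠ j) :
    (hT.sl2 i).IsLinked (-C.a i j).toNat (-C.a j i).toNat (hT.sl2 j) where
  v_pow := by
    have hij := neg_nonneg.mpr (C.a_offdiag i j h)
    have hji := neg_nonneg.mpr (C.a_offdiag j i h.symm)
    change qpow (C.d i) ^ _ = qpow (C.d j) ^ _
    rw [← zpow_natCast, ← zpow_natCast, Int.toNat_of_nonneg hij, Int.toNat_of_nonneg hji,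
      ← qpow_mul, ← qpow_mul, mul_neg, mul_neg, C.symm]
  left := hT.isPrimitive_uF h
  right := hT.isPrimitive_uF h.symm

theorem isLinked_op (hT : IsBraidAction C T) (h : i ≠ j) :
    (hT.sl2 i).op.IsLinked (-C.a i j).toNat (-C.a j i).toNat (hT.sl2 j).op where
  v_pow := by
    change (hT.sl2 i).v⁻¹ ^ _ = (hT.sl2 j).v⁻¹ ^ _
    rw [inv_pow, inv_pow, (hT.isLinked h).v_pow]
  left := hT.isPrimitive_op_uE h
  right := hT.isPrimitive_op_uE h.symm

end IsBraidAction

/-! ### Dihedral cosets in a Coxeter group -/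

section Coxeter

open CoxeterSystem

omit [DecidableEq I]

variable {M : CoxeterMatrix I} {W : Type*} [Group W] (cs : CoxeterSystem M W) {v w : W} {i k : I}

theorem prod_map_alternatingWord {G : Type*} [Monoid G] (f : I → G) (i k : I) (m : ℕ) :
    ((alternatingWord i k m).map f).prod = altProd (f i) (f k) m := by
  induction m generalizing i k with
  | zero => rfl
  | succ m ih => rw [alternatingWord_succ, altProd, ← ih]; simp

variable {cs}

theorem exists_eq_mul_wordProd_alternatingWord (i : I) (hk : cs.IsRightDescent w k) :
    ∃ v r, 0 < r ∧ w = v * cs.wordProd (alternatingWord i k r) ∧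
      cs.length w = cs.length v + r ∧ ¬ cs.IsRightDescent v i ∧ ¬ cs.IsRightDescent v k := by
  induction hn : cs.length w generalizing w i k with
  | zero => exact absurd hk (by simp [IsRightDescent, hn])
  | succ n ih =>
    have hlen := cs.isRightDescent_iff.mp hk
    have hw : w * cs.simple k * cs.simple k = w := cs.simple_mul_simple_cancel_right k
    by_cases hi : cs.IsRightDescent (w * cs.simple k) i
    · obtain ⟨v, r, -, hv, hvlen, hvk, hvi⟩ := ih k hi (by omega)
      refine ⟨v, r + 1, r.succ_pos, ?_, by omega, hvi, hvk⟩
      rw [alternatingWord_succ, cs.wordProd_concat, ← mul_assoc, ← hv, hw]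
    · refine ⟨w * cs.simple k, 1, one_pos, ?_, by omega, hi,
        cs.isRightDescent_iff_not_isRightDescent_mul.mp hk⟩
      simp [alternatingWord, hw]

theorem eq_zero_or_le_of_length_mul_alternatingWord {r : ℕ}
    (h : cs.length (v * cs.wordProd (alternatingWord i k r)) = cs.length v + r) :
    M i k = 0 ∨ r ≤ M i k := by
  by_contra! hr
  refine cs.not_isReduced_alternatingWord i k hr.1 hr.2 ?_
  have hmul := cs.length_mul_le v (cs.wordProd (alternatingWord i k r))
  have hle := cs.length_wordProd_le (alternatingWord i k r)
  rw [length_alternatingWord] at hle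
  rw [CoxeterSystem.IsReduced, length_alternatingWord]
  omega

theorem eq_zero_or_lt_of_length_mul_alternatingWord {r : ℕ} (hr : 0 < r)
    (h : cs.length (v * cs.wordProd (alternatingWord i k r)) = cs.length v + r)
    (hi : ¬ cs.IsRightDescent (v * cs.wordProd (alternatingWord i k r)) i) :
    M i k = 0 ∨ r < M i k := by
  refine (eq_zero_or_le_of_length_mul_alternatingWord h).imp_right fun hle => ?_
  refine hle.lt_of_ne fun heq => hi ?_
  obtain ⟨s, rfl⟩ := Nat.exists_eq_add_one.mpr hr
  have hswap : cs.wordProd (alternatingWord i k (s + 1)) =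
      cs.wordProd (alternatingWord k i (s + 1)) := by
    rw [cs.prod_alternatingWord_eq_prod_alternatingWord_sub i k _ (by omega), ← heq]
    congr 2
    omega
  have hmul : v * cs.wordProd (alternatingWord i k (s + 1)) * cs.simple i =
      v * cs.wordProd (alternatingWord i k s) := by
    rw [hswap, alternatingWord_succ, cs.wordProd_concat, ← mul_assoc,
      cs.simple_mul_simple_cancel_right]
  have hle₁ := cs.length_mul_le v (cs.wordProd (alternatingWord i k s))
  have hle₂ := cs.length_wordProd_le (alternatingWord i k s)
  rw [length_alternatingWord] at hle₂
  rw [IsRightDescent, hmul]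
  omega

theorem isReduced_and_isRightDescent_of_append {l : List I} (h : cs.IsReduced (l ++ [i])) :
    cs.IsReduced l ∧ cs.IsRightDescent (cs.wordProd (l ++ [i])) i := by
  have hl : cs.IsReduced l := by simpa using h.take l.length
  refine ⟨hl, ?_⟩
  rw [IsRightDescent, h.eq, cs.wordProd_append]
  simp [hl.eq]

theorem isReduced_append_alternatingWord {l q : List I} {m : ℕ} (hl : cs.IsReduced l)
    (hlen : l.length = q.length + m)
    (h : cs.wordProd (l ++ [k]) =
      cs.wordProd q * cs.wordProd (alternatingWord i k (m + 1))) :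
    cs.IsReduced (q ++ alternatingWord k i m) ∧
      cs.wordProd l = cs.wordProd (q ++ alternatingWord k i m) := by
  rw [alternatingWord_succ, cs.wordProd_concat, cs.wordProd_append, cs.wordProd_singleton,
    ← mul_assoc, mul_left_inj, ← cs.wordProd_append] at h
  refine ⟨?_, h⟩
  rw [CoxeterSystem.IsReduced, ← h, hl.eq, hlen, List.length_append, length_alternatingWord]

end Coxeter

/-! ### Roots of rank two -/

section DihedralRoot

omit [DecidableEq I]

/-- The coordinates in `(αᵢ, αₖ)` of the image of `αᵢ` under the alternating product
`⋯ sₖ sᵢ sₖ` with `r` factors, where `x = -aᵢₖ` and `y = -aₖᵢ`. -/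
def dihedralRoot (x y : ℕ) : ℕ → ℤ × ℤ
  | 0 => (1, 0)
  | r + 1 =>
    let p := dihedralRoot x y r
    if Even r then (p.1, y * p.1 - p.2) else (x * p.2 - p.1, p.2)

variable {x y m r : ℕ}

theorem dihedralRoot_eq_of_coxeterEntry (h₀ : x = 0 ↔ y = 0)
    (hm : coxeterEntry (x * y : ℕ) = m + 1) :
    dihedralRoot x y m = if Even m then (0, 1) else (1, 0) := by
  rcases eq_of_coxeterEntry_eq_succ h₀ hm with
    ⟨rfl, rfl, rfl⟩ | ⟨rfl, rfl, rfl⟩ | ⟨rfl, rfl, rfl⟩ | ⟨rfl, rfl, rfl⟩ | ⟨rfl, rfl, rfl⟩ |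
      ⟨rfl, rfl, rfl⟩ <;> decide

theorem dihedralRoot_pos_of_coxeterEntry (h₀ : x = 0 ↔ y = 0)
    (hm : coxeterEntry (x * y : ℕ) = m + 1) (hr : 0 < r) (hrm : r < m) :
    0 < (dihedralRoot x y r).1 ∧ 0 < (dihedralRoot x y r).2 := by
  rcases eq_of_coxeterEntry_eq_succ h₀ hm with
    ⟨rfl, rfl, rfl⟩ | ⟨rfl, rfl, rfl⟩ | ⟨rfl, rfl, rfl⟩ | ⟨rfl, rfl, rfl⟩ | ⟨rfl, rfl, rfl⟩ |
      ⟨rfl, rfl, rfl⟩ <;> interval_cases r <;> decide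

/-- When `x y ≥ 4` the coordinate changed last dominates, so the next reflection makes the other
one grow. -/
theorem dihedralRoot_growth (h : 4 ≤ x * y) (r : ℕ) :
    0 < (dihedralRoot x y r).1 ∧ (0 < r → 0 < (dihedralRoot x y r).2) ∧
      if Even r then 2 * (dihedralRoot x y r).2 ≤ y * (dihedralRoot x y r).1
      else 2 * (dihedralRoot x y r).1 ≤ x * (dihedralRoot x y r).2 := by
  have hx : 0 < x := Nat.pos_of_ne_zero (by rintro rfl; simp at h)
  have hy : 0 < y := Nat.pos_of_ne_zero (by rintro rfl; simp at h)
  zify at h hx hy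
  induction r with
  | zero => simp [dihedralRoot]
  | succ r ih =>
    obtain ⟨ha, hb, hab⟩ := ih
    by_cases hr : Even r
    · simp only [dihedralRoot, hr, if_true, Nat.even_add_one, not_true_eq_false, if_false] at *
      refine ⟨ha, fun _ => ?_, ?_⟩ <;> nlinarith [mul_le_mul_of_nonneg_left hab hx.le]
    · have hb' := hb (Nat.pos_of_ne_zero (by rintro rfl; exact hr Even.zero))
      simp only [dihedralRoot, hr, if_false, Nat.even_add_one, not_false_eq_true, if_true] at *
      refine ⟨?_, fun _ => hb', ?_⟩ <;> nlinarith [mul_le_mul_of_nonneg_left hab hy.le]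

theorem dihedralRoot_pos_or_eq (h₀ : x = 0 ↔ y = 0) (hr : 0 < r)
    (h : coxeterEntry (x * y : ℕ) = 0 ∨ r < coxeterEntry (x * y : ℕ)) :
    (0 < (dihedralRoot x y r).1 ∧ 0 < (dihedralRoot x y r).2) ∨
      coxeterEntry (x * y : ℕ) = r + 1 := by
  obtain h | h := h
  · have hgrowth := dihedralRoot_growth (coxeterEntry_eq_zero_iff.mp h) r
    exact Or.inl ⟨hgrowth.1, hgrowth.2.1 hr⟩
  · obtain ⟨m, hm⟩ := Nat.exists_eq_add_one.mpr (Nat.zero_lt_of_lt h)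
    obtain h | rfl := (Nat.lt_succ_iff.mp (hm ▸ h)).lt_or_eq
    · exact Or.inl (dihedralRoot_pos_of_coxeterEntry h₀ hm hr h)
    · exact Or.inr hm

end DihedralRoot

/-! ### The Weyl group acting on the root lattice -/

section WeylAction

open CoxeterSystem

omit [DecidableEq I] in
theorem CartanData.toNat_neg_a_eq_zero_iff (C : CartanData I) (i k : I) :
    (-C.a i k).toNat = 0 ↔ (-C.a k i).toNat = 0 := by
  simp only [Int.toNat_eq_zero, neg_nonpos]
  rw [← mul_nonneg_iff_of_pos_left (C.d_pos i), C.symm, mul_nonneg_iff_of_pos_left (C.d_pos k)]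

/-- The invariant form `(α_i, α_j) = d_i a_{ij}` on the root lattice. -/
def CartanData.rootForm (C : CartanData I) : LinearMap.BilinForm ℤ (I →₀ ℤ) :=
  Finsupp.linearCombination ℤ fun i => Finsupp.linearCombination ℤ fun j => C.d i * C.a i j

omit [DecidableEq I] in
theorem CartanData.rootForm_single_single (C : CartanData I) (i j : I) :
    C.rootForm (Finsupp.single i 1) (Finsupp.single j 1) = C.d i * C.a i j := by
  simp [rootForm]

variable {C : CartanData I} {W : Type*} [Group W] {cs : CoxeterSystem (coxMat C) W}
  {ρ : W →* Module.End ℤ (I →₀ ℤ)} {v w : W} {i j k : I} {r m : ℕ}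

theorem coxMat_of_ne (h : i ≠ k) :
    coxMat C i k = coxeterEntry ((-C.a i k).toNat * (-C.a k i).toNat : ℕ) := by
  rw [Nat.cast_mul, Int.toNat_of_nonneg (neg_nonneg.mpr (C.a_offdiag i k h)),
    Int.toNat_of_nonneg (neg_nonneg.mpr (C.a_offdiag k i h.symm)), neg_mul_neg]
  exact if_neg h

/-- `ρ` is the action of the Weyl group on the root lattice by the simple reflections
`s_k α = α - ⟨α_k^∨, α⟩ α_k`. -/
def IsWeylAction (cs : CoxeterSystem (coxMat C) W) (ρ : W →* Module.End ℤ (I →₀ ℤ)) : Prop :=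
  ∀ k α, ρ (cs.simple k) α = α - (α.sum fun j m => C.a k j * m) • Finsupp.single k 1

namespace IsWeylAction

theorem map_simple_single (hρ : IsWeylAction cs ρ) (k j : I) :
    ρ (cs.simple k) (Finsupp.single j 1) = Finsupp.single j 1 - C.a k j • Finsupp.single k 1 := by
  rw [hρ, Finsupp.sum_single_index (mul_zero _), mul_one]

theorem map_alternatingWord (hρ : IsWeylAction cs ρ) (h : i ≠ k) (r : ℕ) :
    ρ (cs.wordProd (alternatingWord i k r)) (Finsupp.single i 1) =
      (dihedralRoot (-C.a i k).toNat (-C.a k i).toNat r).1 • Finsupp.single i 1 +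
        (dihedralRoot (-C.a i k).toNat (-C.a k i).toNat r).2 • Finsupp.single k 1 := by
  have hik := Int.toNat_of_nonneg (neg_nonneg.mpr (C.a_offdiag i k h))
  have hki := Int.toNat_of_nonneg (neg_nonneg.mpr (C.a_offdiag k i h.symm))
  induction r with
  | zero => simp [alternatingWord, dihedralRoot]
  | succ r ih =>
    rw [alternatingWord_succ', cs.wordProd_cons, map_mul, Module.End.mul_apply, ih]
    simp only [map_add, map_smul, dihedralRoot]
    split_ifs <;> simp only [hρ.map_simple_single, C.a_diag, hik, hki] <;> module

theorem map_alternatingWord_of_coxMat_eq (hρ : IsWeylAction cs ρ) (h : i ≠ k)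
    (hm : coxMat C i k = m + 1) :
    ρ (cs.wordProd (alternatingWord i k m)) (Finsupp.single i 1) =
      Finsupp.single (if Even m then k else i) 1 := by
  rw [coxMat_of_ne h] at hm
  rw [hρ.map_alternatingWord h,
    dihedralRoot_eq_of_coxeterEntry (C.toNat_neg_a_eq_zero_iff i k) hm]
  split_ifs <;> simp

theorem map_alternatingWord_cases (hρ : IsWeylAction cs ρ) (h : i ≠ k) (hr : 0 < r)
    (hM : coxMat C i k = 0 ∨ r < coxMat C i k) :
    coxMat C i k = r + 1 ∨ ∃ a b : ℤ, 0 < a ∧ 0 < b ∧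
      ρ (cs.wordProd (alternatingWord i k r)) (Finsupp.single i 1) =
        a • Finsupp.single i 1 + b • Finsupp.single k 1 := by
  rw [coxMat_of_ne h] at hM ⊢
  refine (dihedralRoot_pos_or_eq (C.toNat_neg_a_eq_zero_iff i k) hr hM).symm.imp_right ?_
  rintro ⟨ha, hb⟩
  exact ⟨_, _, ha, hb, hρ.map_alternatingWord h r⟩

theorem map_mul_alternatingWord_nonneg (hρ : IsWeylAction cs ρ) (h : i ≠ k) (hr : 0 < r)
    (hM : coxMat C i k = 0 ∨ r < coxMat C i k) (hi : 0 ≤ ρ v (Finsupp.single i 1))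
    (hk : 0 ≤ ρ v (Finsupp.single k 1)) :
    0 ≤ ρ (v * cs.wordProd (alternatingWord i k r)) (Finsupp.single i 1) := by
  rw [map_mul, Module.End.mul_apply]
  obtain hm | ⟨a, b, ha, hb, hab⟩ := hρ.map_alternatingWord_cases h hr hM
  · rw [hρ.map_alternatingWord_of_coxMat_eq h hm]
    split_ifs <;> assumption
  · rw [hab, map_add, map_smul, map_smul]
    exact add_nonneg (smul_nonneg ha.le hi) (smul_nonneg hb.le hk)

theorem nonneg_of_not_isRightDescent (hρ : IsWeylAction cs ρ) (hi : ¬ cs.IsRightDescent w i) :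
    0 ≤ ρ w (Finsupp.single i 1) := by
  induction hn : cs.length w using Nat.strong_induction_on generalizing w i with
  | _ n ih =>
    subst hn
    obtain rfl | hw := eq_or_ne w 1
    · simp
    obtain ⟨k, hk⟩ := cs.exists_rightDescent_of_ne_one hw
    obtain ⟨v, r, hr, rfl, hlen, hvi, hvk⟩ := exists_eq_mul_wordProd_alternatingWord i hk
    have hik : i ≠ k := by rintro rfl; exact hi hk
    exact hρ.map_mul_alternatingWord_nonneg hik hr
      (eq_zero_or_lt_of_length_mul_alternatingWord hr hlen hi)
      (ih _ (by omega) hvi rfl) (ih _ (by omega) hvk rfl)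

theorem isRightDescent_iff_not_nonneg (hρ : IsWeylAction cs ρ) :
    cs.IsRightDescent w i ↔ ¬ 0 ≤ ρ w (Finsupp.single i 1) := by
  refine ⟨fun hi hnonneg => ?_, not_imp_comm.mp hρ.nonneg_of_not_isRightDescent⟩
  have hneg := hρ.nonneg_of_not_isRightDescent (cs.isRightDescent_iff_not_isRightDescent_mul.mp hi)
  rw [map_mul, Module.End.mul_apply, hρ.map_simple_single, C.a_diag, two_smul,
    sub_add_cancel_left, map_neg, neg_nonneg] at hneg
  have hzero : ρ w (Finsupp.single i 1) = ρ w 0 := by rw [hneg.antisymm hnonneg, map_zero]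
  simpa using (Representation.apply_bijective ρ w).injective hzero

theorem exists_eq_mul_longest (hρ : IsWeylAction cs ρ) (h : i ≠ k)
    (hi : cs.IsRightDescent w i) (hk : cs.IsRightDescent w k) :
    ∃ v, coxMat C i k ≠ 0 ∧ w = v * cs.wordProd (alternatingWord i k (coxMat C i k)) ∧
      cs.length w = cs.length v + coxMat C i k := by
  obtain ⟨v, r, hr, rfl, hlen, hvi, hvk⟩ := exists_eq_mul_wordProd_alternatingWord i hk
  have hM := eq_zero_or_le_of_length_mul_alternatingWord hlen
  have hM' : ¬ (coxMat C i k = 0 ∨ r < coxMat C i k) := fun hM =>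
    hρ.isRightDescent_iff_not_nonneg.mp hi <| hρ.map_mul_alternatingWord_nonneg h hr hM
      (hρ.nonneg_of_not_isRightDescent hvi) (hρ.nonneg_of_not_isRightDescent hvk)
  obtain rfl : r = coxMat C i k := by omega
  exact ⟨v, hr.ne', rfl, hlen⟩

theorem rootForm_map_map (hρ : IsWeylAction cs ρ) (w : W) (α β : I →₀ ℤ) :
    C.rootForm (ρ w α) (ρ w β) = C.rootForm α β := by
  induction w using cs.simple_induction_left generalizing α β with
  | one => simp
  | mul_simple_left w k ih =>
    have hk : C.rootForm.compl₁₂ (ρ (cs.simple k)) (ρ (cs.simple k)) = C.rootForm := by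
      refine Finsupp.lhom_ext' fun i => LinearMap.ext_ring <| Finsupp.lhom_ext' fun j =>
        LinearMap.ext_ring ?_
      simp only [LinearMap.compl₁₂_apply, LinearMap.comp_apply, Finsupp.lsingle_apply,
        hρ.map_simple_single, map_sub, map_smul, LinearMap.sub_apply, LinearMap.smul_apply,
        C.rootForm_single_single, C.a_diag, smul_eq_mul]
      linear_combination -C.a k j * C.symm i k
    rw [map_mul]
    exact (LinearMap.congr_fun₂ hk _ _).trans (ih α β)

theorem d_eq_of_map_single (hρ : IsWeylAction cs ρ)
    (h : ρ w (Finsupp.single i 1) = Finsupp.single j 1) : C.d i = C.d j := by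
  have hform := hρ.rootForm_map_map w (Finsupp.single i 1) (Finsupp.single i 1)
  rw [h, C.rootForm_single_single, C.rootForm_single_single, C.a_diag, C.a_diag] at hform
  omega

/-- A form of Matsumoto's theorem. -/
theorem prod_map_eq_prod_map (hρ : IsWeylAction cs ρ) {G : Type*} [Monoid G] {f : I → G}
    (hf : ∀ i k, i ≠ k → coxMat C i k ≠ 0 →
      altProd (f i) (f k) (coxMat C i k) = altProd (f k) (f i) (coxMat C i k))
    {l l' : List I} (hl : cs.IsReduced l) (hl' : cs.IsReduced l')
    (h : cs.wordProd l = cs.wordProd l') : (l.map f).prod = (l'.map f).prod := by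
  have hlen : l.length = l'.length := by rw [← hl.eq, ← hl'.eq, h]
  induction hn : l.length generalizing l l' with
  | zero => rw [List.length_eq_zero_iff.mp hn, List.length_eq_zero_iff.mp (hlen.symm.trans hn)]
  | succ n ih =>
    have hl₀ : l ≠ [] := List.ne_nil_of_length_eq_add_one hn
    have hl₀' : l' ≠ [] := List.ne_nil_of_length_eq_add_one (hlen.symm.trans hn)
    obtain ⟨p, i, rfl⟩ := (List.eq_nil_or_concat' l).resolve_left hl₀
    obtain ⟨p', k, rfl⟩ := (List.eq_nil_or_concat' l').resolve_left hl₀'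
    obtain ⟨hp, hi⟩ := isReduced_and_isRightDescent_of_append hl
    obtain ⟨hp', hk⟩ := isReduced_and_isRightDescent_of_append hl'
    rw [← h] at hk
    simp only [List.length_append, List.length_singleton] at hn hlen
    rw [List.map_append, List.map_append, List.prod_append, List.prod_append]
    obtain rfl | hik := eq_or_ne i k
    · rw [ih hp hp' (by simpa [cs.wordProd_append] using h) (by omega) (by omega)]
    obtain ⟨v, hM, hv, hvlen⟩ := hρ.exists_eq_mul_longest hik hi hk
    obtain ⟨q, hq, rfl⟩ := cs.exists_isReduced v
    obtain ⟨m, hm⟩ := Nat.exists_eq_add_one.mpr (Nat.pos_of_ne_zero hM)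
    have hbraid := cs.wordProd_braidWord_eq i k
    rw [braidWord, braidWord, (coxMat C).symmetric k i, hm] at hbraid
    rw [hl.eq, hq.eq, hm, List.length_append, List.length_singleton] at hvlen
    rw [hm] at hv
    have prod_map_mul_eq {s : List I} (a b : I) (hs : cs.IsReduced s) (hsn : s.length = n)
        (hsab : cs.wordProd (s ++ [b]) =
          cs.wordProd q * cs.wordProd (alternatingWord a b (m + 1))) :
        (s.map f).prod * f b = (q.map f).prod * altProd (f a) (f b) (m + 1) := by
      obtain ⟨hred, hprod⟩ := isReduced_append_alternatingWord hs (by omega) hsab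
      rw [ih hs hred hprod (by simp; omega) hsn, List.map_append, List.prod_append,
        prod_map_alternatingWord, altProd, mul_assoc]
    have hfik := hf i k hik hM
    rw [hm] at hfik
    rw [List.map_singleton, List.map_singleton, List.prod_singleton, List.prod_singleton,
      prod_map_mul_eq k i hp (by omega) (hv.trans (by rw [hbraid])),
      prod_map_mul_eq i k hp' (by omega) (h ▸ hv), hfik]

end IsWeylAction

end WeylAction

/-! ### The torus -/

section Torus

open scoped IsMulCommutative

variable (C : CartanData I)

/-- `t_j` as a unit of `U_q(𝔤)`. -/
def uTUnit (j : I) : (Uq C)ˣ := ⟨uT C j, uTinv C j, uT_mul_uTinv C j, uTinv_mul_uT C j⟩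

/-- The torus of `U_q(𝔤)`, the group generated by the `t_j`. -/
def torus : Subgroup (Uq C)ˣ := Subgroup.closure (Set.range (uTUnit C))

instance : IsMulCommutative (torus C) := by
  refine Subgroup.isMulCommutative_closure ?_
  rintro _ ⟨i, rfl⟩ _ ⟨j, rfl⟩
  exact Units.ext (uT_mul_uT C i j)

/-- The homomorphism `μ ↦ t_μ` from the root lattice to the torus, with values in the units of
`U_q(𝔤)`. -/
def latticeUnit : (I →₀ ℤ) →+ Additive (Uq C)ˣ :=
  (MonoidHom.toAdditive (torus C).subtype).comp <| Finsupp.liftAddHom fun j =>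
    zmultiplesHom (Additive (torus C)) (.ofMul ⟨uTUnit C j, Subgroup.subset_closure ⟨j, rfl⟩⟩)

/-- The torus element `t_μ`, for `μ` in the root lattice. -/
def uTau (μ : I →₀ ℤ) : Uq C := ((latticeUnit C μ).toMul : (Uq C)ˣ)

theorem uTau_add (μ ν : I →₀ ℤ) : uTau C (μ + ν) = uTau C μ * uTau C ν := by
  rw [uTau, map_add]
  rfl

theorem tpow_eq_zpow (j : I) (m : ℤ) : tpow C j m = (uTUnit C j ^ m : (Uq C)ˣ) := by
  obtain ⟨n, rfl | rfl⟩ := m.eq_nat_or_neg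
  · simp [tpow, uTUnit]
  · obtain rfl | hn := n.eq_zero_or_pos
    · simp [tpow]
    · simp [tpow, hn.ne', ← inv_pow, uTUnit]

theorem uTau_single (j : I) (m : ℤ) : uTau C (Finsupp.single j m) = tpow C j m := by
  simp [uTau, latticeUnit, tpow_eq_zpow]

theorem uTau_single_one (j : I) : uTau C (Finsupp.single j 1) = uT C j := by
  simp [uTau_single, tpow]

end Torus

/-! ### The braid relations -/

section BraidRelations

open CoxeterSystem

theorem Uq.algHom_ext {C : CartanData I} {R : Type*} [Ring R] [Algebra KK R]
    {φ ψ : Uq C →ₐ[KK] R} (hE : ∀ j, φ (uE C j) = ψ (uE C j))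
    (hF : ∀ j, φ (uF C j) = ψ (uF C j)) (hT : ∀ j, φ (uT C j) = ψ (uT C j)) : φ = ψ := by
  refine RingQuot.ringQuot_ext' KK φ ψ (FreeAlgebra.hom_ext (funext fun g => ?_))
  cases g with
  | e j => exact hE j
  | f j => exact hF j
  | t j => exact hT j
  | tinv j =>
    refine left_inv_eq_right_inv (a := φ (uT C j)) (b := φ (uTinv C j)) (c := ψ (uTinv C j)) ?_ ?_
    · rw [← map_mul, uTinv_mul_uT, map_one]
    · rw [hT, ← map_mul, uT_mul_uTinv, map_one]

theorem map_uTinv_of_map_uT {C : CartanData I} (φ : Uq C ≃ₐ[KK] Uq C) {i j : I}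
    (h : φ (uT C i) = uT C j) : φ (uTinv C i) = uTinv C j := by
  refine left_inv_eq_right_inv ?_ (uT_mul_uTinv C j)
  rw [← h, ← map_mul, uTinv_mul_uT, map_one]

namespace IsBraidAction

variable {C : CartanData I} {T : I → Uq C ≃ₐ[KK] Uq C} {W : Type*} [Group W]
  {cs : CoxeterSystem (coxMat C) W} {ρ : W →* Module.End ℤ (I →₀ ℤ)} {i j k : I} {m : ℕ}

theorem map_uTau (hT : IsBraidAction C T) (hρ : IsWeylAction cs ρ) (k : I) (μ : I →₀ ℤ) :
    T k (uTau C μ) = uTau C (ρ (cs.simple k) μ) := by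
  have hom_eq :
      (MonoidHom.toAdditive (Units.map (T k : Uq C →* Uq C))).comp (latticeUnit C) =
        (latticeUnit C).comp (ρ (cs.simple k)).toAddMonoidHom := by
    refine Finsupp.addHom_ext' fun j => AddMonoidHom.ext_int <| Additive.toMul.injective <|
      Units.ext ?_
    change T k (uTau C (Finsupp.single j 1)) = uTau C (ρ (cs.simple k) (Finsupp.single j 1))
    rw [hρ.map_simple_single, sub_eq_add_neg, ← neg_smul, Finsupp.smul_single_one, uTau_add,
      uTau_single_one, uTau_single, hT.map_uT]
  exact congrArg (fun φ => ((φ μ).toMul : Uq C)) hom_eq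

theorem prod_map_uTau (hT : IsBraidAction C T) (hρ : IsWeylAction cs ρ) (l : List I)
    (μ : I →₀ ℤ) : (l.map T).prod (uTau C μ) = uTau C (ρ (cs.wordProd l) μ) := by
  induction l with
  | nil => simp
  | cons k l ih =>
    rw [List.map_cons, List.prod_cons, AlgEquiv.mul_apply, ih, hT.map_uTau hρ, cs.wordProd_cons,
      map_mul, Module.End.mul_apply]

theorem altProd_uTau (hT : IsBraidAction C T) (hρ : IsWeylAction cs ρ) (i k : I) (m : ℕ)
    (μ : I →₀ ℤ) :
    altProd (T i) (T k) m (uTau C μ) = uTau C (ρ (cs.wordProd (alternatingWord i k m)) μ) := by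
  rw [← prod_map_alternatingWord, hT.prod_map_uTau hρ]

theorem isBraided (hT : IsBraidAction C T) (h : i ≠ k) (hm : coxMat C i k = m + 1) :
    QuantumSL2.IsBraided m (hT.sl2 i) (hT.sl2 k) :=
  (hT.isLinked h).isBraided ((coxMat_of_ne h).symm.trans hm)

theorem isBraided_op (hT : IsBraidAction C T) (h : i ≠ k) (hm : coxMat C i k = m + 1) :
    QuantumSL2.IsBraided m (hT.sl2 i).op (hT.sl2 k).op :=
  (hT.isLinked_op h).isBraided ((coxMat_of_ne h).symm.trans hm)

theorem altProd_uF (hT : IsBraidAction C T) (h : i ≠ k) (hm : coxMat C i k = m + 1) :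
    altProd (T i) (T k) m (uF C i) = uF C (if Even m then k else i) := by
  have hf := (hT.isBraided h hm).altProd_f
  split_ifs at hf ⊢ <;> exact hf

theorem altProd_uE (hT : IsBraidAction C T) (h : i ≠ k) (hm : coxMat C i k = m + 1) :
    altProd (T i) (T k) m (uE C i) = uE C (if Even m then k else i) := by
  have hf := (hT.isBraided_op h hm).altProd_f
  simp only [QuantumSL2.op, altProd_op] at hf
  apply MulOpposite.op_injective
  split_ifs at hf ⊢ <;> exact hf

theorem altProd_uT (hT : IsBraidAction C T) (hρ : IsWeylAction cs ρ) (h : i ≠ k)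
    (hm : coxMat C i k = m + 1) :
    altProd (T i) (T k) m (uT C i) = uT C (if Even m then k else i) := by
  rw [← uTau_single_one, hT.altProd_uTau hρ, hρ.map_alternatingWord_of_coxMat_eq h hm,
    uTau_single_one]

theorem altProd_succ_uF_of_ne (hT : IsBraidAction C T) (h : i ≠ k)
    (hm : coxMat C i k = m + 1) (hi : i ≠ j) (hk : k ≠ j) :
    altProd (T i) (T k) (m + 1) (uF C j) = altProd (T k) (T i) (m + 1) (uF C j) :=
  (hT.isBraided h hm).altProd_eq (hT.isPrimitive_uF hi) (hT.isPrimitive_uF hk)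

theorem altProd_succ_uE_of_ne (hT : IsBraidAction C T) (h : i ≠ k)
    (hm : coxMat C i k = m + 1) (hi : i ≠ j) (hk : k ≠ j) :
    altProd (T i) (T k) (m + 1) (uE C j) = altProd (T k) (T i) (m + 1) (uE C j) := by
  have heq := (hT.isBraided_op h hm).altProd_eq (hT.isPrimitive_op_uE hi) (hT.isPrimitive_op_uE hk)
  simp only [QuantumSL2.op, altProd_op] at heq
  exact MulOpposite.op_injective heq

theorem altProd_succ_uF_self (hT : IsBraidAction C T) (hρ : IsWeylAction cs ρ) (h : i ≠ k)
    (hm : coxMat C i k = m + 1) :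
    altProd (T i) (T k) (m + 1) (uF C i) = altProd (T k) (T i) (m + 1) (uF C i) := by
  rw [altProd_succ', altProd, AlgEquiv.mul_apply, AlgEquiv.mul_apply, hT.map_uF_self,
    hT.altProd_uF h hm, ← apply_ite T, hT.map_uF_self, map_neg, map_mul, hT.altProd_uE h hm,
    hT.altProd_uT hρ h hm]

theorem altProd_succ_uE_self (hT : IsBraidAction C T) (hρ : IsWeylAction cs ρ) (h : i ≠ k)
    (hm : coxMat C i k = m + 1) :
    altProd (T i) (T k) (m + 1) (uE C i) = altProd (T k) (T i) (m + 1) (uE C i) := by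
  rw [altProd_succ', altProd, AlgEquiv.mul_apply, AlgEquiv.mul_apply, hT.map_uE_self,
    hT.altProd_uE h hm, ← apply_ite T, hT.map_uE_self, map_neg, map_mul, hT.altProd_uF h hm,
    map_uTinv_of_map_uT _ (hT.altProd_uT hρ h hm)]

theorem altProd_comm (hT : IsBraidAction C T) (hρ : IsWeylAction cs ρ) (h : i ≠ k)
    (hM : coxMat C i k ≠ 0) :
    altProd (T i) (T k) (coxMat C i k) = altProd (T k) (T i) (coxMat C i k) := by
  obtain ⟨m, hm⟩ := Nat.exists_eq_add_one.mpr (Nat.pos_of_ne_zero hM)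
  have hm' : coxMat C k i = m + 1 := by rw [(coxMat C).symmetric, hm]
  have hbraid := cs.wordProd_braidWord_eq i k
  rw [braidWord, braidWord, hm, hm'] at hbraid
  rw [hm]
  apply AlgEquiv.coe_toAlgHom_injective
  refine Uq.algHom_ext (fun j => ?_) (fun j => ?_) (fun j => ?_)
  · obtain rfl | hi := eq_or_ne i j
    · exact hT.altProd_succ_uE_self hρ h hm
    obtain rfl | hk := eq_or_ne k j
    · exact (hT.altProd_succ_uE_self hρ h.symm hm').symm
    exact hT.altProd_succ_uE_of_ne h hm hi hk
  · obtain rfl | hi := eq_or_ne i j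
    · exact hT.altProd_succ_uF_self hρ h hm
    obtain rfl | hk := eq_or_ne k j
    · exact (hT.altProd_succ_uF_self hρ h.symm hm').symm
    exact hT.altProd_succ_uF_of_ne h hm hi hk
  · change altProd (T i) (T k) (m + 1) (uT C j) = altProd (T k) (T i) (m + 1) (uT C j)
    rw [← uTau_single_one, hT.altProd_uTau hρ, hT.altProd_uTau hρ, hbraid]

end IsBraidAction

end BraidRelations

/-! ### Simple roots mapped to simple roots -/

section SimpleRoots

open CoxeterSystem

omit [DecidableEq I] in
theorem eq_zero_or_eq_zero_of_smul_add_smul_eq_single {x y : I →₀ ℤ} {a b : ℤ} {j : I}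
    (ha : 0 < a) (hb : 0 < b) (hx : 0 ≤ x) (hy : 0 ≤ y)
    (h : a • x + b • y = Finsupp.single j 1) : x = 0 ∨ y = 0 := by
  classical
  have hl (l : I) : a * x l + b * y l = if j = l then 1 else 0 := by
    simpa [Finsupp.single_apply] using DFunLike.congr_fun h l
  have hax (l : I) : 0 ≤ a * x l := mul_nonneg ha.le (hx l)
  have hby (l : I) : 0 ≤ b * y l := mul_nonneg hb.le (hy l)
  have hne (l : I) (hlj : j ≠ l) : x l = 0 ∧ y l = 0 := by
    have hsum := hl l
    rw [if_neg hlj, add_eq_zero_iff_of_nonneg (hax l) (hby l)] at hsum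
    simpa [ha.ne', hb.ne'] using hsum
  have hj : x j = 0 ∨ y j = 0 := by
    by_contra! hj
    have hxj := (hax j).lt_of_ne' (mul_ne_zero ha.ne' hj.1)
    have hyj := (hby j).lt_of_ne' (mul_ne_zero hb.ne' hj.2)
    have hsum := hl j
    rw [if_pos rfl] at hsum
    omega
  refine hj.imp (fun hj => Finsupp.ext fun l => ?_) (fun hj => Finsupp.ext fun l => ?_)
  · obtain rfl | hlj := eq_or_ne j l
    exacts [hj, (hne l hlj).1]
  · obtain rfl | hlj := eq_or_ne j l
    exacts [hj, (hne l hlj).2]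

variable {C : CartanData I} {T : I → Uq C ≃ₐ[KK] Uq C} {W : Type*} [Group W]
  {cs : CoxeterSystem (coxMat C) W} {ρ : W →* Module.End ℤ (I →₀ ℤ)} {w : W} {i j : I}

namespace IsBraidAction

theorem exists_isReduced_prod_map_uF (hT : IsBraidAction C T) (hρ : IsWeylAction cs ρ)
    (hw : ρ w (Finsupp.single i 1) = Finsupp.single j 1) :
    ∃ l, cs.IsReduced l ∧ w = cs.wordProd l ∧ (l.map T).prod (uF C i) = uF C j := by
  induction hn : cs.length w using Nat.strong_induction_on generalizing w i with
  | _ n ih =>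
    subst hn
    obtain rfl | hw₁ := eq_or_ne w 1
    · obtain rfl : i = j := Finsupp.single_left_injective one_ne_zero (by simpa using hw)
      exact ⟨[], by simp [CoxeterSystem.IsReduced], rfl, rfl⟩
    obtain ⟨k, hk⟩ := cs.exists_rightDescent_of_ne_one hw₁
    obtain ⟨v, r, hr, rfl, hlen, hvi, hvk⟩ := exists_eq_mul_wordProd_alternatingWord i hk
    have hi : ¬ cs.IsRightDescent (v * cs.wordProd (alternatingWord i k r)) i := by
      rw [hρ.isRightDescent_iff_not_nonneg, hw, not_not]
      simp
    have hik : i ≠ k := by rintro rfl; exact hi hk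
    have hM := eq_zero_or_lt_of_length_mul_alternatingWord hr hlen hi
    rw [map_mul, Module.End.mul_apply] at hw
    obtain hm | ⟨a, b, ha, hb, hab⟩ := hρ.map_alternatingWord_cases hik hr hM
    · rw [hρ.map_alternatingWord_of_coxMat_eq hik hm] at hw
      obtain ⟨q, hq, rfl, hqf⟩ := ih _ (by omega) hw rfl
      refine ⟨q ++ alternatingWord i k r, ?_, (cs.wordProd_append _ _).symm, ?_⟩
      · rw [CoxeterSystem.IsReduced, cs.wordProd_append, hlen, hq.eq, List.length_append,
          length_alternatingWord]
      · rw [List.map_append, List.prod_append, prod_map_alternatingWord, AlgEquiv.mul_apply,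
          hT.altProd_uF hik hm, hqf]
    · rw [hab, map_add, map_smul, map_smul] at hw
      have hzero (l : I) : ρ v (Finsupp.single l 1) ≠ 0 := by
        rw [← map_zero (ρ v), (Representation.apply_bijective ρ v).injective.ne_iff]
        simp
      exact ((eq_zero_or_eq_zero_of_smul_add_smul_eq_single ha hb
        (hρ.nonneg_of_not_isRightDescent hvi) (hρ.nonneg_of_not_isRightDescent hvk) hw).elim
        (hzero i) (hzero k)).elim

theorem prod_map_uF (hT : IsBraidAction C T) (hρ : IsWeylAction cs ρ)
    (hw : ρ w (Finsupp.single i 1) = Finsupp.single j 1) {l : List I} (hl : cs.IsReduced l)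
    (hlw : cs.wordProd l = w) : (l.map T).prod (uF C i) = uF C j := by
  obtain ⟨l', hl', rfl, hF⟩ := hT.exists_isReduced_prod_map_uF hρ hw
  rw [hρ.prod_map_eq_prod_map (fun i k => hT.altProd_comm hρ) hl hl' hlw, hF]

end IsBraidAction

end SimpleRoots

/-- Let `A` be a symmetrizable GCM with Weyl group `W` (acting on the root lattice via
`ρ`), and suppose `w ∈ W`, `i ∈ I` with `w s_i > w` (i.e. `ℓ(w s_i) = ℓ(w) + 1`).
If `w α_i = α_j` for some `j ∈ I`, then for the braid group operators
(`T_w = T_{i_1} ⋯ T_{i_l}` for any reduced word `(i_1, …, i_l)` of `w`) one has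
`T_w((1 - q_i²) f_i) = (1 - q_j²) f_j` in `U_q^-(𝔤)`; in particular `T_w(f_i) = f_j`
when `(α_i, α_i) = (α_j, α_j)`. -/
theorem braid_operator_on_simple_root_vector
    (I : Type) [DecidableEq I] (C : CartanData I)
    (W : Type) [Group W] (cs : CoxeterSystem (coxMat C) W)
    (ρ : W →* Module.End ℤ (I →₀ ℤ))
    (hρ : ∀ (k : I) (α : I →₀ ℤ),
      ρ (cs.simple k) α = α - (α.sum fun j' m => C.a k j' * m) • Finsupp.single k (1 : ℤ))
    (T : I → Uq C ≃ₐ[KK] Uq C)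
    (hTt : ∀ k j : I, T k (uT C j) = uT C j * tpow C k (-(C.a k j)))
    (hTei : ∀ k : I, T k (uE C k) = -(uTinv C k * uF C k))
    (hTfi : ∀ k : I, T k (uF C k) = -(uE C k * uT C k))
    (hTe : ∀ k j : I, j ≠ k → T k (uE C j) =
      ∑ r ∈ Finset.range ((-C.a k j).toNat + 1),
        ((-1 : KK) ^ r * qpow (-(C.d k * (r : ℤ)))) •
          (uEdp C k r * uE C j * uEdp C k ((-C.a k j).toNat - r)))
    (hTf : ∀ k j : I, j ≠ k → T k (uF C j) =
      ∑ r ∈ Finset.range ((-C.a k j).toNat + 1),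
        ((-1 : KK) ^ r * qpow (C.d k * (r : ℤ))) •
          (uFdp C k ((-C.a k j).toNat - r) * uF C j * uFdp C k r))
    (w : W) (i j : I)
    (hlen : cs.length (w * cs.simple i) = cs.length w + 1)
    (hroot : ρ w (Finsupp.single i (1 : ℤ)) = Finsupp.single j (1 : ℤ)) :
    ∀ l : List I, cs.wordProd l = w → cs.IsReduced l →
      (((l.map T).prod : Uq C ≃ₐ[KK] Uq C)
          ((1 - qpow (2 * C.d i)) • uF C i) = (1 - qpow (2 * C.d j)) • uF C j) ∧
      (C.d i = C.d j → ((l.map T).prod : Uq C ≃ₐ[KK] Uq C) (uF C i) = uF C j) := by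
  intro l hlw hl
  have hB : IsBraidAction C T := ⟨hTt, hTei, hTfi, hTe, hTf⟩
  have hW : IsWeylAction cs ρ := hρ
  have hd : C.d i = C.d j := hW.d_eq_of_map_single hroot
  have hF : (l.map T).prod (uF C i) = uF C j := hB.prod_map_uF hW hroot hl hlw
  exact ⟨by rw [map_smul, hF, hd], fun _ => hF⟩

end
end

section
/- In the quiver Hecke algebra R(β + α_j) with n = ht β, define intertwiners φ_k = τ_k e(ν) for ν_k ≠ ν_{k+1} and φ_k = ((x_{k+1}-x_k)τ_k - 1)e(ν) for ν_k = ν_{k+1} (summed over ν). Then the intertwiners satisfy φ_k x_l = x_{s_k(l)} φ_k for all l, the braid relation φ_k φ_{k+1} φ_k = φ_{k+1} φ_k φ_{k+1}, and φ_{k+1} φ_k τ_{k+1} = τ_k φ_{k+1} φ_k. -/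
noncomputable section

/-- The data of the polynomials `Q_{i,j}(u,v) = Σ_{p,q} c_{i,j,p,q} u^p v^q` defining a
quiver Hecke algebra: symmetric (`Q_{i,j}(u,v) = Q_{j,i}(v,u)`) with `Q_{i,i} = 0`. -/
structure QCoeff (I k : Type) [CommRing k] : Type where
  c : I → I → ℕ → ℕ → k
  bound : ℕ
  symm : ∀ i j p q, c i j p q = c j i q p
  diag : ∀ i p q, c i i p q = 0
  vanish : ∀ i j p q, bound ≤ p ∨ bound ≤ q → c i j p q = 0

variable {I : Type} [Fintype I] [DecidableEq I]

/-- `ν ∈ I^β`: the sequence `ν : Fin n → I` has content `β ∈ Q_+`. -/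
def ContentEq (n : ℕ) (β : I →₀ ℕ) (ν : Fin n → I) : Prop :=
  ∀ i : I, (Finset.univ.filter fun t => ν t = i).card = β i

instance (n : ℕ) (β : I →₀ ℕ) : DecidablePred (ContentEq n β) := fun _ =>
  inferInstanceAs (Decidable (∀ _, _))

/-- The index set `I^β` of sequences of content `β`. -/
abbrev KSeq (I : Type) [Fintype I] [DecidableEq I] (n : ℕ) (β : I →₀ ℕ) : Type :=
  {ν : Fin n → I // ContentEq n β ν}

/-- The index set of crossings: `τ_c` crosses strands `c+1` and `c+2` (0-based `c`). -/
abbrev KCr (n : ℕ) : Type := {m : ℕ // m + 1 < n}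

/-- The first strand of the crossing `c`. -/
def crA {n : ℕ} (c : KCr n) : Fin n := ⟨c.1, Nat.lt_of_succ_lt c.2⟩

/-- The second strand of the crossing `c`. -/
def crB {n : ℕ} (c : KCr n) : Fin n := ⟨c.1 + 1, c.2⟩

/-- The generators of the quiver Hecke algebra `R(β)`: idempotents `e(ν)`, polynomial
generators `x_t` and crossings `τ_c`. -/
inductive KGen (I : Type) (n : ℕ) (P : (Fin n → I) → Prop) : Type
  | e : {ν : Fin n → I // P ν} → KGen I n P
  | x : Fin n → KGen I n P
  | t : {m : ℕ // m + 1 < n} → KGen I n P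

/-- The free algebra on the generators of `R(β)`. -/
abbrev KFA (k : Type) [CommRing k] (I : Type) [Fintype I] [DecidableEq I]
    (n : ℕ) (β : I →₀ ℕ) : Type :=
  FreeAlgebra k (KGen I n (ContentEq n β))

variable {k : Type} [Field k]

def gE {n : ℕ} {β : I →₀ ℕ} (ν : KSeq I n β) : KFA k I n β :=
  FreeAlgebra.ι k (KGen.e ν)
def gX {n : ℕ} {β : I →₀ ℕ} (t : Fin n) : KFA k I n β :=
  FreeAlgebra.ι k (KGen.x t)
def gTa {n : ℕ} {β : I →₀ ℕ} (c : KCr n) : KFA k I n β :=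
  FreeAlgebra.ι k (KGen.t c)

/-- The evaluation `Q_{i,j}(a, b)` in the free algebra. -/
def Qeval {n : ℕ} {β : I →₀ ℕ} (Q : QCoeff I k) (i j : I) (a b : KFA k I n β) :
    KFA k I n β :=
  ∑ p ∈ Finset.range Q.bound, ∑ q ∈ Finset.range Q.bound, Q.c i j p q • (a ^ p * b ^ q)

/-- The evaluation `Q̄_{i,i',i''}(a, b, cc) = (Q_{i,i'}(a,b) - Q_{i,i'}(cc,b))/(a - cc)`
(when `i = i'' ≠ i'`, and `0` otherwise) in the free algebra. -/
def barQeval {n : ℕ} {β : I →₀ ℕ} (Q : QCoeff I k) (i i' i'' : I)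
    (a b cc : KFA k I n β) : KFA k I n β :=
  if i = i'' ∧ i ≠ i' then
    ∑ p ∈ Finset.range Q.bound, ∑ q ∈ Finset.range Q.bound,
      Q.c i i' p q • ∑ s ∈ Finset.range p, a ^ s * b ^ q * cc ^ (p - 1 - s)
  else 0

/-- The defining relations of the quiver Hecke algebra `R(β)`. -/
inductive KRel (k : Type) [Field k] (I : Type) [Fintype I] [DecidableEq I]
    (n : ℕ) (β : I →₀ ℕ) (Q : QCoeff I k) : KFA k I n β → KFA k I n β → Prop
  | e_orth (ν ν' : KSeq I n β) :
      KRel k I n β Q (gE ν * gE ν') (if ν = ν' then gE ν else 0)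
  | e_sum : KRel k I n β Q (∑ ν : KSeq I n β, gE ν) 1
  | x_e (t : Fin n) (ν : KSeq I n β) : KRel k I n β Q (gX t * gE ν) (gE ν * gX t)
  | x_x (t s : Fin n) : KRel k I n β Q (gX t * gX s) (gX s * gX t)
  | tau_e (c : KCr n) (ν ν' : KSeq I n β)
      (h : ν'.1 = ν.1 ∘ Equiv.swap (crA c) (crB c)) :
      KRel k I n β Q (gTa c * gE ν) (gE ν' * gTa c)
  | tau_tau_far (c c' : KCr n) (h : c.1 + 2 ≤ c'.1) :
      KRel k I n β Q (gTa c * gTa c') (gTa c' * gTa c)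
  | tau_x_far (c : KCr n) (t : Fin n) (h1 : t ≠ crA c) (h2 : t ≠ crB c) :
      KRel k I n β Q (gTa c * gX t) (gX t * gTa c)
  | tau_x₁ (c : KCr n) (ν : KSeq I n β) :
      KRel k I n β Q ((gTa c * gX (crB c) - gX (crA c) * gTa c) * gE ν)
        (if ν.1 (crA c) = ν.1 (crB c) then gE ν else 0)
  | tau_x₂ (c : KCr n) (ν : KSeq I n β) :
      KRel k I n β Q ((gX (crB c) * gTa c - gTa c * gX (crA c)) * gE ν)
        (if ν.1 (crA c) = ν.1 (crB c) then gE ν else 0)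
  | quad (c : KCr n) (ν : KSeq I n β) :
      KRel k I n β Q (gTa c * gTa c * gE ν)
        (Qeval Q (ν.1 (crA c)) (ν.1 (crB c)) (gX (crA c)) (gX (crB c)) * gE ν)
  | braid (c c' : KCr n) (h : c'.1 = c.1 + 1) (ν : KSeq I n β) :
      KRel k I n β Q
        ((gTa c' * gTa c * gTa c' - gTa c * gTa c' * gTa c) * gE ν)
        (barQeval Q (ν.1 (crA c)) (ν.1 (crB c)) (ν.1 (crB c'))
            (gX (crA c)) (gX (crB c)) (gX (crB c')) * gE ν)

/-- The quiver Hecke algebra `R(β)`, presented by generators and relations. -/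
abbrev KR (k : Type) [Field k] (I : Type) [Fintype I] [DecidableEq I]
    (n : ℕ) (β : I →₀ ℕ) (Q : QCoeff I k) : Type :=
  RingQuot (KRel k I n β Q)

def kMk (k : Type) [Field k] (I : Type) [Fintype I] [DecidableEq I]
    (n : ℕ) (β : I →₀ ℕ) (Q : QCoeff I k) : KFA k I n β →ₐ[k] KR k I n β Q :=
  RingQuot.mkAlgHom k (KRel k I n β Q)

def eR {n : ℕ} {β : I →₀ ℕ} (Q : QCoeff I k) (ν : KSeq I n β) : KR k I n β Q :=
  kMk k I n β Q (gE ν)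
def xR {n : ℕ} {β : I →₀ ℕ} (Q : QCoeff I k) (t : Fin n) : KR k I n β Q :=
  kMk k I n β Q (gX t)
def tauR {n : ℕ} {β : I →₀ ℕ} (Q : QCoeff I k) (c : KCr n) : KR k I n β Q :=
  kMk k I n β Q (gTa c)


/-- The intertwiner `φ_c = Σ_ν φ_c e(ν)`, equal to `τ_c e(ν)` on components with
`ν_c ≠ ν_{c+1}` and to `((x_{c+1} - x_c)τ_c - 1) e(ν)` on components with
`ν_c = ν_{c+1}`. -/
def phiInt {m : ℕ} {γ : I →₀ ℕ} (Q : QCoeff I k) (c : KCr m) : KR k I m γ Q :=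
  ∑ ν : KSeq I m γ,
    if ν.1 (crA c) = ν.1 (crB c) then
      ((xR Q (crB c) - xR Q (crA c)) * tauR Q c - 1) * eR Q ν
    else tauR Q c * eR Q ν

/-!
All identities are tested on elements of the right ideals `e(ν) R`, where the colours of the strands
are fixed. On equal colours `τ_k` acts as a divided difference, and this gives
`φ_k x_l = x_{s_k(l)} φ_k`.

To prove `φ_{k+1} φ_k τ_{k+1} = τ_k φ_{k+1} φ_k`, write the intertwiners in terms of the `τ`'s and
move all polynomials to the left. Unless the colours are `(i, j, i)` with `i ≠ j`, this reduces to
the braid relation for the `τ`'s without error term (and to `τ_k² = 0` on equal colours). For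
`(i, j, i)` both `τ`-words of length three acquire the factor `x_{k+2} - x_k`, which turns the error
term `Q̄` of the braid relation into a difference of two values of `Q`, and the quadratic relation
absorbs these.

The braid relation for the `φ`'s follows, because `φ_{k+1} φ_k` carries the colours of strands
`k+1, k+2` to strands `k, k+1`: the same formula in terms of `τ` computes the rightmost `φ_{k+1}` in
`φ_{k+1} φ_k φ_{k+1}` and the leftmost `φ_k` in `φ_k φ_{k+1} φ_k`.
-/

namespace QCoeff

variable {ι R : Type} {A : Type*} [CommRing R] [Semiring A] [Algebra R A] (Q : QCoeff ι R)

/-- The value `Q_{i,j}(a, b)` at two elements of an arbitrary algebra, powers of `a` being written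
to the left of powers of `b`. -/
def eval (i j : ι) (a b : A) : A :=
  ∑ p ∈ Finset.range Q.bound, ∑ q ∈ Finset.range Q.bound, Q.c i j p q • (a ^ p * b ^ q)

/-- The divided difference `(Q_{i,j}(a, b) - Q_{i,j}(d, b)) / (a - d)` at three elements of an
arbitrary algebra, expanded so that no division occurs. -/
def dividedDiff (i j : ι) (a b d : A) : A :=
  ∑ p ∈ Finset.range Q.bound, ∑ q ∈ Finset.range Q.bound,
    Q.c i j p q • ∑ s ∈ Finset.range p, a ^ s * b ^ q * d ^ (p - 1 - s)

theorem eval_self (i : ι) (a b : A) : Q.eval i i a b = 0 := by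
  simp [eval, Q.diag]

theorem eval_swap (i j : ι) {a b : A} (h : Commute a b) : Q.eval i j a b = Q.eval j i b a := by
  rw [eval, eval, Finset.sum_comm]
  refine Finset.sum_congr rfl fun q _ => Finset.sum_congr rfl fun p _ => ?_
  rw [Q.symm, (h.pow_pow p q).eq]

theorem sub_mul_dividedDiff {B : Type*} [Ring B] [Algebra R B] (i j : ι) {a b d : B}
    (had : Commute a d) (hbd : Commute b d) :
    (d - a) * Q.dividedDiff i j a b d = Q.eval i j d b - Q.eval i j a b := by
  have monomial (p q : ℕ) :
      (d - a) * ∑ s ∈ Finset.range p, a ^ s * b ^ q * d ^ (p - 1 - s) =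
        d ^ p * b ^ q - a ^ p * b ^ q := by
    rw [← sub_mul, ← had.mul_neg_geom_sum₂, mul_assoc, Finset.sum_mul]
    congr 1
    refine Finset.sum_congr rfl fun s _ => ?_
    rw [mul_assoc, mul_assoc, (hbd.pow_pow q _).eq]
  simp only [eval, dividedDiff, Finset.mul_sum (Finset.range Q.bound), mul_smul_comm, monomial,
    smul_sub, Finset.sum_sub_distrib]

end QCoeff

section Strands

variable {m : ℕ}

theorem crA_ne_crB (c : KCr m) : crA c ≠ crB c := by
  simp [crA, crB]

variable {c c' : KCr m}

theorem crA_eq_crB_of_succ (hcc : c'.1 = c.1 + 1) : crA c' = crB c := by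
  simp [crA, crB, hcc]

theorem crB_ne_crA_of_succ (hcc : c'.1 = c.1 + 1) : crB c' ≠ crA c := by
  simp only [crA, crB, ne_eq, Fin.mk.injEq]
  lia

theorem crB_ne_crB_of_succ (hcc : c'.1 = c.1 + 1) : crB c' ≠ crB c := by
  simp [crB, hcc]

theorem swap_apply_crB_of_succ (hcc : c'.1 = c.1 + 1) :
    Equiv.swap (crA c) (crB c) (crB c') = crB c' :=
  Equiv.swap_apply_of_ne_of_ne (crB_ne_crA_of_succ hcc) (crB_ne_crB_of_succ hcc)

theorem swap_succ_apply_crA (hcc : c'.1 = c.1 + 1) :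
    Equiv.swap (crB c) (crB c') (crA c) = crA c :=
  Equiv.swap_apply_of_ne_of_ne (crA_ne_crB c) (crB_ne_crA_of_succ hcc).symm

end Strands

namespace KSeq

variable {m : ℕ} {γ : I →₀ ℕ}

/-- The place permutation `s_c ν` of the sequence `ν` by the transposition of the two strands of
the crossing `c`. -/
def swap (c : KCr m) (ν : KSeq I m γ) : KSeq I m γ :=
  ⟨ν.1 ∘ Equiv.swap (crA c) (crB c), fun i => by
    rw [← ν.2 i]
    exact Finset.card_equiv (Equiv.swap (crA c) (crB c)) (by simp)⟩

theorem swap_apply (c : KCr m) (ν : KSeq I m γ) (t : Fin m) :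
    (ν.swap c).1 t = ν.1 (Equiv.swap (crA c) (crB c) t) :=
  rfl

theorem swap_eq_self {c : KCr m} {ν : KSeq I m γ} (h : ν.1 (crA c) = ν.1 (crB c)) :
    ν.swap c = ν := by
  refine Subtype.ext (funext fun t => ?_)
  rw [swap_apply, Equiv.swap_apply_def]
  split_ifs with hA hB
  · rw [hA, h]
  · rw [hB, h]
  · rfl

theorem swap_crA (c : KCr m) (ν : KSeq I m γ) : (ν.swap c).1 (crA c) = ν.1 (crB c) := by
  rw [swap_apply, Equiv.swap_apply_left]

theorem swap_crB (c : KCr m) (ν : KSeq I m γ) : (ν.swap c).1 (crB c) = ν.1 (crA c) := by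
  rw [swap_apply, Equiv.swap_apply_right]

variable {c c' : KCr m} {ν : KSeq I m γ}

theorem swap_crB_succ (hcc : c'.1 = c.1 + 1) : (ν.swap c).1 (crB c') = ν.1 (crB c') := by
  rw [swap_apply, swap_apply_crB_of_succ hcc]

theorem swap_succ_crA (hcc : c'.1 = c.1 + 1) : (ν.swap c').1 (crA c) = ν.1 (crA c) := by
  rw [swap_apply, crA_eq_crB_of_succ hcc, swap_succ_apply_crA hcc]

theorem swap_succ_crB (hcc : c'.1 = c.1 + 1) : (ν.swap c').1 (crB c) = ν.1 (crB c') := by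
  rw [← crA_eq_crB_of_succ hcc, swap_crA]

theorem swap_succ_crB_succ (hcc : c'.1 = c.1 + 1) : (ν.swap c').1 (crB c') = ν.1 (crB c) := by
  rw [swap_crB, crA_eq_crB_of_succ hcc]

end KSeq

section Relations

variable {m : ℕ} {γ : I →₀ ℕ} {Q : QCoeff I k}

theorem kMk_eq_of_rel {a b : KFA k I m γ} (h : KRel k I m γ Q a b) :
    kMk k I m γ Q a = kMk k I m γ Q b :=
  RingQuot.mkAlgHom_rel k h

theorem eR_mul_eR (ν μ : KSeq I m γ) : eR Q ν * eR Q μ = if ν = μ then eR Q ν else 0 := by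
  simpa only [eR, map_mul, apply_ite (kMk k I m γ Q), map_zero] using
    kMk_eq_of_rel (KRel.e_orth (Q := Q) ν μ)

theorem sum_eR : ∑ ν : KSeq I m γ, eR Q ν = 1 := by
  simpa only [eR, map_sum, map_one] using kMk_eq_of_rel (KRel.e_sum (Q := Q))

theorem eq_of_forall_mul_eR_eq {u v : KR k I m γ Q}
    (h : ∀ ν : KSeq I m γ, u * eR Q ν = v * eR Q ν) : u = v := by
  rw [← mul_one u, ← mul_one v, ← sum_eR, Finset.mul_sum, Finset.mul_sum]
  exact Finset.sum_congr rfl fun ν _ => h ν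

theorem xR_mul_eR (t : Fin m) (ν : KSeq I m γ) : xR Q t * eR Q ν = eR Q ν * xR Q t := by
  simpa only [xR, eR, map_mul] using kMk_eq_of_rel (KRel.x_e t ν)

theorem commute_xR (s t : Fin m) : Commute (xR Q s : KR k I m γ Q) (xR Q t) := by
  simpa only [xR, map_mul, commute_iff_eq] using kMk_eq_of_rel (KRel.x_x (Q := Q) s t)

theorem tauR_mul_eR (c : KCr m) (ν : KSeq I m γ) :
    tauR Q c * eR Q ν = eR Q (ν.swap c) * tauR Q c := by
  simpa only [tauR, eR, map_mul] using kMk_eq_of_rel (KRel.tau_e c ν (ν.swap c) rfl)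

theorem tauR_mul_xR_of_ne_of_ne (c : KCr m) (t : Fin m) (hA : t ≠ crA c) (hB : t ≠ crB c) :
    (tauR Q c : KR k I m γ Q) * xR Q t = xR Q t * tauR Q c := by
  simpa only [tauR, xR, map_mul] using kMk_eq_of_rel (KRel.tau_x_far c t hA hB)

end Relations

/-- The right ideal `e(ν) R`, as a subspace. The relations of `R` involving a colour condition on
`ν` become unconditional identities after right multiplication by its elements. -/
def weightSpace {m : ℕ} {γ : I →₀ ℕ} (Q : QCoeff I k) (ν : KSeq I m γ) :
    Submodule k (KR k I m γ Q) :=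
  LinearMap.eqLocus (LinearMap.mulLeft k (eR Q ν)) LinearMap.id

section WeightSpace

variable {m : ℕ} {γ : I →₀ ℕ} {Q : QCoeff I k} {ν : KSeq I m γ} {w : KR k I m γ Q}

theorem mem_weightSpace : w ∈ weightSpace Q ν ↔ eR Q ν * w = w :=
  Iff.rfl

theorem eR_mem_weightSpace (ν : KSeq I m γ) : eR Q ν ∈ weightSpace Q ν := by
  rw [mem_weightSpace, eR_mul_eR, if_pos rfl]

theorem mul_eq_mul_of_mem_weightSpace (hw : w ∈ weightSpace Q ν) {u v : KR k I m γ Q}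
    (h : u * eR Q ν = v * eR Q ν) : u * w = v * w := by
  rw [← mem_weightSpace.mp hw, ← mul_assoc, h, mul_assoc]

theorem xR_mul_mem_weightSpace (hw : w ∈ weightSpace Q ν) (t : Fin m) :
    xR Q t * w ∈ weightSpace Q ν := by
  rw [mem_weightSpace, ← mul_assoc, ← xR_mul_eR, mul_assoc, mem_weightSpace.mp hw]

theorem xR_sub_mul_mem_weightSpace (hw : w ∈ weightSpace Q ν) (s t : Fin m) :
    (xR Q s - xR Q t) * w ∈ weightSpace Q ν := by
  rw [sub_mul]
  exact sub_mem (xR_mul_mem_weightSpace hw s) (xR_mul_mem_weightSpace hw t)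

theorem tauR_mul_mem_weightSpace (hw : w ∈ weightSpace Q ν) (c : KCr m) :
    tauR Q c * w ∈ weightSpace Q (ν.swap c) := by
  rw [mem_weightSpace, ← mul_assoc, ← tauR_mul_eR, mul_assoc, mem_weightSpace.mp hw]

theorem tauR_mul_mem_weightSpace_of_eq (hw : w ∈ weightSpace Q ν) {c : KCr m}
    (hc : ν.1 (crA c) = ν.1 (crB c)) : tauR Q c * w ∈ weightSpace Q ν := by
  simpa only [KSeq.swap_eq_self hc] using tauR_mul_mem_weightSpace hw c

theorem tauR_mul_xR_crB_mul (hw : w ∈ weightSpace Q ν) (c : KCr m) :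
    tauR Q c * (xR Q (crB c) * w) =
      xR Q (crA c) * (tauR Q c * w) + if ν.1 (crA c) = ν.1 (crB c) then w else 0 := by
  have rel : (tauR Q c * xR Q (crB c) - xR Q (crA c) * tauR Q c) * eR Q ν =
      (if ν.1 (crA c) = ν.1 (crB c) then 1 else 0) * eR Q ν := by
    simpa only [tauR, xR, eR, map_mul, map_sub, apply_ite (kMk k I m γ Q), map_zero, ite_mul,
      one_mul, zero_mul] using kMk_eq_of_rel (KRel.tau_x₁ (Q := Q) c ν)
  have := mul_eq_mul_of_mem_weightSpace hw rel
  simpa only [sub_mul, mul_assoc, ite_mul, one_mul, zero_mul, sub_eq_iff_eq_add'] using this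

theorem tauR_mul_xR_crA_mul (hw : w ∈ weightSpace Q ν) (c : KCr m) :
    tauR Q c * (xR Q (crA c) * w) =
      xR Q (crB c) * (tauR Q c * w) - if ν.1 (crA c) = ν.1 (crB c) then w else 0 := by
  have rel : (xR Q (crB c) * tauR Q c - tauR Q c * xR Q (crA c)) * eR Q ν =
      (if ν.1 (crA c) = ν.1 (crB c) then 1 else 0) * eR Q ν := by
    simpa only [tauR, xR, eR, map_mul, map_sub, apply_ite (kMk k I m γ Q), map_zero, ite_mul,
      one_mul, zero_mul] using kMk_eq_of_rel (KRel.tau_x₂ (Q := Q) c ν)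
  have := mul_eq_mul_of_mem_weightSpace hw rel
  simp only [sub_mul, mul_assoc, ite_mul, one_mul, zero_mul] at this
  rw [← this, sub_sub_cancel]

theorem tauR_mul_xR_mul_of_ne (hw : w ∈ weightSpace Q ν) {c : KCr m}
    (hc : ν.1 (crA c) ≠ ν.1 (crB c)) (t : Fin m) :
    tauR Q c * (xR Q t * w) = xR Q (Equiv.swap (crA c) (crB c) t) * (tauR Q c * w) := by
  obtain rfl | hA := eq_or_ne t (crA c)
  · rw [tauR_mul_xR_crA_mul hw, if_neg hc, sub_zero, Equiv.swap_apply_left]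
  obtain rfl | hB := eq_or_ne t (crB c)
  · rw [tauR_mul_xR_crB_mul hw, if_neg hc, add_zero, Equiv.swap_apply_right]
  · rw [← mul_assoc, tauR_mul_xR_of_ne_of_ne c t hA hB, mul_assoc,
      Equiv.swap_apply_of_ne_of_ne hA hB]

/-- On equal colours `τ_c` acts on polynomials as a divided difference, here cleared of its
denominator `x_{c+1} - x_c`. -/
theorem sub_mul_tauR_mul_xR_mul_of_eq (hw : w ∈ weightSpace Q ν) {c : KCr m}
    (hc : ν.1 (crA c) = ν.1 (crB c)) (t : Fin m) :
    (xR Q (crB c) - xR Q (crA c)) * (tauR Q c * (xR Q t * w)) =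
      (xR Q (crB c) - xR Q (crA c)) * (xR Q (Equiv.swap (crA c) (crB c) t) * (tauR Q c * w)) +
        (xR Q t - xR Q (Equiv.swap (crA c) (crB c) t)) * w := by
  obtain rfl | hA := eq_or_ne t (crA c)
  · rw [tauR_mul_xR_crA_mul hw, if_pos hc, Equiv.swap_apply_left]
    simp only [mul_sub, sub_mul]
    abel
  obtain rfl | hB := eq_or_ne t (crB c)
  · rw [tauR_mul_xR_crB_mul hw, if_pos hc, Equiv.swap_apply_right, mul_add]
  · rw [← mul_assoc (tauR Q c), tauR_mul_xR_of_ne_of_ne c t hA hB, mul_assoc,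
      Equiv.swap_apply_of_ne_of_ne hA hB, sub_self, zero_mul, add_zero]

theorem tauR_mul_tauR_mul (hw : w ∈ weightSpace Q ν) (c : KCr m) :
    tauR Q c * (tauR Q c * w) =
      Q.eval (ν.1 (crA c)) (ν.1 (crB c)) (xR Q (crA c)) (xR Q (crB c)) * w := by
  have rel : tauR Q c * tauR Q c * eR Q ν =
      Q.eval (ν.1 (crA c)) (ν.1 (crB c)) (xR Q (crA c)) (xR Q (crB c)) * eR Q ν := by
    simpa only [tauR, xR, eR, Qeval, QCoeff.eval, map_mul, map_sum, map_smul, map_pow] using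
      kMk_eq_of_rel (KRel.quad c ν)
  rw [← mul_assoc, mul_eq_mul_of_mem_weightSpace hw rel]

theorem tauR_mul_tauR_mul_of_eq (hw : w ∈ weightSpace Q ν) {c : KCr m}
    (hc : ν.1 (crA c) = ν.1 (crB c)) : tauR Q c * (tauR Q c * w) = 0 := by
  rw [tauR_mul_tauR_mul hw, hc, QCoeff.eval_self, zero_mul]

variable {c c' : KCr m}

theorem tauR_braid_mul (hw : w ∈ weightSpace Q ν) (hcc : c'.1 = c.1 + 1)
    (hne : ¬(ν.1 (crA c) = ν.1 (crB c') ∧ ν.1 (crA c) ≠ ν.1 (crB c))) :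
    tauR Q c' * (tauR Q c * (tauR Q c' * w)) = tauR Q c * (tauR Q c' * (tauR Q c * w)) := by
  have rel : tauR Q c' * tauR Q c * tauR Q c' * eR Q ν =
      tauR Q c * tauR Q c' * tauR Q c * eR Q ν := by
    simpa only [tauR, eR, barQeval, if_neg hne, map_mul, map_sub, map_zero, zero_mul, sub_mul,
      sub_eq_zero] using kMk_eq_of_rel (KRel.braid (Q := Q) c c' hcc ν)
  simpa only [mul_assoc] using mul_eq_mul_of_mem_weightSpace hw rel

theorem tauR_braid_mul_of_ne_of_eq (hw : w ∈ weightSpace Q ν) (hcc : c'.1 = c.1 + 1)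
    (hAB : ν.1 (crA c) ≠ ν.1 (crB c)) (hAB' : ν.1 (crA c) = ν.1 (crB c')) :
    (xR Q (crB c') - xR Q (crA c)) * (tauR Q c' * (tauR Q c * (tauR Q c' * w))) -
        tauR Q c' * (tauR Q c' * w) =
      (xR Q (crB c') - xR Q (crA c)) * (tauR Q c * (tauR Q c' * (tauR Q c * w))) -
        tauR Q c * (tauR Q c * w) := by
  have rel : (tauR Q c' * tauR Q c * tauR Q c' - tauR Q c * tauR Q c' * tauR Q c) * eR Q ν =
      Q.dividedDiff (ν.1 (crA c)) (ν.1 (crB c)) (xR Q (crA c)) (xR Q (crB c)) (xR Q (crB c')) *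
        eR Q ν := by
    simpa only [tauR, xR, eR, barQeval, if_pos (And.intro hAB' hAB), QCoeff.dividedDiff, map_mul,
      map_sub, map_sum, map_smul, map_pow] using kMk_eq_of_rel (KRel.braid c c' hcc ν)
  have braid := mul_eq_mul_of_mem_weightSpace hw rel
  simp only [sub_mul, mul_assoc] at braid
  rw [sub_eq_sub_iff_sub_eq_sub, ← mul_sub, braid, ← mul_assoc,
    Q.sub_mul_dividedDiff _ _ (commute_xR _ _) (commute_xR _ _), sub_mul, tauR_mul_tauR_mul hw,
    tauR_mul_tauR_mul hw, crA_eq_crB_of_succ hcc, Q.eval_swap _ _ (commute_xR (crB c) (crB c')),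
    ← hAB']

end WeightSpace

section Intertwiner

variable {m : ℕ} {γ : I →₀ ℕ} {Q : QCoeff I k} {ν : KSeq I m γ} {w : KR k I m γ Q}
  {c : KCr m}

theorem phiInt_mul_eR (c : KCr m) (ν : KSeq I m γ) :
    phiInt Q c * eR Q ν =
      (if ν.1 (crA c) = ν.1 (crB c) then (xR Q (crB c) - xR Q (crA c)) * tauR Q c - 1
        else tauR Q c) * eR Q ν := by
  simp only [phiInt, ← ite_mul, Finset.sum_mul, mul_assoc, eR_mul_eR, mul_ite, mul_zero,
    Finset.sum_ite_eq', Finset.mem_univ, if_true]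

theorem phiInt_mul_of_eq (hw : w ∈ weightSpace Q ν) (hc : ν.1 (crA c) = ν.1 (crB c)) :
    phiInt Q c * w = (xR Q (crB c) - xR Q (crA c)) * (tauR Q c * w) - w := by
  rw [mul_eq_mul_of_mem_weightSpace hw (phiInt_mul_eR c ν), if_pos hc, sub_mul, one_mul, mul_assoc]

theorem phiInt_mul_of_ne (hw : w ∈ weightSpace Q ν) (hc : ν.1 (crA c) ≠ ν.1 (crB c)) :
    phiInt Q c * w = tauR Q c * w := by
  rw [mul_eq_mul_of_mem_weightSpace hw (phiInt_mul_eR c ν), if_neg hc]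

theorem phiInt_mul_mem_weightSpace (hw : w ∈ weightSpace Q ν) (c : KCr m) :
    phiInt Q c * w ∈ weightSpace Q (ν.swap c) := by
  by_cases hc : ν.1 (crA c) = ν.1 (crB c)
  · rw [phiInt_mul_of_eq hw hc, KSeq.swap_eq_self hc]
    exact sub_mem (xR_sub_mul_mem_weightSpace (tauR_mul_mem_weightSpace_of_eq hw hc) _ _) hw
  · rw [phiInt_mul_of_ne hw hc]
    exact tauR_mul_mem_weightSpace hw c

theorem phiInt_mul_xR (c : KCr m) (t : Fin m) :
    (phiInt Q c : KR k I m γ Q) * xR Q t = xR Q (Equiv.swap (crA c) (crB c) t) * phiInt Q c := by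
  refine eq_of_forall_mul_eR_eq fun ν => ?_
  have hw : eR Q ν ∈ weightSpace Q ν := eR_mem_weightSpace ν
  rw [mul_assoc, mul_assoc]
  by_cases hc : ν.1 (crA c) = ν.1 (crB c)
  · have comm := (commute_xR (γ := γ) (Q := Q) (crB c) (Equiv.swap (crA c) (crB c) t)).sub_left
      (commute_xR (crA c) _)
    rw [phiInt_mul_of_eq (xR_mul_mem_weightSpace hw t) hc, phiInt_mul_of_eq hw hc,
      sub_mul_tauR_mul_xR_mul_of_eq hw hc, mul_sub, comm.left_comm]
    simp only [mul_sub, sub_mul]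
    abel
  · rw [phiInt_mul_of_ne (xR_mul_mem_weightSpace hw t) hc, phiInt_mul_of_ne hw hc,
      tauR_mul_xR_mul_of_ne hw hc]

theorem phiInt_mul_xR_sub_mul (c : KCr m) (s t : Fin m) (w : KR k I m γ Q) :
    phiInt Q c * ((xR Q s - xR Q t) * w) =
      (xR Q (Equiv.swap (crA c) (crB c) s) - xR Q (Equiv.swap (crA c) (crB c) t)) *
        (phiInt Q c * w) := by
  rw [← mul_assoc, mul_sub, phiInt_mul_xR, phiInt_mul_xR, ← sub_mul, mul_assoc]

end Intertwiner

section ThreeStrands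

variable {m : ℕ} {γ : I →₀ ℕ} {Q : QCoeff I k} {ν : KSeq I m γ} {w : KR k I m γ Q}
  {c c' : KCr m}

theorem phiInt_succ_mul_of_eq (hw : w ∈ weightSpace Q ν) (hcc : c'.1 = c.1 + 1)
    (hc : ν.1 (crB c) = ν.1 (crB c')) :
    phiInt Q c' * w = (xR Q (crB c') - xR Q (crB c)) * (tauR Q c' * w) - w := by
  rw [← crA_eq_crB_of_succ hcc] at hc ⊢
  exact phiInt_mul_of_eq hw hc

theorem phiInt_succ_mul_of_ne (hw : w ∈ weightSpace Q ν) (hcc : c'.1 = c.1 + 1)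
    (hc : ν.1 (crB c) ≠ ν.1 (crB c')) : phiInt Q c' * w = tauR Q c' * w := by
  rw [← crA_eq_crB_of_succ hcc] at hc
  exact phiInt_mul_of_ne hw hc

theorem tauR_mul_sub_crA_mul (hw : w ∈ weightSpace Q ν) (hcc : c'.1 = c.1 + 1)
    (hc : ν.1 (crA c) = ν.1 (crB c)) :
    tauR Q c * ((xR Q (crB c') - xR Q (crA c)) * w) =
      (xR Q (crB c') - xR Q (crB c)) * (tauR Q c * w) + w := by
  rw [sub_mul, mul_sub, ← mul_assoc, tauR_mul_xR_of_ne_of_ne c _ (crB_ne_crA_of_succ hcc)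
    (crB_ne_crB_of_succ hcc), tauR_mul_xR_crA_mul hw, if_pos hc, sub_mul, mul_assoc]
  abel

theorem tauR_mul_sub_crB_mul (hw : w ∈ weightSpace Q ν) (hcc : c'.1 = c.1 + 1)
    (hc : ν.1 (crA c) = ν.1 (crB c)) :
    tauR Q c * ((xR Q (crB c') - xR Q (crB c)) * w) =
      (xR Q (crB c') - xR Q (crA c)) * (tauR Q c * w) - w := by
  rw [sub_mul, mul_sub, ← mul_assoc, tauR_mul_xR_of_ne_of_ne c _ (crB_ne_crA_of_succ hcc)
    (crB_ne_crB_of_succ hcc), tauR_mul_xR_crB_mul hw, if_pos hc, sub_mul, mul_assoc]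
  abel

theorem tauR_mul_sub_mul_sub_mul (hw : w ∈ weightSpace Q ν) (hcc : c'.1 = c.1 + 1)
    (hc : ν.1 (crA c) = ν.1 (crB c)) :
    tauR Q c * ((xR Q (crB c') - xR Q (crA c)) * ((xR Q (crB c') - xR Q (crB c)) * w)) =
      (xR Q (crB c') - xR Q (crA c)) * ((xR Q (crB c') - xR Q (crB c)) * (tauR Q c * w)) := by
  have comm : Commute (xR Q (crB c') - xR Q (crB c) : KR k I m γ Q)
      (xR Q (crB c') - xR Q (crA c)) :=
    ((commute_xR _ _).sub_left (commute_xR _ _)).sub_right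
      ((commute_xR _ _).sub_left (commute_xR _ _))
  rw [tauR_mul_sub_crA_mul (xR_sub_mul_mem_weightSpace hw _ _) hcc hc,
    tauR_mul_sub_crB_mul hw hcc hc, mul_sub, sub_add_cancel, comm.left_comm]

theorem phiInt_mul_sub_crA_mul (hcc : c'.1 = c.1 + 1) (w : KR k I m γ Q) :
    phiInt Q c * ((xR Q (crB c') - xR Q (crA c)) * w) =
      (xR Q (crB c') - xR Q (crB c)) * (phiInt Q c * w) := by
  rw [phiInt_mul_xR_sub_mul, swap_apply_crB_of_succ hcc, Equiv.swap_apply_left]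

theorem phiInt_mul_sub_crB_mul (hcc : c'.1 = c.1 + 1) (w : KR k I m γ Q) :
    phiInt Q c * ((xR Q (crB c') - xR Q (crB c)) * w) =
      (xR Q (crB c') - xR Q (crA c)) * (phiInt Q c * w) := by
  rw [phiInt_mul_xR_sub_mul, swap_apply_crB_of_succ hcc, Equiv.swap_apply_right]

theorem phiInt_succ_mul_crB_sub_mul (hcc : c'.1 = c.1 + 1) (w : KR k I m γ Q) :
    phiInt Q c' * ((xR Q (crB c) - xR Q (crA c)) * w) =
      (xR Q (crB c') - xR Q (crA c)) * (phiInt Q c' * w) := by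
  rw [phiInt_mul_xR_sub_mul, crA_eq_crB_of_succ hcc, swap_succ_apply_crA hcc,
    Equiv.swap_apply_left]

theorem phiInt_succ_mul_crB_succ_sub_mul (hcc : c'.1 = c.1 + 1) (w : KR k I m γ Q) :
    phiInt Q c' * ((xR Q (crB c') - xR Q (crA c)) * w) =
      (xR Q (crB c) - xR Q (crA c)) * (phiInt Q c' * w) := by
  rw [phiInt_mul_xR_sub_mul, crA_eq_crB_of_succ hcc, swap_succ_apply_crA hcc,
    Equiv.swap_apply_right]

theorem phiInt_phiInt_tauR_mul_of_eq_of_eq (hw : w ∈ weightSpace Q ν) (hcc : c'.1 = c.1 + 1)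
    (hAB : ν.1 (crA c) = ν.1 (crB c)) (hBB' : ν.1 (crB c) = ν.1 (crB c')) :
    phiInt Q c' * (phiInt Q c * (tauR Q c' * w)) =
      tauR Q c * (phiInt Q c' * (phiInt Q c * w)) := by
  have hA'B' : ν.1 (crA c') = ν.1 (crB c') := by rwa [crA_eq_crB_of_succ hcc]
  have h₁ := tauR_mul_mem_weightSpace_of_eq hw hAB
  have h₂ := tauR_mul_mem_weightSpace_of_eq hw hA'B'
  have h₁₂ := tauR_mul_mem_weightSpace_of_eq h₂ hAB
  have h₂₁ := tauR_mul_mem_weightSpace_of_eq h₁ hA'B'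
  have cancel : tauR Q c * ((xR Q (crB c') - xR Q (crA c)) * (tauR Q c * w)) = tauR Q c * w := by
    rw [tauR_mul_sub_crA_mul h₁ hcc hAB, tauR_mul_tauR_mul_of_eq hw hAB, mul_zero, zero_add]
  calc phiInt Q c' * (phiInt Q c * (tauR Q c' * w))
    _ = (xR Q (crB c') - xR Q (crA c)) * ((xR Q (crB c') - xR Q (crB c)) *
          (tauR Q c' * (tauR Q c * (tauR Q c' * w))) - tauR Q c * (tauR Q c' * w)) +
          tauR Q c' * w := by
      rw [phiInt_mul_of_eq h₂ hAB, mul_sub, phiInt_succ_mul_crB_sub_mul hcc,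
        phiInt_succ_mul_of_eq h₁₂ hcc hBB', phiInt_succ_mul_of_eq h₂ hcc hBB',
        tauR_mul_tauR_mul_of_eq hw hA'B', mul_zero, zero_sub, sub_neg_eq_add]
    _ = (xR Q (crB c') - xR Q (crA c)) * ((xR Q (crB c') - xR Q (crB c)) *
          (tauR Q c * (tauR Q c' * (tauR Q c * w)))) -
          ((xR Q (crB c') - xR Q (crA c)) * (tauR Q c * (tauR Q c' * w)) - tauR Q c' * w) := by
      rw [tauR_braid_mul hw hcc fun h => h.2 hAB, mul_sub (xR Q (crB c') - xR Q (crA c))]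
      abel
    _ = tauR Q c * ((xR Q (crB c') - xR Q (crA c)) * ((xR Q (crB c') - xR Q (crB c)) *
          (tauR Q c' * (tauR Q c * w)))) -
          tauR Q c * ((xR Q (crB c') - xR Q (crB c)) * (tauR Q c' * w)) := by
      rw [tauR_mul_sub_mul_sub_mul h₂₁ hcc hAB, tauR_mul_sub_crB_mul h₂ hcc hAB]
    _ = tauR Q c * (phiInt Q c' * (phiInt Q c * w)) := by
      rw [phiInt_mul_of_eq hw hAB, mul_sub (phiInt Q c'), phiInt_succ_mul_crB_sub_mul hcc,
        phiInt_succ_mul_of_eq h₁ hcc hBB', phiInt_succ_mul_of_eq hw hcc hBB']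
      simp only [mul_sub (tauR Q c), mul_sub (xR Q (crB c') - xR Q (crA c)), cancel]
      abel

theorem phiInt_phiInt_tauR_mul_of_eq_of_ne (hw : w ∈ weightSpace Q ν) (hcc : c'.1 = c.1 + 1)
    (hAB : ν.1 (crA c) = ν.1 (crB c)) (hBB' : ν.1 (crB c) ≠ ν.1 (crB c')) :
    phiInt Q c' * (phiInt Q c * (tauR Q c' * w)) =
      tauR Q c * (phiInt Q c' * (phiInt Q c * w)) := by
  have hAB' : ν.1 (crA c) ≠ ν.1 (crB c') := by rwa [hAB]
  have h₁ := tauR_mul_mem_weightSpace_of_eq hw hAB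
  have h₂ := tauR_mul_mem_weightSpace hw c'
  have h₁₂ := tauR_mul_mem_weightSpace h₂ c
  have h₂₁ := tauR_mul_mem_weightSpace h₁ c'
  have ne₂ : (ν.swap c').1 (crA c) ≠ (ν.swap c').1 (crB c) := by
    rwa [KSeq.swap_succ_crA hcc, KSeq.swap_succ_crB hcc]
  have eq₁₂ : ((ν.swap c').swap c).1 (crB c) = ((ν.swap c').swap c).1 (crB c') := by
    rwa [KSeq.swap_crB, KSeq.swap_crB_succ hcc, KSeq.swap_succ_crA hcc, KSeq.swap_succ_crB_succ hcc]
  have φφ_mem : phiInt Q c' * (phiInt Q c * w) ∈ weightSpace Q (ν.swap c') := by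
    simpa only [KSeq.swap_eq_self hAB] using
      phiInt_mul_mem_weightSpace (phiInt_mul_mem_weightSpace hw c) c'
  calc phiInt Q c' * (phiInt Q c * (tauR Q c' * w))
    _ = (xR Q (crB c') - xR Q (crB c)) * (tauR Q c' * (tauR Q c * (tauR Q c' * w))) -
          tauR Q c * (tauR Q c' * w) := by
      rw [phiInt_mul_of_ne h₂ ne₂, phiInt_succ_mul_of_eq h₁₂ hcc eq₁₂]
    _ = (xR Q (crB c') - xR Q (crB c)) * (tauR Q c * (tauR Q c' * (tauR Q c * w))) -
          tauR Q c * (tauR Q c' * w) := by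
      rw [tauR_braid_mul hw hcc fun h => h.2 hAB]
    _ = phiInt Q c * ((xR Q (crB c') - xR Q (crA c)) * (tauR Q c' * (tauR Q c * w)) -
          tauR Q c' * w) := by
      rw [mul_sub, phiInt_mul_sub_crA_mul hcc, phiInt_mul_of_ne h₂₁ ne₂, phiInt_mul_of_ne h₂ ne₂]
    _ = phiInt Q c * (phiInt Q c' * (phiInt Q c * w)) := by
      rw [phiInt_mul_of_eq hw hAB, mul_sub (phiInt Q c'), phiInt_succ_mul_crB_sub_mul hcc,
        phiInt_succ_mul_of_ne h₁ hcc hBB', phiInt_succ_mul_of_ne hw hcc hBB']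
    _ = tauR Q c * (phiInt Q c' * (phiInt Q c * w)) := phiInt_mul_of_ne φφ_mem ne₂

theorem phiInt_phiInt_tauR_mul_of_ne_of_eq (hw : w ∈ weightSpace Q ν) (hcc : c'.1 = c.1 + 1)
    (hAB : ν.1 (crA c) ≠ ν.1 (crB c)) (hAB' : ν.1 (crA c) = ν.1 (crB c')) :
    phiInt Q c' * (phiInt Q c * (tauR Q c' * w)) =
      tauR Q c * (phiInt Q c' * (phiInt Q c * w)) := by
  have h₁ := tauR_mul_mem_weightSpace hw c
  have h₂ := tauR_mul_mem_weightSpace hw c'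
  have eq₁ : (ν.swap c).1 (crB c) = (ν.swap c).1 (crB c') := by
    rwa [KSeq.swap_crB, KSeq.swap_crB_succ hcc]
  have ne₁ : (ν.swap c).1 (crA c) ≠ (ν.swap c).1 (crB c) := by
    rw [KSeq.swap_crA, KSeq.swap_crB]
    exact hAB.symm
  have eq₂ : (ν.swap c').1 (crA c) = (ν.swap c').1 (crB c) := by
    rwa [KSeq.swap_succ_crA hcc, KSeq.swap_succ_crB hcc]
  have ne₂ : (ν.swap c').1 (crB c) ≠ (ν.swap c').1 (crB c') := by
    rw [KSeq.swap_succ_crB hcc, KSeq.swap_succ_crB_succ hcc, ← hAB']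
    exact hAB
  have eq₁' : (ν.swap c).1 (crA c') = (ν.swap c).1 (crB c') := by rwa [crA_eq_crB_of_succ hcc]
  have h₁₂ := tauR_mul_mem_weightSpace_of_eq h₂ eq₂
  have h₂₁ := tauR_mul_mem_weightSpace_of_eq h₁ eq₁'
  have φφ_mem : phiInt Q c' * (tauR Q c * w) ∈ weightSpace Q (ν.swap c) := by
    simpa only [KSeq.swap_eq_self eq₁'] using phiInt_mul_mem_weightSpace h₁ c'
  calc phiInt Q c' * (phiInt Q c * (tauR Q c' * w))
    _ = (xR Q (crB c') - xR Q (crA c)) * (tauR Q c' * (tauR Q c * (tauR Q c' * w))) -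
          tauR Q c' * (tauR Q c' * w) := by
      rw [phiInt_mul_of_eq h₂ eq₂, mul_sub, phiInt_succ_mul_crB_sub_mul hcc,
        phiInt_succ_mul_of_ne h₁₂ hcc ne₂, phiInt_succ_mul_of_ne h₂ hcc ne₂]
    _ = (xR Q (crB c') - xR Q (crA c)) * (tauR Q c * (tauR Q c' * (tauR Q c * w))) -
          tauR Q c * (tauR Q c * w) := tauR_braid_mul_of_ne_of_eq hw hcc hAB hAB'
    _ = phiInt Q c * ((xR Q (crB c') - xR Q (crB c)) * (tauR Q c' * (tauR Q c * w)) -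
          tauR Q c * w) := by
      rw [mul_sub, phiInt_mul_sub_crB_mul hcc, phiInt_mul_of_ne h₂₁ ne₁, phiInt_mul_of_ne h₁ ne₁]
    _ = phiInt Q c * (phiInt Q c' * (phiInt Q c * w)) := by
      rw [phiInt_mul_of_ne hw hAB, phiInt_succ_mul_of_eq h₁ hcc eq₁]
    _ = tauR Q c * (phiInt Q c' * (phiInt Q c * w)) := by
      rw [phiInt_mul_of_ne hw hAB, phiInt_mul_of_ne φφ_mem ne₁]

theorem phiInt_phiInt_tauR_mul_of_ne_of_ne (hw : w ∈ weightSpace Q ν) (hcc : c'.1 = c.1 + 1)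
    (hAB : ν.1 (crA c) ≠ ν.1 (crB c)) (hAB' : ν.1 (crA c) ≠ ν.1 (crB c')) :
    phiInt Q c' * (phiInt Q c * (tauR Q c' * w)) =
      tauR Q c * (phiInt Q c' * (phiInt Q c * w)) := by
  have h₁ := tauR_mul_mem_weightSpace hw c
  have h₂ := tauR_mul_mem_weightSpace hw c'
  have h₁₂ := tauR_mul_mem_weightSpace h₂ c
  have ne₁ : (ν.swap c).1 (crB c) ≠ (ν.swap c).1 (crB c') := by
    rwa [KSeq.swap_crB, KSeq.swap_crB_succ hcc]
  have ne₂ : (ν.swap c').1 (crA c) ≠ (ν.swap c').1 (crB c) := by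
    rwa [KSeq.swap_succ_crA hcc, KSeq.swap_succ_crB hcc]
  have ne₁₂ : ((ν.swap c').swap c).1 (crB c) ≠ ((ν.swap c').swap c).1 (crB c') := by
    rwa [KSeq.swap_crB, KSeq.swap_crB_succ hcc, KSeq.swap_succ_crA hcc, KSeq.swap_succ_crB_succ hcc]
  rw [phiInt_mul_of_ne h₂ ne₂, phiInt_succ_mul_of_ne h₁₂ hcc ne₁₂, phiInt_mul_of_ne hw hAB,
    phiInt_succ_mul_of_ne h₁ hcc ne₁, tauR_braid_mul hw hcc fun h => hAB' h.1]

theorem phiInt_phiInt_tauR_mul (hw : w ∈ weightSpace Q ν) (hcc : c'.1 = c.1 + 1) :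
    phiInt Q c' * (phiInt Q c * (tauR Q c' * w)) =
      tauR Q c * (phiInt Q c' * (phiInt Q c * w)) := by
  by_cases hAB : ν.1 (crA c) = ν.1 (crB c)
  · by_cases hBB' : ν.1 (crB c) = ν.1 (crB c')
    · exact phiInt_phiInt_tauR_mul_of_eq_of_eq hw hcc hAB hBB'
    · exact phiInt_phiInt_tauR_mul_of_eq_of_ne hw hcc hAB hBB'
  · by_cases hAB' : ν.1 (crA c) = ν.1 (crB c')
    · exact phiInt_phiInt_tauR_mul_of_ne_of_eq hw hcc hAB hAB'
    · exact phiInt_phiInt_tauR_mul_of_ne_of_ne hw hcc hAB hAB'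

theorem phiInt_phiInt_tauR (hcc : c'.1 = c.1 + 1) :
    (phiInt Q c' * phiInt Q c * tauR Q c' : KR k I m γ Q) =
      tauR Q c * phiInt Q c' * phiInt Q c := by
  refine eq_of_forall_mul_eR_eq fun ν => ?_
  simpa only [mul_assoc] using phiInt_phiInt_tauR_mul (eR_mem_weightSpace ν) hcc

theorem phiInt_braid (hcc : c'.1 = c.1 + 1) :
    (phiInt Q c * phiInt Q c' * phiInt Q c : KR k I m γ Q) =
      phiInt Q c' * phiInt Q c * phiInt Q c' := by
  refine eq_of_forall_mul_eR_eq fun ν => ?_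
  have hw : eR Q ν ∈ weightSpace Q ν := eR_mem_weightSpace ν
  have φφ_mem := phiInt_mul_mem_weightSpace (phiInt_mul_mem_weightSpace hw c) c'
  have colourA : ((ν.swap c).swap c').1 (crA c) = ν.1 (crB c) := by
    rw [KSeq.swap_succ_crA hcc, KSeq.swap_crA]
  have colourB : ((ν.swap c).swap c').1 (crB c) = ν.1 (crB c') := by
    rw [KSeq.swap_succ_crB hcc, KSeq.swap_crB_succ hcc]
  simp only [mul_assoc]
  by_cases hBB' : ν.1 (crB c) = ν.1 (crB c')
  · rw [phiInt_mul_of_eq φφ_mem (by rwa [colourA, colourB]), ← phiInt_phiInt_tauR_mul hw hcc,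
      phiInt_succ_mul_of_eq hw hcc hBB', mul_sub, phiInt_mul_sub_crB_mul hcc, mul_sub,
      phiInt_succ_mul_crB_succ_sub_mul hcc]
  · rw [phiInt_mul_of_ne φφ_mem (by rwa [colourA, colourB]), phiInt_succ_mul_of_ne hw hcc hBB',
      phiInt_phiInt_tauR_mul hw hcc]

end ThreeStrands

/-- In the quiver Hecke algebra `R(β + α_j)` with `n = ht β`, the intertwiners
`φ_k = τ_k e(ν)` for `ν_k ≠ ν_{k+1}` and `φ_k = ((x_{k+1} - x_k)τ_k - 1) e(ν)` for
`ν_k = ν_{k+1}` (summed over `ν`) satisfy `φ_k x_l = x_{s_k(l)} φ_k` for all `l`, the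
braid relation `φ_k φ_{k+1} φ_k = φ_{k+1} φ_k φ_{k+1}`, and
`φ_{k+1} φ_k τ_{k+1} = τ_k φ_{k+1} φ_k`. -/
theorem quiverHecke_intertwiners
    (k I : Type) [Field k] [Fintype I] [DecidableEq I]
    (β : I →₀ ℕ) (j : I) (n : ℕ) (hn : (β.sum fun _ m => m) = n) (Q : QCoeff I k) :
    (∀ (c : KCr (n + 1)) (t : Fin (n + 1)),
      phiInt (γ := β + Finsupp.single j 1) Q c * xR Q t =
        xR Q (Equiv.swap (crA c) (crB c) t) * phiInt Q c) ∧
    (∀ c c' : KCr (n + 1), c'.1 = c.1 + 1 →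
      phiInt (γ := β + Finsupp.single j 1) Q c * phiInt Q c' * phiInt Q c =
        phiInt Q c' * phiInt Q c * phiInt Q c') ∧
    (∀ c c' : KCr (n + 1), c'.1 = c.1 + 1 →
      phiInt (γ := β + Finsupp.single j 1) Q c' * phiInt Q c * tauR Q c' =
        tauR Q c * phiInt Q c' * phiInt Q c) :=
  ⟨phiInt_mul_xR, fun _ _ => phiInt_braid, fun _ _ => phiInt_phiInt_tauR⟩

end
end
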